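/- arXiv:2302.05938 — 2 statements merged into one kernel-verified Lean document; each statement's English description precedes it below -/
import Mathlib

section
/- Under Assumptions (A2)(i) and (A3), let v be the classical solution to ∂_t v = (σ²/2)Δv − (σ²/4)|∇v|² + g − γv with v(0,·) = v₀. Then: (i) ∇²v(t,·) ≥ θ_t I_d, where θ solves the Riccati equation dθ_t/dt = κ̲ − γθ_t − σ²θ_t² with θ₀ = η̲; in particular v(t,·) is strictly convex uniformly in t ≥ 0; and (ii) the Hessian ∇²v(t,·) is bounded uniformly in t > 0. -/
open MeasureTheory Real Filter Set
open scoped RealInnerProductSpace Topology ENNReal NNReal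

noncomputable section

/-- Euclidean space `ℝ^d`. -/
abbrev Euc (d : ℕ) := EuclideanSpace ℝ (Fin d)
/-- `p : ℝ^d → ℝ` is a probability density. -/
def IsDensity {d : ℕ} (p : Euc d → ℝ) : Prop :=
  (∀ x, 0 ≤ p x) ∧ Integrable p ∧ (∫ x, p x) = 1

/-- The density has a finite second moment. -/
def HasSecondMoment {d : ℕ} (p : Euc d → ℝ) : Prop :=
  Integrable fun x => ‖x‖ ^ 2 * p x

/-- The square root `√p` of a density. -/
def sqrtFn {d : ℕ} (p : Euc d → ℝ) : Euc d → ℝ := fun x => Real.sqrt (p x)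

/-- Membership in `P_H`: a probability density with finite second moment whose
square root belongs to `H¹` (differentiable with square-integrable gradient). -/
def MemPH {d : ℕ} (p : Euc d → ℝ) : Prop :=
  IsDensity p ∧ HasSecondMoment p ∧ Differentiable ℝ (sqrtFn p) ∧
    Integrable fun x => ‖gradient (sqrtFn p) x‖ ^ 2

/-- Fisher information `I(p) = ∫ |∇√p|²`. -/
def FisherInfo {d : ℕ} (p : Euc d → ℝ) : ℝ :=
  ∫ x, ‖gradient (sqrtFn p) x‖ ^ 2

/-- Entropy `H(p) = ∫ p log p`. -/
def Entropy {d : ℕ} (p : Euc d → ℝ) : ℝ := ∫ x, p x * Real.log (p x)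

/-- The measure with density `p` w.r.t. Lebesgue measure. -/
def toMeas {d : ℕ} (p : Euc d → ℝ) : Measure (Euc d) :=
  volume.withDensity fun x => ENNReal.ofReal (p x)

/-- `P₂(ℝ^d)`: probability measures with finite second moment. -/
def P2 (d : ℕ) : Set (Measure (Euc d)) :=
  {μ | IsProbabilityMeasure μ ∧ Integrable (fun x => ‖x‖ ^ 2) μ}
/-- Divergence of a vector field. -/
def divg {d : ℕ} (V : Euc d → Euc d) (x : Euc d) : ℝ :=
  ∑ i, ⟪fderiv ℝ V x (EuclideanSpace.single i 1), EuclideanSpace.single i 1⟫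

/-- Laplacian of a scalar function. -/
def lap {d : ℕ} (f : Euc d → ℝ) (x : Euc d) : ℝ := divg (gradient f) x
/-- Classical solution of the HJB equation
`∂ₜ u = (σ²/2) Δu − (σ²/4)|∇u|² + f(t,·) − γ u`, with initial condition `u₀`:
jointly continuous on `[0,∞) × ℝ^d`, of class `C³` in space for positive times
and satisfying the equation pointwise. -/
def IsHJBSolution {d : ℕ} (σ γ : ℝ) (f : ℝ → Euc d → ℝ) (u0 : Euc d → ℝ)
    (u : ℝ → Euc d → ℝ) : Prop :=
  ContinuousOn (fun q : ℝ × Euc d => u q.1 q.2) (Ici 0 ×ˢ univ) ∧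
  (∀ t > (0:ℝ), ContDiff ℝ 3 (u t)) ∧
  (∀ x, u 0 x = u0 x) ∧
  (∀ x : Euc d, ∀ t > (0:ℝ), HasDerivAt (fun s => u s x)
      (σ ^ 2 / 2 * lap (u t) x - σ ^ 2 / 4 * ‖gradient (u t) x‖ ^ 2
        + f t x - γ * u t x) t)

/-!
Compare the second difference `v(t, m + ξ) + v(t, m - ξ) - 2 v(t, m)` with `θ_t |ξ|²` from below and
with `Λ |ξ|²` from above by the maximum principle in `(m, ξ)`.  At an extremum of the gap the
first-order conditions express the gradients at `m + ξ` and `m - ξ` through those at `m` and of the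
comparison function `ψ`; by the parallelogram identity the second difference of `|∇v|²` is then
`|∇ψ|² / 2`, which is the quadratic term of the Riccati equation.  Bounds on second differences are
bounds on the Hessian.

For the extrema to exist `v` has to grow at most quadratically.  From above this is a comparison
with quadratics plus a barrier at the boundary of a ball, whose blow-up is absorbed by the quadratic
gradient term.  From below it follows from a Harnack inequality
`W(t + τ, x) ≤ W(t, y) + |x - y|² / (k₁ τ) + O(τ)` for `W = exp(γ t) v` and small `τ`, obtained by
doubling time as well as space and localising `x` by a barrier of size `O(τ)`.  Once
`|v| ≤ C (1 + |x|²)`, the function `v + ε exp(λ t) w²` with `w = v + B (1 + |x|²)` and `B`, `λ`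
large is a strict supersolution which exceeds `v` by a quartic, and using it in place of `v` makes
the gap coercive.
-/

section Calculus

theorem nonneg_of_hasDerivAt_of_eventually_le_left {F : ℝ → ℝ} {a t : ℝ} (h : HasDerivAt F a t)
    (hm : ∀ᶠ s in 𝓝[<] t, F s ≤ F t) : 0 ≤ a := by
  refine ge_of_tendsto (hasDerivAt_iff_tendsto_slope_left_right.1 h).1 ?_
  filter_upwards [hm, self_mem_nhdsWithin] with s hs hst
  rw [slope_def_field]
  exact div_nonneg_of_nonpos (sub_nonpos.2 hs) (sub_nonpos.2 (mem_Iio.1 hst).le)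

theorem deriv_deriv_nonpos_of_isLocalMax {F : ℝ → ℝ} {x : ℝ} (h : IsLocalMax F x)
    (hc : ContinuousAt F x) : deriv (deriv F) x ≤ 0 := by
  by_contra! hpos
  have hmin := isLocalMin_of_deriv_deriv_pos hpos h.deriv_eq_zero hc
  have hconst : F =ᶠ[𝓝 x] fun _ => F x := by
    filter_upwards [h, hmin] with y hy hy' using le_antisymm hy hy'
  have := hconst.deriv.deriv_eq
  simp at this
  linarith

theorem exists_isMaxOn_of_isCompact_superlevel {X : Type*} [TopologicalSpace X] {Φ : X → ℝ}
    {S K : Set X} {z₁ : X} (hz₁ : z₁ ∈ S) (hK : IsCompact K) (hΦ : ContinuousOn Φ K)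
    (hsub : ∀ z ∈ S, Φ z₁ ≤ Φ z → z ∈ K) :
    ∃ z ∈ K, Φ z₁ ≤ Φ z ∧ ∀ z' ∈ S, Φ z' ≤ Φ z := by
  have hz₁K : z₁ ∈ K := hsub z₁ hz₁ le_rfl
  obtain ⟨z, hzK, hmax⟩ := hK.exists_isMaxOn ⟨z₁, hz₁K⟩ hΦ
  refine ⟨z, hzK, hmax hz₁K, fun z' hz' => ?_⟩
  rcases le_total (Φ z₁) (Φ z') with h | h
  · exact hmax (hsub z' hz' h)
  · exact h.trans (hmax hz₁K)

theorem exists_forall_sub_barrier_le {X : Type*} [TopologicalSpace X] {K : Set X}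
    {G M ρ : X → ℝ} {m : ℕ} (hm : m ≠ 0) (hK : IsCompact K) (hG : ContinuousOn G K)
    (hM : Continuous M) (hM₀ : ∀ z ∈ K, 0 < M z) (hρ : Continuous ρ) (hρ₀ : ∀ z ∈ K, 0 ≤ ρ z)
    {z₁ : X} (hz₁ : z₁ ∈ K) (hρ₁ : 0 < ρ z₁) :
    ∃ z ∈ K, 0 < ρ z ∧ ∀ z' ∈ K, 0 < ρ z' →
      G z' - M z' * (ρ z')⁻¹ ^ m ≤ G z - M z * (ρ z)⁻¹ ^ m := by
  obtain ⟨N, hN⟩ := hK.bddAbove_image hG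
  set Φ : X → ℝ := fun z => G z - M z * (ρ z)⁻¹ ^ m
  -- On the superlevel set of `Φ z₁` the barrier is bounded, so `ρ` cannot vanish there.
  set K' := K ∩ {z | M z ≤ (N - Φ z₁) * ρ z ^ m}
  have hρpos : ∀ z ∈ K', 0 < ρ z := by
    rintro z ⟨hz, hzM⟩
    refine (hρ₀ z hz).lt_of_ne' fun h0 => ?_
    rw [mem_ofPred_eq, h0, zero_pow hm, mul_zero] at hzM
    exact (hM₀ z hz).not_ge hzM
  have hsub : ∀ z ∈ {z ∈ K | 0 < ρ z}, Φ z₁ ≤ Φ z → z ∈ K' := by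
    rintro z ⟨hz, hρz⟩ hle
    have hGz : G z ≤ N := hN (mem_image_of_mem G hz)
    have : M z * (ρ z ^ m)⁻¹ ≤ N - Φ z₁ := by
      rw [← inv_pow]
      linarith [show Φ z = G z - M z * (ρ z)⁻¹ ^ m from rfl]
    exact ⟨hz, (mul_inv_le_iff₀ (pow_pos hρz m)).1 this⟩
  obtain ⟨z, hz, -, hmax⟩ := exists_isMaxOn_of_isCompact_superlevel
    (S := {z ∈ K | 0 < ρ z}) ⟨hz₁, hρ₁⟩ (hK.inter_right (isClosed_le hM (by fun_prop)))
    ((hG.mono inter_subset_left).sub <| hM.continuousOn.mul <|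
      (hρ.continuousOn.inv₀ fun z hz => (hρpos z hz).ne').pow m) hsub
  exact ⟨z, hz.1, hρpos z hz, fun z' hz' hρ' => hmax z' ⟨hz', hρ'⟩⟩

variable {E : Type*} [NormedAddCommGroup E] [InnerProductSpace ℝ E]

/-- `f` is differentiable near `x`, its gradient is differentiable at `x`, and at `x` the gradient
is `p` and the Laplacian (the trace of the derivative of the gradient) is `L`.  This is all the
regularity that the maximum principle sees. -/
def HasGradLapAt (f : E → ℝ) (p : E) (L : ℝ) (x : E) : Prop :=
  ∃ (G : E → E) (H : E →L[ℝ] E), (∀ᶠ y in 𝓝 x, HasFDerivAt f (innerSL ℝ (G y)) y) ∧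
    HasFDerivAt G H x ∧ G x = p ∧ LinearMap.trace ℝ E H = L

namespace HasGradLapAt

variable {f g : E → ℝ} {p q x : E} {L M : ℝ}

theorem hasFDerivAt (hf : HasGradLapAt f p L x) : HasFDerivAt f (innerSL ℝ p) x := by
  obtain ⟨G, H, hG, -, rfl, -⟩ := hf
  exact hG.self_of_nhds

theorem const (c : ℝ) (x : E) : HasGradLapAt (fun _ => c) 0 0 x :=
  ⟨fun _ => 0, 0, .of_forall fun y => by simpa using hasFDerivAt_const c y,
    hasFDerivAt_const _ _, rfl, by simp⟩

theorem add (hf : HasGradLapAt f p L x) (hg : HasGradLapAt g q M x) :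
    HasGradLapAt (fun y => f y + g y) (p + q) (L + M) x := by
  obtain ⟨G, H, hG, hH, rfl, rfl⟩ := hf
  obtain ⟨G', H', hG', hH', rfl, rfl⟩ := hg
  refine ⟨fun y => G y + G' y, H + H', ?_, hH.add hH', rfl, by simp⟩
  filter_upwards [hG, hG'] with y hy hy'
  exact (hy.add hy').congr_fderiv (map_add _ _ _).symm

theorem const_mul (c : ℝ) (hf : HasGradLapAt f p L x) :
    HasGradLapAt (fun y => c * f y) (c • p) (c * L) x := by
  obtain ⟨G, H, hG, hH, rfl, rfl⟩ := hf
  refine ⟨fun y => c • G y, c • H, ?_, hH.const_smul c, rfl, by simp⟩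
  filter_upwards [hG] with y hy
  simpa using hy.const_mul c

theorem neg (hf : HasGradLapAt f p L x) : HasGradLapAt (fun y => -f y) (-p) (-L) x := by
  simpa using hf.const_mul (-1)

theorem sub (hf : HasGradLapAt f p L x) (hg : HasGradLapAt g q M x) :
    HasGradLapAt (fun y => f y - g y) (p - q) (L - M) x := by
  simpa [sub_eq_add_neg] using hf.add hg.neg

theorem inner_left (P x : E) : HasGradLapAt (fun y => ⟪P, y⟫) P 0 x :=
  ⟨fun _ => P, 0, .of_forall fun y => (innerSL ℝ P).hasFDerivAt, hasFDerivAt_const _ _, rfl,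
    by simp⟩

theorem norm_sub_sq [FiniteDimensional ℝ E] (a x : E) :
    HasGradLapAt (fun y => ‖y - a‖ ^ 2) ((2 : ℝ) • (x - a)) (2 * Module.finrank ℝ E) x := by
  refine ⟨fun y => (2 : ℝ) • (y - a), (2 : ℝ) • .id ℝ E, .of_forall fun y => ?_,
    ((hasFDerivAt_id x).sub_const a).const_smul 2, rfl, by simp⟩
  refine ((hasFDerivAt_id y).sub_const a).norm_sq.congr_fderiv ?_
  ext z
  simp

theorem norm_sq [FiniteDimensional ℝ E] (x : E) :
    HasGradLapAt (fun y => ‖y‖ ^ 2) ((2 : ℝ) • x) (2 * Module.finrank ℝ E) x := by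
  simpa using norm_sub_sq 0 x

theorem comp_real [FiniteDimensional ℝ E] {φ φ' : ℝ → ℝ} {φ'' : ℝ} (hf : HasGradLapAt f p L x)
    (hφ : ∀ᶠ r in 𝓝 (f x), HasDerivAt φ (φ' r) r) (hφ' : HasDerivAt φ' φ'' (f x)) :
    HasGradLapAt (fun y => φ (f y)) (φ' (f x) • p) (φ'' * ‖p‖ ^ 2 + φ' (f x) * L) x := by
  have hfx := hf.hasFDerivAt
  obtain ⟨G, H, hG, hH, rfl, rfl⟩ := hf
  refine ⟨fun y => φ' (f y) • G y, _, ?_, (hφ'.comp_hasFDerivAt x hfx).smul hH, rfl, ?_⟩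
  · filter_upwards [hG, hfx.continuousAt.eventually hφ] with y hy hφy
    exact (hφy.comp_hasFDerivAt y hy).congr_fderiv (map_smul _ _ _).symm
  · simp [add_comm]

theorem inv_one_sub_mul_norm_sub_sq_pow [FiniteDimensional ℝ E] (c : ℝ) (m : ℕ) (a : E)
    (hx : 1 - c * ‖x - a‖ ^ 2 ≠ 0) :
    HasGradLapAt (fun y => (1 - c * ‖y - a‖ ^ 2)⁻¹ ^ m)
      ((2 * m * c * (1 - c * ‖x - a‖ ^ 2)⁻¹ ^ (m + 1)) • (x - a))
      (2 * m * c * (1 - c * ‖x - a‖ ^ 2)⁻¹ ^ (m + 1) * Module.finrank ℝ E +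
        4 * m * (m + 1) * c ^ 2 * (1 - c * ‖x - a‖ ^ 2)⁻¹ ^ (m + 2) * ‖x - a‖ ^ 2) x := by
  have hderiv (m : ℕ) {r : ℝ} (hr : 1 - c * r ≠ 0) :
      HasDerivAt (fun r : ℝ => (1 - c * r)⁻¹ ^ m) (m * c * (1 - c * r)⁻¹ ^ (m + 1)) r := by
    have hlin : HasDerivAt (fun r : ℝ => 1 - c * r) (-c) r := by
      simpa using ((hasDerivAt_id r).const_mul c).const_sub 1
    refine ((hlin.fun_inv hr).fun_pow m).congr_deriv ?_
    rcases m with - | m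
    · simp
    · rw [Nat.add_sub_cancel, div_eq_mul_inv, ← inv_pow]
      ring
  have hne : ∀ᶠ r in 𝓝 (‖x - a‖ ^ 2), 1 - c * r ≠ 0 :=
    (by fun_prop : Continuous fun r : ℝ => 1 - c * r).continuousAt.eventually_ne hx
  convert (norm_sub_sq a x).comp_real (hne.mono fun r hr => hderiv m hr)
    ((hderiv (m + 1) hx).const_mul (m * c)) using 1
  · rw [smul_smul]
    ring_nf
  · rw [norm_smul, mul_pow]
    norm_num
    ring

theorem comp_add_smul {c : ℝ} {ξ : E} (hf : HasGradLapAt f p L (x + c • ξ)) :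
    HasGradLapAt (fun η => f (x + c • η)) (c • p) (c ^ 2 * L) ξ := by
  obtain ⟨G, H, hG, hH, rfl, rfl⟩ := hf
  have hline (η : E) : HasFDerivAt (fun η : E => x + c • η) (c • .id ℝ E) η :=
    ((hasFDerivAt_id η).const_smul c).const_add x
  refine ⟨fun η => c • G (x + c • η), _, ?_, (hH.comp ξ (hline ξ)).const_smul c, rfl, ?_⟩
  · filter_upwards [(hline ξ).continuousAt.eventually hG] with η hη
    refine (hη.comp η (hline η)).congr_fderiv ?_
    ext z
    simp
  · simp [pow_two, mul_assoc]

theorem eq_zero_and_nonpos_of_isLocalMax [FiniteDimensional ℝ E]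
    (hf : HasGradLapAt f p L x) (hmax : IsLocalMax f x) : p = 0 ∧ L ≤ 0 := by
  have hp : innerSL ℝ p = 0 := hmax.hasFDerivAt_eq_zero hf.hasFDerivAt
  refine ⟨by simpa using congr($hp p), ?_⟩
  obtain ⟨G, H, hG, hH, -, rfl⟩ := hf
  rw [LinearMap.trace_eq_sum_inner _ (stdOrthonormalBasis ℝ E)]
  refine Finset.sum_nonpos fun i _ => ?_
  set e := stdOrthonormalBasis ℝ E i
  have hline (s : ℝ) : HasDerivAt (fun s : ℝ => x + s • e) e s := by
    simpa using ((hasDerivAt_id s).smul_const e).const_add x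
  have hline0 : Tendsto (fun s : ℝ => x + s • e) (𝓝 0) (𝓝 x) := by
    simpa using (hline 0).continuousAt.tendsto
  have hderiv : ∀ᶠ s in 𝓝 (0 : ℝ),
      HasDerivAt (fun s : ℝ => f (x + s • e)) ⟪G (x + s • e), e⟫ s := by
    filter_upwards [hline0.eventually hG] with s hs using hs.comp_hasDerivAt s (hline s)
  have hderiv2 : HasDerivAt (fun s : ℝ => ⟪G (x + s • e), e⟫) ⟪H e, e⟫ 0 := by
    have := HasFDerivAt.comp_hasDerivAt (0 : ℝ) (by simpa using hH) (hline 0)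
    simpa using this.inner ℝ (hasDerivAt_const (0 : ℝ) e)
  have hmax0 : IsLocalMax (fun s : ℝ => f (x + s • e)) 0 := by
    filter_upwards [hline0.eventually hmax] with s hs
    simpa using hs
  have := deriv_deriv_nonpos_of_isLocalMax hmax0 hderiv.self_of_nhds.continuousAt
  rw [EventuallyEq.deriv_eq (hderiv.mono fun s hs => hs.deriv), hderiv2.deriv] at this
  rwa [real_inner_comm] at this

end HasGradLapAt

end Calculus

section TangentBound

variable {E : Type*} [NormedAddCommGroup E] [InnerProductSpace ℝ E] {F : E → ℝ} {G : E → E}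
  {b c : ℝ}

/-- `G` is a field of slopes of quadratics of curvature `c` supporting `F` from below, that is,
`F` is `c`-convex with gradient `G`.  An upper bound by quadratics of curvature `c` is expressed
as `HasTangentBound (-F) (-G) (-c)`. -/
def HasTangentBound (F : E → ℝ) (G : E → E) (c : ℝ) : Prop :=
  ∀ a x, F a + ⟪G a, x - a⟫ + c / 2 * ‖x - a‖ ^ 2 ≤ F x

theorem hasDerivAt_comp_add_smul (hG : ∀ x, HasFDerivAt F (innerSL ℝ (G x)) x) (a ξ : E) (s : ℝ) :
    HasDerivAt (fun s : ℝ => F (a + s • ξ)) ⟪G (a + s • ξ), ξ⟫ s := by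
  have hline : HasDerivAt (fun s : ℝ => a + s • ξ) ξ s := by
    simpa using ((hasDerivAt_id s).smul_const ξ).const_add a
  exact (hG _).comp_hasDerivAt s hline

theorem hasFDerivAt_neg_innerSL {x : E} (hG : HasFDerivAt F (innerSL ℝ (G x)) x) :
    HasFDerivAt (-F) (innerSL ℝ ((-G) x)) x := by
  rw [Pi.neg_apply, map_neg]
  exact hG.neg

namespace HasTangentBound

theorem mono (h : HasTangentBound F G c) (hb : b ≤ c) : HasTangentBound F G b := fun a x => by
  have : b / 2 * ‖x - a‖ ^ 2 ≤ c / 2 * ‖x - a‖ ^ 2 := by gcongr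
  linarith [h a x]

theorem add_inner_le (h : HasTangentBound F G 0) (a x : E) : F a + ⟪G a, x - a⟫ ≤ F x := by
  simpa using h a x

theorem le_add_inner (h : HasTangentBound (-F) (-G) (-c)) (a x : E) :
    F x ≤ F a + ⟪G a, x - a⟫ + c / 2 * ‖x - a‖ ^ 2 := by
  have := h a x
  simp only [Pi.neg_apply, inner_neg_left] at this
  linarith

theorem le_inner_sub (h : HasTangentBound F G c) (x y : E) :
    c * ‖x - y‖ ^ 2 ≤ ⟪G x - G y, x - y⟫ := by
  have hxy := h x y
  rw [← neg_sub x y, inner_neg_right, norm_neg] at hxy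
  rw [inner_sub_left]
  linarith [h y x]

theorem le_second_difference (h : HasTangentBound F G c) (m ξ : E) :
    c * ‖ξ‖ ^ 2 ≤ F (m + ξ) + F (m - ξ) - 2 * F m := by
  have h₁ := h m (m + ξ)
  have h₂ := h m (m - ξ)
  rw [add_sub_cancel_left] at h₁
  rw [sub_sub_cancel_left, inner_neg_right, norm_neg] at h₂
  linarith

theorem second_difference_le (h : HasTangentBound (-F) (-G) (-c)) (m ξ : E) :
    F (m + ξ) + F (m - ξ) - 2 * F m ≤ c * ‖ξ‖ ^ 2 := by
  have := h.le_second_difference m ξ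
  simp only [Pi.neg_apply] at this
  linarith

theorem of_le_inner_sub (hG : ∀ x, HasFDerivAt F (innerSL ℝ (G x)) x)
    (h : ∀ x y, c * ‖x - y‖ ^ 2 ≤ ⟪G x - G y, x - y⟫) : HasTangentBound F G c := fun a x => by
  set ξ := x - a with hξ
  set φ : ℝ → ℝ := fun s => F (a + s • ξ) - (s * ⟪G a, ξ⟫ + s ^ 2 * (c / 2 * ‖ξ‖ ^ 2))
  have hφ (s : ℝ) : HasDerivAt φ (⟪G (a + s • ξ) - G a, ξ⟫ - c * s * ‖ξ‖ ^ 2) s := by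
    refine ((hasDerivAt_comp_add_smul hG a ξ s).fun_sub (((hasDerivAt_id s).mul_const _).add
      (((hasDerivAt_id s).fun_pow 2).mul_const _))).congr_deriv ?_
    simp only [id_eq, Nat.cast_ofNat, Nat.add_one_sub_one, pow_one, one_mul, mul_one,
      inner_sub_left]
    ring
  have hφ₀ : ∀ s ∈ interior (Icc (0 : ℝ) 1), 0 ≤ deriv φ s := fun s hs => by
    rw [interior_Icc] at hs
    have hs' := h (a + s • ξ) a
    rw [add_sub_cancel_left, norm_smul, real_inner_smul_right, Real.norm_of_nonneg hs.1.le] at hs'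
    rw [(hφ s).deriv]
    refine nonneg_of_mul_nonneg_right ?_ hs.1
    linarith
  have hmono := monotoneOn_of_deriv_nonneg (convex_Icc 0 1)
    (fun s _ => (hφ s).continuousAt.continuousWithinAt)
    (fun s _ => (hφ s).differentiableAt.differentiableWithinAt) hφ₀
    (left_mem_Icc.2 zero_le_one) (right_mem_Icc.2 zero_le_one) zero_le_one
  simp only [φ, hξ, zero_smul, add_zero, zero_mul, ne_eq, OfNat.ofNat_ne_zero, not_false_eq_true,
    zero_pow, sub_zero, one_smul, add_sub_cancel, one_mul, one_pow] at hmono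
  linarith

/-- The corrected difference quotients of `F` along `ξ` decrease under halving of the step. -/
theorem of_le_second_difference (hG : ∀ x, HasFDerivAt F (innerSL ℝ (G x)) x)
    (h : ∀ m ξ, c * ‖ξ‖ ^ 2 ≤ F (m + ξ) + F (m - ξ) - 2 * F m) :
    HasTangentBound F G c := fun a x => by
  set ξ := x - a with hξ
  set q : ℝ → ℝ := fun s => s⁻¹ * (F (a + s • ξ) - F a) - s * (c / 2 * ‖ξ‖ ^ 2)
  have hhalf {s : ℝ} (hs : 0 < s) : q (s / 2) ≤ q s := by
    have := h (a + (s / 2) • ξ) ((s / 2) • ξ)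
    rw [add_assoc, ← add_smul, add_halves, add_sub_cancel_right, norm_smul,
      Real.norm_of_nonneg (by positivity)] at this
    refine le_of_mul_le_mul_left ?_ hs
    simp only [q, mul_sub, inv_div]
    field_simp
    linarith
  have hq (n : ℕ) : q ((1 / 2) ^ n) ≤ q 1 := by
    induction n with
    | zero => simp
    | succ n ih =>
      rw [pow_succ, mul_one_div]
      exact (hhalf (by positivity)).trans ih
  have hlim : Tendsto q (𝓝[>] 0) (𝓝 ⟪G a, ξ⟫) := by
    have hslope := (hasDerivAt_comp_add_smul hG a ξ 0).tendsto_slope_zero_right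
    have hlin : Tendsto (fun s : ℝ => s * (c / 2 * ‖ξ‖ ^ 2)) (𝓝[>] 0) (𝓝 0) :=
      ((continuous_mul_const _).tendsto' 0 0 (zero_mul _)).mono_left nhdsWithin_le_nhds
    simpa [q] using hslope.sub hlin
  have hpow : Tendsto (fun n : ℕ => (1 / 2 : ℝ) ^ n) atTop (𝓝[>] 0) :=
    tendsto_pow_atTop_nhdsWithin_zero_of_lt_one (by norm_num) (by norm_num)
  have := le_of_tendsto' (hlim.comp hpow) hq
  simp only [q, hξ, inv_one, one_smul, add_sub_cancel, one_mul] at this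
  linarith

theorem neg_of_inner_sub_le (hG : ∀ x, HasFDerivAt F (innerSL ℝ (G x)) x)
    (h : ∀ x y, ⟪G x - G y, x - y⟫ ≤ c * ‖x - y‖ ^ 2) : HasTangentBound (-F) (-G) (-c) :=
  of_le_inner_sub (fun x => hasFDerivAt_neg_innerSL (hG x)) fun x y => by
    rw [Pi.neg_apply, Pi.neg_apply, ← neg_sub', inner_neg_left]
    linarith [h x y]

theorem neg_of_second_difference_le (hG : ∀ x, HasFDerivAt F (innerSL ℝ (G x)) x)
    (h : ∀ m ξ, F (m + ξ) + F (m - ξ) - 2 * F m ≤ c * ‖ξ‖ ^ 2) :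
    HasTangentBound (-F) (-G) (-c) :=
  of_le_second_difference (fun x => hasFDerivAt_neg_innerSL (hG x)) fun m ξ => by
    simp only [Pi.neg_apply]
    linarith [h m ξ]

theorem norm_sub_le (hl : HasTangentBound F G 0) (hu : HasTangentBound (-F) (-G) (-c))
    (hc : 0 < c) (x y : E) : ‖G x - G y‖ ≤ 2 * c * ‖x - y‖ := by
  set D := G x - G y with hD
  have hz (z : E) : ⟪D, z⟫ ≤ c * (‖x - y‖ ^ 2 + ‖z‖ ^ 2) := by
    have h₁ := hl.add_inner_le x (x + z)
    have h₂ := hu.le_add_inner y (x + z)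
    have h₃ := hl.add_inner_le y x
    have hpar : ‖x - y + z‖ ^ 2 ≤ 2 * (‖x - y‖ ^ 2 + ‖z‖ ^ 2) := by
      linarith [parallelogram_law_with_norm ℝ (x - y) z, mul_self_nonneg ‖x - y - z‖]
    have := mul_le_mul_of_nonneg_left hpar hc.le
    rw [add_sub_cancel_left] at h₁
    rw [add_sub_right_comm, inner_add_right] at h₂
    rw [hD, inner_sub_left]
    linarith
  have := hz ((2 * c)⁻¹ • D)
  rw [real_inner_smul_right, real_inner_self_eq_norm_sq, norm_smul,
    Real.norm_of_nonneg (by positivity)] at this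
  refine le_of_sq_le_sq ?_ (by positivity)
  field_simp at this
  linarith

theorem exists_growth (hl : HasTangentBound F G 0) (hu : HasTangentBound (-F) (-G) (-c))
    (hc : 0 < c) :
    ∃ C ≥ 0, ∀ x, |F x| ≤ C * (1 + ‖x‖ ^ 2) ∧ ‖G x‖ ^ 2 ≤ C * (1 + ‖x‖ ^ 2) := by
  have hGx (x : E) : ‖G x‖ ≤ ‖G 0‖ + 2 * c * ‖x‖ := by
    have := (norm_sub_norm_le (G x) (G 0)).trans (norm_sub_le hl hu hc x 0)
    rw [sub_zero] at this
    linarith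
  have hinner (x : E) : |⟪G 0, x⟫| ≤ ‖G 0‖ * (1 + ‖x‖ ^ 2) :=
    (abs_real_inner_le_norm _ _).trans <|
      mul_le_mul_of_nonneg_left (by nlinarith [sq_nonneg (‖x‖ - 1)]) (norm_nonneg _)
  refine ⟨|F 0| + ‖G 0‖ + c + 2 * ‖G 0‖ ^ 2 + 8 * c ^ 2, by positivity, fun x => ⟨?_, ?_⟩⟩
  · have hFl := hl.add_inner_le 0 x
    have hFu := hu.le_add_inner 0 x
    rw [sub_zero] at hFl hFu
    have : 0 ≤ |F 0| * ‖x‖ ^ 2 + c * (1 + ‖x‖ ^ 2 / 2) +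
        (2 * ‖G 0‖ ^ 2 + 8 * c ^ 2) * (1 + ‖x‖ ^ 2) := by positivity
    have : 0 ≤ c * ‖x‖ ^ 2 := by positivity
    exact abs_le.2 ⟨by linarith [neg_abs_le (F 0), (abs_le.1 (hinner x)).1],
      by linarith [le_abs_self (F 0), (abs_le.1 (hinner x)).2]⟩
  · have : 0 ≤ (|F 0| + ‖G 0‖ + c) * (1 + ‖x‖ ^ 2) + 2 * ‖G 0‖ ^ 2 * ‖x‖ ^ 2 + 8 * c ^ 2 := by
      positivity
    calc ‖G x‖ ^ 2 ≤ (‖G 0‖ + 2 * c * ‖x‖) ^ 2 := by gcongr; exact hGx x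
      _ ≤ 2 * ‖G 0‖ ^ 2 + 2 * (2 * c * ‖x‖) ^ 2 := by
        linarith [add_sq_le (a := ‖G 0‖) (b := 2 * c * ‖x‖)]
      _ ≤ _ := by linarith

end HasTangentBound

end TangentBound

section ViscousHJ

variable {E : Type*} [NormedAddCommGroup E] [InnerProductSpace ℝ E]

/-- `W` is a classical solution on `[0, ∞) × E` of the viscous Hamilton–Jacobi equation
`∂ₜW = ν ΔW - k(t) |∇W|² + f(t, ·)`, continuous up to time `0`. -/
structure IsViscousHJ (ν : ℝ) (k : ℝ → ℝ) (f : ℝ → E → ℝ) (W : ℝ → E → ℝ) : Prop where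
  continuousOn : ContinuousOn (fun q : ℝ × E => W q.1 q.2) (Ici 0 ×ˢ univ)
  eq : ∀ t > 0, ∀ x, ∃ p L, HasGradLapAt (W t) p L x ∧
    HasDerivAt (fun s => W s x) (ν * L - k t * ‖p‖ ^ 2 + f t x) t

theorem half_norm_sq_sub_norm_sq_le (P z : E) : ‖z‖ ^ 2 / 2 - ‖P‖ ^ 2 ≤ ‖P + z‖ ^ 2 := by
  have := norm_add_sq_real ((2 : ℝ) • P) z
  rw [norm_smul, real_inner_smul_left, Real.norm_two] at this
  linarith [norm_add_sq_real P z, sq_nonneg ‖(2 : ℝ) • P + z‖]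

theorem one_le_inv_one_sub {r : ℝ} (h₀ : 0 ≤ r) (h₁ : 0 < 1 - r) : 1 ≤ (1 - r)⁻¹ :=
  (one_le_inv₀ h₁).2 (by linarith)

theorem le_mul_of_barrier_grad_le {k k₁ k₂ b M P p r s : ℝ} (hk₁ : 0 < k₁) (hk : k ∈ Icc k₁ k₂)
    (hb : 0 ≤ b) (hM : 0 ≤ M) (hr : 0 ≤ r) (hP : 0 ≤ P)
    (hp : 2 * (b + M * s ^ 2) ^ 2 * r - P ≤ p) :
    2 * k₁ * M ^ 2 * (s ^ 4 * r) - k₂ * P ≤ k * p := by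
  have hbM : (M * s ^ 2) ^ 2 ≤ (b + M * s ^ 2) ^ 2 := by gcongr; linarith
  have hsq : 2 * M ^ 2 * (s ^ 4 * r) - P ≤ p := by
    linarith [mul_le_mul_of_nonneg_right hbM hr]
  calc _ ≤ k * (2 * M ^ 2 * (s ^ 4 * r) - P) := by
        linarith [mul_le_mul_of_nonneg_right hk.1 (show 0 ≤ 2 * M ^ 2 * (s ^ 4 * r) by positivity),
          mul_le_mul_of_nonneg_right hk.2 hP]
    _ ≤ k * p := mul_le_mul_of_nonneg_left hsq (hk₁.le.trans hk.1)

-- The barrier `M s` contributes `ν M A s³` through its Laplacian and `-ν M A (s⁴ - s³)` through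
-- the square of its gradient; their sum is at most `2 ν M A`.
theorem viscousHJ_rhs_le_of_barrier {ν k k₁ k₂ b n L P p r s : ℝ} (hν : 0 < ν) (hk₁ : 0 < k₁)
    (hk : k ∈ Icc k₁ k₂) (hb : 0 ≤ b) (hn : 0 ≤ n) (hr : 0 ≤ r) (hs : 1 ≤ s)
    (hsr : s * (1 - r) = 1)
    (hL : L ≤ 2 * b * n + ν * (2 * n + 8) / (2 * k₁) * (2 * s ^ 2 * n + 8 * s ^ 3 * r))
    (hp : 2 * (b + ν * (2 * n + 8) / (2 * k₁) * s ^ 2) ^ 2 * r - P ≤ p) (hP : 0 ≤ P) :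
    ν * L - k * p ≤ 2 * ν * b * n + (ν * (2 * n + 8)) ^ 2 / k₁ + k₂ * P := by
  set M := ν * (2 * n + 8) / (2 * k₁) with hM
  have hM₀ : 0 < M := by positivity
  have hMk : 2 * k₁ * M = ν * (2 * n + 8) := by
    rw [hM]
    field_simp
  have hMM : (ν * (2 * n + 8)) ^ 2 / k₁ = 2 * (ν * (2 * n + 8) * M) := by
    rw [hM]
    field_simp
  have hrs : s ^ 4 * r = s ^ 4 - s ^ 3 := by linear_combination -s ^ 3 * hsr
  have hlap : L ≤ 2 * b * n + M * ((2 * n + 8) * s ^ 3) := by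
    have hr1 : r ≤ 1 := by nlinarith
    refine hL.trans ?_
    have : s ^ 2 ≤ s ^ 3 := pow_le_pow_right₀ hs (by norm_num)
    have : 2 * s ^ 2 * n + 8 * s ^ 3 * r ≤ 2 * s ^ 3 * n + 8 * s ^ 3 * 1 := by gcongr
    have := mul_le_mul_of_nonneg_left this hM₀.le
    linarith
  have hgrad : 2 * k₁ * M ^ 2 * (s ^ 4 - s ^ 3) - k₂ * P ≤ k * p :=
    hrs ▸ le_mul_of_barrier_grad_le hk₁ hk hb hM₀.le hr hP hp
  have hs4 : s ^ 3 - (s ^ 4 - s ^ 3) ≤ 2 := by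
    nlinarith [sq_nonneg (s ^ 2 - s - 3 / 4), sq_nonneg (s - 3 / 2)]
  calc ν * L - k * p
      ≤ ν * (2 * b * n + M * ((2 * n + 8) * s ^ 3))
          - (2 * k₁ * M * M * (s ^ 4 - s ^ 3) - k₂ * P) := by
        have := mul_le_mul_of_nonneg_left hlap hν.le
        linarith
    _ = 2 * ν * b * n + ν * (2 * n + 8) * M * (s ^ 3 - (s ^ 4 - s ^ 3)) + k₂ * P := by
        rw [hMk]
        ring
    _ ≤ _ := by
        have := mul_le_mul_of_nonneg_left hs4 (by positivity : 0 ≤ ν * (2 * n + 8) * M)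
        linarith

variable [FiniteDimensional ℝ E] {ν : ℝ} {k : ℝ → ℝ} {f W : ℝ → E → ℝ}

theorem IsViscousHJ.slope_le_of_isLocalMax_sub_barrier (hW : IsViscousHJ ν k f W) (hν : 0 < ν)
    {t k₁ k₂ b K : ℝ} {a P x : E} (hk₁ : 0 < k₁) (hk : k t ∈ Icc k₁ k₂) (hb : 0 ≤ b) (ht : 0 < t)
    (hx : 0 < 1 - 1 * ‖x - a‖ ^ 2)
    (hspace : IsLocalMax (fun y => W t y - (⟪P, y⟫ + b * ‖y - a‖ ^ 2)
      - ν * (2 * Module.finrank ℝ E + 8) / (2 * k₁) * (1 - 1 * ‖y - a‖ ^ 2)⁻¹ ^ 1) x)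
    (htime : ∀ᶠ u in 𝓝[<] t, W u x - K * u ≤ W t x - K * t) :
    K ≤ 2 * ν * b * Module.finrank ℝ E + (ν * (2 * Module.finrank ℝ E + 8)) ^ 2 / k₁
      + k₂ * ‖P‖ ^ 2 + f t x := by
  set n : ℝ := (Module.finrank ℝ E : ℝ) with hn
  set M : ℝ := ν * (2 * n + 8) / (2 * k₁)
  set s := (1 - 1 * ‖x - a‖ ^ 2)⁻¹ with hs
  obtain ⟨p, L, hpL, hderiv⟩ := hW.eq t ht x
  obtain ⟨hp, hL⟩ := ((hpL.sub ((HasGradLapAt.inner_left P x).add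
    ((HasGradLapAt.norm_sub_sq a x).const_mul b))).sub
    ((HasGradLapAt.inv_one_sub_mul_norm_sub_sq_pow 1 1 a hx.ne').const_mul M)
    ).eq_zero_and_nonpos_of_isLocalMax hspace
  rw [← hs, ← hn] at hL
  rw [← hs] at hp
  have hp' : p = P + (2 * (b + M * s ^ 2)) • (x - a) := by
    rw [← sub_eq_zero, ← hp]
    module
  have hgrad := half_norm_sq_sub_norm_sq_le P ((2 * (b + M * s ^ 2)) • (x - a))
  rw [← hp', norm_smul, mul_pow, Real.norm_eq_abs, sq_abs] at hgrad
  have hrhs := viscousHJ_rhs_le_of_barrier hν hk₁ hk hb (Nat.cast_nonneg _ : 0 ≤ n)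
    (sq_nonneg ‖x - a‖) (one_le_inv_one_sub (by positivity) hx)
    (by simpa [hs] using inv_mul_cancel₀ hx.ne') (L := L) (p := ‖p‖ ^ 2) (P := ‖P‖ ^ 2)
    (by norm_num at hL; linarith) (by linarith) (sq_nonneg _)
  have hK : 0 ≤ ν * L - k t * ‖p‖ ^ 2 + f t x - K * 1 :=
    nonneg_of_hasDerivAt_of_eventually_le_left
      (hderiv.fun_sub ((hasDerivAt_id' t).const_mul K)) htime
  linarith

theorem IsViscousHJ.le_add_mul_of_le_quadratic (hW : IsViscousHJ ν k f W) (hν : 0 < ν)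
    {T k₁ k₂ b D K : ℝ} (hk₁ : 0 < k₁) (hk : ∀ t ∈ Icc 0 T, k t ∈ Icc k₁ k₂) (a P : E)
    (hb : 0 ≤ b) (hf : ∀ t ∈ Icc 0 T, ∀ x ∈ Metric.closedBall a 1, f t x ≤ D)
    (hW₀ : ∀ x ∈ Metric.closedBall a 1, W 0 x ≤ W 0 a + ⟪P, x - a⟫ + b * ‖x - a‖ ^ 2)
    (hK : 2 * ν * b * Module.finrank ℝ E + (ν * (2 * Module.finrank ℝ E + 8)) ^ 2 / k₁
      + k₂ * ‖P‖ ^ 2 + D < K) {t : ℝ} (ht : t ∈ Icc 0 T) :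
    W t a ≤ W 0 a + K * t := by
  set M : ℝ := ν * (2 * Module.finrank ℝ E + 8) / (2 * k₁)
  have hM₀ : 0 < M := by positivity
  have ha : a ∈ Metric.closedBall a 1 := Metric.mem_closedBall_self zero_le_one
  obtain ⟨⟨t₀, x⟩, ⟨ht₀, hx⟩, hρ, hmax⟩ := exists_forall_sub_barrier_le one_ne_zero
    (isCompact_Icc.prod (isCompact_closedBall a 1))
    (G := fun z : ℝ × E => W z.1 z.2 - (⟪P, z.2 - a⟫ + b * ‖z.2 - a‖ ^ 2 + K * z.1))
    (M := fun _ => M) (ρ := fun z => 1 - 1 * ‖z.2 - a‖ ^ 2)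
    ((hW.continuousOn.mono (prod_mono Icc_subset_Ici_self (subset_univ _))).sub (by fun_prop))
    continuous_const (fun _ _ => hM₀) (by fun_prop)
    (fun z hz => by nlinarith [norm_nonneg (z.2 - a), mem_closedBall_iff_norm.1 hz.2])
    (z₁ := (t, a)) ⟨ht, ha⟩ (by simp)
  simp only at hρ hmax ht₀ hx
  have hs₁ := one_le_inv_one_sub (by positivity) hρ
  have hval := hmax (t, a) ⟨ht, ha⟩ (by simp)
  simp only [sub_self, inner_zero_right, norm_zero] at hval
  rcases ht₀.1.eq_or_lt with rfl | ht₀pos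
  · nlinarith [hW₀ x hx]
  have := hW.slope_le_of_isLocalMax_sub_barrier hν hk₁ (hk t₀ ht₀) hb ht₀pos (P := P) (K := K)
    hρ ?_ ?_
  · linarith [hf t₀ ht₀ x hx]
  · have hcont : Continuous fun y : E => 1 - 1 * ‖y - a‖ ^ 2 := by fun_prop
    filter_upwards [continuousAt_const.eventually_lt hcont.continuousAt hρ] with y hy
    have := hmax (t₀, y) ⟨ht₀, mem_closedBall_iff_norm.2 (by nlinarith [norm_nonneg (y - a)])⟩ hy
    simp only [inner_sub_right] at this ⊢
    linarith
  · filter_upwards [Ioo_mem_nhdsLT ht₀pos] with u hu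
    linarith [hmax (u, x) ⟨⟨hu.1.le, hu.2.le.trans ht₀.2⟩, hx⟩ hρ]

end ViscousHJ

namespace TwoPoint

theorem exists_forall_quartic_lt {a b : ℝ} (ha : 0 < a) (hb : 0 < b) :
    ∃ K₀, 1 ≤ K₀ ∧ ∀ K ≥ K₀, ∀ s ≥ 1, ∀ Y : ℝ,
      b * (K * s ^ 8 + K * Y * s ^ 5 + Y ^ 2) < a * (K ^ 2 * s ^ 8 + Y ^ 4) := by
  set c := b ^ 4 / a ^ 3 + b ^ 2 / (2 * a) with hc
  have hc₀ : 0 < c := by positivity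
  refine ⟨1 + (b + c) * (4 / (3 * a)), by linarith [show 0 < (b + c) * (4 / (3 * a)) by positivity],
    fun K hK s hs Y => ?_⟩
  have hK₁ : 1 ≤ K := by linarith [show 0 < (b + c) * (4 / (3 * a)) by positivity]
  have hKbc : b + c < 3 * a / 4 * K := by
    have : (b + c) * (4 / (3 * a)) < K := by linarith
    rw [mul_div_assoc', div_lt_iff₀ (by positivity)] at this
    linarith
  have hmixed : b * (K * Y * s ^ 5) ≤ a / 4 * K ^ 2 * s ^ 8 + b ^ 2 / a * Y ^ 2 * s ^ 2 := by
    have : a / 4 * (K * s ^ 4 - 2 * b / a * Y * s) ^ 2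
        = a / 4 * K ^ 2 * s ^ 8 + b ^ 2 / a * Y ^ 2 * s ^ 2 - b * (K * Y * s ^ 5) := by
      field_simp
      ring
    linarith [show 0 ≤ a / 4 * (K * s ^ 4 - 2 * b / a * Y * s) ^ 2 by positivity]
  have hYs : b ^ 2 / a * Y ^ 2 * s ^ 2 ≤ a / 4 * Y ^ 4 + b ^ 4 / a ^ 3 * s ^ 4 := by
    have : a / 4 * (Y ^ 2 - 2 * b ^ 2 / a ^ 2 * s ^ 2) ^ 2
        = a / 4 * Y ^ 4 + b ^ 4 / a ^ 3 * s ^ 4 - b ^ 2 / a * Y ^ 2 * s ^ 2 := by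
      field_simp
      ring
    linarith [show 0 ≤ a / 4 * (Y ^ 2 - 2 * b ^ 2 / a ^ 2 * s ^ 2) ^ 2 by positivity]
  have hY : b * Y ^ 2 ≤ a / 2 * Y ^ 4 + b ^ 2 / (2 * a) := by
    have : a / 2 * (Y ^ 2 - b / a) ^ 2 = a / 2 * Y ^ 4 + b ^ 2 / (2 * a) - b * Y ^ 2 := by
      field_simp
      ring
    linarith [show 0 ≤ a / 2 * (Y ^ 2 - b / a) ^ 2 by positivity]
  have hs4 : b ^ 4 / a ^ 3 * s ^ 4 ≤ b ^ 4 / a ^ 3 * s ^ 8 := by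
    gcongr
    norm_num
  have hs0 : b ^ 2 / (2 * a) ≤ b ^ 2 / (2 * a) * s ^ 8 :=
    le_mul_of_one_le_right (by positivity) (one_le_pow₀ hs)
  have hmain : (b * K + c) * s ^ 8 < 3 * a / 4 * K ^ 2 * s ^ 8 := by
    have : (b + c) * K < 3 * a / 4 * K * K := by gcongr
    have : c ≤ c * K := le_mul_of_one_le_right hc₀.le hK₁
    gcongr
    linarith
  have : c * s ^ 8 = b ^ 4 / a ^ 3 * s ^ 8 + b ^ 2 / (2 * a) * s ^ 8 := by
    rw [hc]
    ring
  linarith [show 0 ≤ a / 4 * Y ^ 4 by positivity]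

theorem lap_ge {ν k₁ K s Y τ D P kx F : ℝ} (hk₁ : 0 < k₁) (hkx : k₁ ≤ kx) (hs : 1 ≤ s)
    (hK : 0 < K) (hP₀ : 0 ≤ P) (hP : Y ^ 2 - 16 * τ * K * s ^ 5 * Y ≤ P)
    (hτ : 512 * k₁ * K * (τ ^ 2 * s ^ 6) ≤ 1) (hF : 4 * F ≤ K)
    (hD : 0 ≤ ν * D - kx * P + F + k₁ * Y ^ 2 / 4 - K * s ^ 4) :
    K * s ^ 4 / 2 + k₁ * Y ^ 2 / 4 ≤ ν * D := by
  have hAMGM : Y ^ 2 / 2 - 128 * τ ^ 2 * K ^ 2 * s ^ 10 ≤ P := by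
    linarith [sq_nonneg (Y - 16 * τ * K * s ^ 5)]
  have hkP : k₁ * (Y ^ 2 / 2 - 128 * τ ^ 2 * K ^ 2 * s ^ 10) ≤ kx * P :=
    (mul_le_mul_of_nonneg_left hAMGM hk₁.le).trans (mul_le_mul_of_nonneg_right hkx hP₀)
  have hsmall := mul_le_mul_of_nonneg_right hτ (show 0 ≤ K * s ^ 4 by positivity)
  have : K ≤ K * s ^ 4 := le_mul_of_one_le_right hK.le (one_le_pow₀ hs)
  linarith

-- Move the two points by `(1 + l) ξ` and `ξ`: the optimal `l` is proportional to `τ D₀`.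
theorem lap_sub_le {k₁ c q K s τ D D' D₀ : ℝ} (hk₁ : 0 < k₁) (hq : 0 < q) (hτ : 0 < τ)
    (hD₀ : 0 ≤ D₀) (hD₀D : D₀ ≤ D) (hK : 0 ≤ K) (hc : 0 ≤ c)
    (hsmall : 2 * c * k₁ * K * (τ ^ 2 * s ^ 6) ≤ q)
    (hD : ∀ l ≥ 0, (1 + l) ^ 2 * D - D'
      ≤ 2 * q * l ^ 2 / (k₁ * τ) + τ * K * (1 + l) ^ 2 * c * s ^ 6) :
    D - D' ≤ τ * (2 * K * c * s ^ 6 - k₁ * D₀ ^ 2 / (4 * q)) := by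
  set μ := k₁ * D₀ / (2 * q) with hμ
  have : 0 ≤ μ := by positivity
  have hl := hD (τ * μ) (by positivity)
  have hlin : 2 * (τ * μ) * D₀ ≤ (2 * (τ * μ) + (τ * μ) ^ 2) * D := by
    have := mul_le_mul_of_nonneg_left hD₀D (show 0 ≤ 2 * (τ * μ) by positivity)
    linarith [mul_nonneg (sq_nonneg (τ * μ)) (hD₀.trans hD₀D)]
  have hsq : τ * K * (1 + τ * μ) ^ 2 * c * s ^ 6 ≤ τ * K * (2 + 2 * (τ * μ) ^ 2) * c * s ^ 6 := by
    gcongr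
    linarith [sq_nonneg (1 - τ * μ)]
  have hrem : 2 * c * k₁ * K * (τ ^ 2 * s ^ 6) * (τ * μ ^ 2 / k₁) ≤ q * (τ * μ ^ 2 / k₁) :=
    mul_le_mul_of_nonneg_right hsmall (by positivity)
  have hrem_eq : 2 * c * k₁ * K * (τ ^ 2 * s ^ 6) * (τ * μ ^ 2 / k₁)
      = τ * K * (2 * (τ * μ) ^ 2) * c * s ^ 6 := by field_simp
  have hreduced : q * (τ * μ ^ 2 / k₁) = τ * (k₁ * D₀ ^ 2 / (4 * q)) := by
    rw [hμ]
    field_simp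
    norm_num
  have hpenalty : 2 * q * (τ * μ) ^ 2 / (k₁ * τ) = 2 * (τ * (k₁ * D₀ ^ 2 / (4 * q))) := by
    rw [hμ]
    field_simp
    ring
  have hgain : 2 * (τ * μ) * D₀ = 4 * (τ * (k₁ * D₀ ^ 2 / (4 * q))) := by
    rw [hμ]
    field_simp
  linarith

theorem le_lap_sub {ν k₂ Lk Cf k₁ K R s Y τ D D' P kx ky Fx Fy : ℝ}
    (hkx₀ : 0 ≤ kx) (hkx : kx ≤ k₂) (hk : ky - kx ≤ Lk * τ) (hs : 0 ≤ s) (hY : 0 ≤ Y)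
    (hτ : 0 < τ) (hK : 0 ≤ K) (hP : Y ^ 2 - 16 * τ * K * s ^ 5 * Y ≤ P)
    (hF : Fx - Fy ≤ Cf * (τ * R ^ 2 + R * (k₁ * τ * Y / 2)))
    (hD : 0 ≤ (ν * D - kx * P + Fx) - (ν * D' - ky * Y ^ 2 + Fy)) :
    -(τ * (16 * k₂ * (K * s ^ 5 * Y) + Lk * Y ^ 2 + Cf * R ^ 2 + Cf * k₁ / 2 * (R * Y)))
      ≤ ν * (D - D') := by
  have hkP := mul_le_mul_of_nonneg_left hP hkx₀
  have hkX := mul_le_mul_of_nonneg_right hkx (show 0 ≤ 16 * τ * K * s ^ 5 * Y by positivity)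
  have hkY := mul_le_mul_of_nonneg_right hk (sq_nonneg Y)
  linarith

theorem gain_ge {ν k₁ q K s Y : ℝ} (hν : 0 < ν) (hk₁ : 0 < k₁) (hq : 0 < q) (hK : 0 ≤ K) :
    k₁ / (4 * q * ν) * min (1 / 4) (k₁ ^ 2 / 16) * (K ^ 2 * s ^ 8 + Y ^ 4)
      ≤ ν * (k₁ * ((K * s ^ 4 / 2 + k₁ * Y ^ 2 / 4) / ν) ^ 2 / (4 * q)) := by
  have e : ν * (k₁ * ((K * s ^ 4 / 2 + k₁ * Y ^ 2 / 4) / ν) ^ 2 / (4 * q))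
      = k₁ / (4 * q * ν) * (K * s ^ 4 / 2 + k₁ * Y ^ 2 / 4) ^ 2 := by
    field_simp
  rw [e, mul_assoc]
  refine mul_le_mul_of_nonneg_left ?_ (by positivity)
  have h₁ := mul_le_mul_of_nonneg_right (min_le_left (1 / 4) (k₁ ^ 2 / 16))
    (show 0 ≤ K ^ 2 * s ^ 8 by positivity)
  have h₂ := mul_le_mul_of_nonneg_right (min_le_right (1 / 4) (k₁ ^ 2 / 16))
    (show 0 ≤ Y ^ 4 by positivity)
  linarith [show 0 ≤ K * s ^ 4 * (k₁ * Y ^ 2) by positivity]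

theorem cost_le {a₁ a₂ a₃ a₄ a₅ K R s Y : ℝ} (h₁ : 0 ≤ a₁) (h₂ : 0 ≤ a₂) (h₃ : 0 ≤ a₃)
    (h₄ : 0 ≤ a₄) (h₅ : 0 ≤ a₅) (hR : 1 ≤ R) (hRK : R ^ 2 ≤ K) (hs : 1 ≤ s) (hY : 0 ≤ Y) :
    a₁ * (K * s ^ 6) + a₂ * (K * s ^ 5 * Y) + a₃ * Y ^ 2 + a₄ * R ^ 2 + a₅ * (R * Y)
      ≤ (a₁ + a₂ + a₃ + a₄ + a₅) * (K * s ^ 8 + K * Y * s ^ 5 + Y ^ 2) := by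
  have hK : 0 ≤ K := (sq_nonneg R).trans hRK
  have hs₅ : 1 ≤ s ^ 5 := one_le_pow₀ hs
  have hs₆ : K * s ^ 6 ≤ K * s ^ 8 := by
    gcongr
    norm_num
  have hs₈ : K ≤ K * s ^ 8 := le_mul_of_one_le_right hK (one_le_pow₀ hs)
  have hRY : R * Y ≤ K * Y * s ^ 5 :=
    calc R * Y ≤ K * Y := mul_le_mul_of_nonneg_right (by nlinarith) hY
      _ ≤ K * Y * s ^ 5 := le_mul_of_one_le_right (by positivity) hs₅
  have : 0 ≤ K * s ^ 8 := by positivity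
  have : 0 ≤ K * Y * s ^ 5 := by positivity
  have := sq_nonneg Y
  simp only [add_mul]
  gcongr <;> linarith

/-- The relations between the derivatives of `W` at a maximum of `W (t + τ) x - W t y` minus the
penalty `‖x - y‖² / (k₁ τ)` and a barrier `τ K s⁴`: `D` and `D'` are the Laplacians at the two
points, `P` and `Y²` the squared gradients, `kx`, `ky`, `Fx`, `Fy` the values of the
coefficients. -/
structure MaxPoint (ν k₁ k₂ Lk Cf c q K R s Y τ : ℝ) where
  (D D' P kx ky Fx Fy : ℝ)
  kx_mem : kx ∈ Icc k₁ k₂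
  ky_sub_le : ky - kx ≤ Lk * τ
  Fx_le : Fx ≤ Cf * R ^ 2
  Fx_sub_le : Fx - Fy ≤ Cf * (τ * R ^ 2 + R * (k₁ * τ * Y / 2))
  P_nonneg : 0 ≤ P
  P_ge : Y ^ 2 - 16 * τ * K * s ^ 5 * Y ≤ P
  deriv_time : 0 ≤ (ν * D - kx * P + Fx) - (ν * D' - ky * Y ^ 2 + Fy)
  deriv_lag : 0 ≤ ν * D - kx * P + Fx + k₁ * Y ^ 2 / 4 - K * s ^ 4
  second_variation : ∀ l ≥ 0, (1 + l) ^ 2 * D - D'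
    ≤ 2 * q * l ^ 2 / (k₁ * τ) + τ * K * (1 + l) ^ 2 * c * s ^ 6

theorem exists_forall_isEmpty_maxPoint {ν k₁ k₂ Lk Cf c q : ℝ} (hν : 0 < ν) (hk₁ : 0 < k₁)
    (hk₂ : 0 ≤ k₂) (hLk : 0 ≤ Lk) (hCf : 0 ≤ Cf) (hc : 0 < c) (hq : 0 < q) :
    ∃ B : ℝ, 1 ≤ B ∧ ∀ K R s Y τ : ℝ, 1 ≤ R → 1 ≤ s → 0 ≤ Y → 0 < τ → B * R ^ 2 ≤ K →
      B * K * (τ ^ 2 * s ^ 6) ≤ 1 → IsEmpty (MaxPoint ν k₁ k₂ Lk Cf c q K R s Y τ) := by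
  obtain ⟨K₀, hK₀, hquartic⟩ := exists_forall_quartic_lt
    (show 0 < k₁ / (4 * q * ν) * min (1 / 4) (k₁ ^ 2 / 16) by positivity)
    (show 0 < 2 * ν * c + 16 * k₂ + Lk + Cf + Cf * k₁ / 2 by positivity)
  set B := max (max K₀ (4 * Cf)) (max (512 * k₁) (2 * c * k₁ / q))
  have hB₁ : K₀ ≤ B := (le_max_left _ _).trans (le_max_left _ _)
  have hB₂ : 4 * Cf ≤ B := (le_max_right _ _).trans (le_max_left _ _)
  have hB₃ : 512 * k₁ ≤ B := (le_max_left _ _).trans (le_max_right _ _)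
  have hB₄ : 2 * c * k₁ / q ≤ B := (le_max_right _ _).trans (le_max_right _ _)
  refine ⟨B, hK₀.trans hB₁, ?_⟩
  refine fun K R s Y τ hR hs hY hτ hKR hKτ => ⟨fun m => ?_⟩
  have hR2 : 1 ≤ R ^ 2 := one_le_pow₀ hR
  have hBK : B ≤ K := (le_mul_of_one_le_right (by linarith) hR2).trans hKR
  have hRK : R ^ 2 ≤ K := (le_mul_of_one_le_left (by positivity) (by linarith)).trans hKR
  have hK : 0 < K := by linarith
  have hsmall {A : ℝ} (hA : A ≤ B) : A * K * (τ ^ 2 * s ^ 6) ≤ 1 :=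
    le_trans (by gcongr) hKτ
  have hτ₂ : 2 * c * k₁ * K * (τ ^ 2 * s ^ 6) ≤ q := by
    have := mul_le_mul_of_nonneg_left (hsmall hB₄) hq.le
    field_simp at this ⊢
    linarith
  have hFK : 4 * m.Fx ≤ K := by
    linarith [m.Fx_le, (mul_le_mul_of_nonneg_right hB₂ (sq_nonneg R)).trans hKR]
  have hlow := lap_ge hk₁ m.kx_mem.1 hs hK m.P_nonneg m.P_ge (hsmall hB₃) hFK m.deriv_lag
  have hup := lap_sub_le hk₁ hq hτ (D₀ := (K * s ^ 4 / 2 + k₁ * Y ^ 2 / 4) / ν) (by positivity)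
    ((div_le_iff₀' hν).2 hlow) hK.le hc.le hτ₂ m.second_variation
  have hlo := le_lap_sub (hk₁.le.trans m.kx_mem.1) m.kx_mem.2 m.ky_sub_le (by linarith) hY hτ hK.le
    m.P_ge m.Fx_sub_le m.deriv_time
  have hgain := hlo.trans (mul_le_mul_of_nonneg_left hup hν.le)
  rw [← mul_neg, mul_left_comm ν τ, mul_le_mul_iff_right₀ hτ] at hgain
  have hcost := cost_le (show 0 ≤ 2 * ν * c by positivity) (show 0 ≤ 16 * k₂ by positivity)
    hLk hCf (show 0 ≤ Cf * k₁ / 2 by positivity) hR hRK hs hY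
  linarith [hquartic K (hB₁.trans hBK) s hs Y, gain_ge (s := s) (Y := Y) hν hk₁ hq hK.le]

section Excess

variable {E : Type*} [NormedAddCommGroup E]

/-- The bounds on the data of a viscous Hamilton–Jacobi equation on `[0, T]` used by the two-point
comparison: `k` is bounded and one-sided Lipschitz, and `f` grows at most quadratically with
at most linearly growing local Lipschitz constants. -/
structure IsQuadraticData (k : ℝ → ℝ) (f : ℝ → E → ℝ) (T k₁ k₂ Lk Cf : ℝ) : Prop where
  k_mem : ∀ t ∈ Icc 0 T, k t ∈ Icc k₁ k₂
  k_sub_le : ∀ s ∈ Icc 0 T, ∀ t ∈ Icc s T, k s - k t ≤ Lk * (t - s)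
  f_le : ∀ t ∈ Icc 0 T, ∀ R ≥ 1, ∀ x ∈ Metric.closedBall 0 R, f t x ≤ Cf * R ^ 2
  f_sub_le : ∀ s ∈ Icc 0 T, ∀ t ∈ Icc s T, ∀ R ≥ 1, ∀ x ∈ Metric.closedBall 0 R,
    ∀ y ∈ Metric.closedBall 0 (2 * R), f t x - f s y ≤ Cf * ((t - s) * R ^ 2 + R * ‖x - y‖)

/-- The excess of `W (t + τ) x` over the bound of the Harnack inequality from `(t, y)`, localised
to `‖x‖ < R` by a barrier.  The fourth power in the barrier makes `τ² s⁶` small, with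
`s = (1 - ‖x‖² / R²)⁻¹`, wherever the excess is positive and `τ` is small. -/
def excess (W : ℝ → E → ℝ) (k₁ K R τ t : ℝ) (x y : E) : ℝ :=
  W (t + τ) x - W t y - ‖x - y‖ ^ 2 / (k₁ * τ) - τ * K * (1 - (R ^ 2)⁻¹ * ‖x‖ ^ 2)⁻¹ ^ 4

theorem barrier_pos_iff {R : ℝ} (hR : 0 < R) {x : E} :
    0 < 1 - (R ^ 2)⁻¹ * ‖x‖ ^ 2 ↔ ‖x‖ < R := by
  rw [sub_pos, inv_mul_lt_iff₀ (by positivity), mul_one,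
    pow_lt_pow_iff_left₀ (norm_nonneg x) hR.le two_ne_zero]

section MaxPoint

variable {W : ℝ → E → ℝ} {k₁ K R τ t s : ℝ} {x y : E}

theorem deriv_sub_nonneg_of_time_max {a b : ℝ}
    (ha : HasDerivAt (fun u => W u x) a (t + τ)) (hb : HasDerivAt (fun u => W u y) b t)
    (hmax : ∀ᶠ u in 𝓝[<] t, excess W k₁ K R τ u x y ≤ excess W k₁ K R τ t x y) : 0 ≤ a - b := by
  refine nonneg_of_hasDerivAt_of_eventually_le_left ((ha.comp_add_const t τ).fun_sub hb) ?_
  filter_upwards [hmax] with u hu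
  simp only [excess] at hu
  linarith

theorem deriv_nonneg_of_lag_max (hτ : τ ≠ 0) {a : ℝ}
    (ha : HasDerivAt (fun u => W u x) a (t + τ))
    (hmax : ∀ᶠ u in 𝓝[<] τ, excess W k₁ K R u t x y ≤ excess W k₁ K R τ t x y) :
    0 ≤ a + ‖x - y‖ ^ 2 / (k₁ * τ ^ 2) - K * (1 - (R ^ 2)⁻¹ * ‖x‖ ^ 2)⁻¹ ^ 4 := by
  have hpen := (hasDerivAt_inv hτ).const_mul (‖x - y‖ ^ 2 / k₁)
  have hbar := (hasDerivAt_id' τ).mul_const (K * (1 - (R ^ 2)⁻¹ * ‖x‖ ^ 2)⁻¹ ^ 4)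
  have := nonneg_of_hasDerivAt_of_eventually_le_left
    (((ha.comp_const_add t τ).fun_sub hpen).fun_sub hbar) ?_
  · convert this using 1
    field_simp
    ring
  · filter_upwards [hmax] with u hu
    simp only [excess, div_mul_eq_div_mul_one_div _ k₁, one_div] at hu
    linarith

variable [InnerProductSpace ℝ E] {p p' : E} {L L' : ℝ}

theorem grad_lap_of_isLocalMax [FiniteDimensional ℝ E]
    (hx : 0 < 1 - (R ^ 2)⁻¹ * ‖x‖ ^ 2) (hs : s = (1 - (R ^ 2)⁻¹ * ‖x‖ ^ 2)⁻¹)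
    (hp : HasGradLapAt (W (t + τ)) p L x) (hp' : HasGradLapAt (W t) p' L' y)
    (hmax : IsLocalMax (fun z : E × E => excess W k₁ K R τ t z.1 z.2) (x, y)) (l : ℝ) :
    (1 + l) • p - p' - (l * (2 / (k₁ * τ))) • (x - y)
        - ((1 + l) * (8 * τ * K * (R ^ 2)⁻¹ * s ^ 5)) • x = 0 ∧
      (1 + l) ^ 2 * L - L' ≤ 2 * Module.finrank ℝ E * l ^ 2 / (k₁ * τ) + τ * K * (1 + l) ^ 2 *
        (8 * (R ^ 2)⁻¹ * s ^ 5 * Module.finrank ℝ E + 80 * (R ^ 2)⁻¹ ^ 2 * s ^ 6 * ‖x‖ ^ 2) := by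
  have hline : Tendsto (fun η : E => (x + (1 + l) • η, y + (1 : ℝ) • η)) (𝓝 0) (𝓝 (x, y)) :=
    (by fun_prop : Continuous fun η : E => (x + (1 + l) • η, y + (1 : ℝ) • η)).tendsto' _ _
      (by simp)
  have hpen := (HasGradLapAt.norm_sub_sq (0 : E) (x - y + l • 0)).comp_add_smul
  have hbar := (HasGradLapAt.inv_one_sub_mul_norm_sub_sq_pow (R ^ 2)⁻¹ 4 (0 : E)
    (x := x + (1 + l) • 0) (by simpa using hx.ne')).comp_add_smul
  have hsum := ((((HasGradLapAt.comp_add_smul (c := 1 + l) (ξ := 0) (by simpa using hp)).sub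
    (HasGradLapAt.comp_add_smul (c := 1) (ξ := 0) (by simpa using hp'))).sub
    (hpen.const_mul (k₁ * τ)⁻¹)).sub (hbar.const_mul (τ * K))).eq_zero_and_nonpos_of_isLocalMax ?_
  · simp only [sub_zero, smul_zero, add_zero, ← hs] at hsum
    refine ⟨?_, ?_⟩
    · rw [← hsum.1]
      push_cast
      module
    · have := hsum.2
      push_cast at this
      rw [div_eq_mul_inv]
      linarith
  · filter_upwards [hline.eventually hmax] with η hη
    have e : x + (1 + l) • η - (y + (1 : ℝ) • η) = x - y + l • η := by module
    simp only [excess, e, div_eq_inv_mul] at hη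
    simpa [div_eq_inv_mul] using hη

theorem sq_norm_add_smul_ge {c B : ℝ} {q x : E} (hx : ‖c • x‖ ≤ B) :
    ‖q‖ ^ 2 - 2 * B * ‖q‖ ≤ ‖q + c • x‖ ^ 2 := by
  have := (abs_le.1 (abs_real_inner_le_norm q (c • x))).1
  have := mul_le_mul_of_nonneg_left hx (norm_nonneg q)
  linarith [norm_add_sq_real q (c • x), sq_nonneg ‖c • x‖]

end MaxPoint

end Excess

section MaximumConditions

variable {E : Type*} [NormedAddCommGroup E] [InnerProductSpace ℝ E]
  {ν : ℝ} {k : ℝ → ℝ} {f W : ℝ → E → ℝ} {k₁ k₂ Lk Cf K R T τ t : ℝ} {x y : E}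

theorem barrier_lap_le (hR : 1 ≤ R) {r s n : ℝ} (hr : (R ^ 2)⁻¹ * r ^ 2 ≤ 1)
    (hs : 1 ≤ s) (hn : 0 ≤ n) :
    8 * (R ^ 2)⁻¹ * s ^ 5 * n + 80 * (R ^ 2)⁻¹ ^ 2 * s ^ 6 * r ^ 2 ≤ (8 * n + 80) * s ^ 6 := by
  have hc : (R ^ 2)⁻¹ ≤ 1 := inv_le_one_of_one_le₀ (one_le_pow₀ hR)
  have hcr : (R ^ 2)⁻¹ * ((R ^ 2)⁻¹ * r ^ 2) ≤ 1 := mul_le_one₀ hc (by positivity) hr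
  have h₁ : (R ^ 2)⁻¹ * (s ^ 5 * n) ≤ 1 * (s ^ 6 * n) := by
    gcongr
    norm_num
  have h₂ := mul_le_mul_of_nonneg_right hcr (show 0 ≤ s ^ 6 by positivity)
  linarith

theorem norm_barrier_grad_le (hR : 1 ≤ R) (hx : ‖x‖ ≤ R) {A : ℝ} (hA : 0 ≤ A) :
    ‖(A * (R ^ 2)⁻¹) • x‖ ≤ A := by
  have : (R ^ 2)⁻¹ * ‖x‖ ≤ 1 := (inv_mul_le_one₀ (by positivity)).2 (by nlinarith)
  rw [norm_smul, Real.norm_of_nonneg (by positivity), mul_assoc]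
  exact mul_le_of_le_one_right hA this

variable [FiniteDimensional ℝ E]

theorem grad_eq_of_isLocalMax {s : ℝ} {p p' : E} {L L' : ℝ}
    (hx : 0 < 1 - (R ^ 2)⁻¹ * ‖x‖ ^ 2) (hs : s = (1 - (R ^ 2)⁻¹ * ‖x‖ ^ 2)⁻¹)
    (hp : HasGradLapAt (W (t + τ)) p L x) (hp' : HasGradLapAt (W t) p' L' y)
    (hmax : IsLocalMax (fun z : E × E => excess W k₁ K R τ t z.1 z.2) (x, y)) :
    p' = (2 / (k₁ * τ)) • (x - y) ∧
      p = (2 / (k₁ * τ)) • (x - y) + (8 * τ * K * (R ^ 2)⁻¹ * s ^ 5) • x := by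
  have hvar := grad_lap_of_isLocalMax hx hs hp hp' hmax
  have hpy : p' = (2 / (k₁ * τ)) • (x - y) := by
    rw [← sub_eq_zero, ← neg_eq_zero, ← (hvar (-1)).1]
    module
  refine ⟨hpy, ?_⟩
  rw [← hpy, ← sub_eq_zero, ← (hvar 0).1]
  module

theorem nonempty_maxPoint (hW : IsViscousHJ ν k f W) (hd : IsQuadraticData k f T k₁ k₂ Lk Cf)
    (hk₁ : 0 < k₁) (hK : 0 ≤ K) (hR : 1 ≤ R) (hτ : 0 < τ) (ht : 0 < t) (htT : t + τ ≤ T)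
    (hx : ‖x‖ < R) (hy : ‖y‖ ≤ 2 * R)
    (hspace : IsLocalMax (fun z : E × E => excess W k₁ K R τ t z.1 z.2) (x, y))
    (htime : ∀ᶠ u in 𝓝[<] t, excess W k₁ K R τ u x y ≤ excess W k₁ K R τ t x y)
    (hlag : ∀ᶠ u in 𝓝[<] τ, excess W k₁ K R u t x y ≤ excess W k₁ K R τ t x y) :
    Nonempty (MaxPoint ν k₁ k₂ Lk Cf (8 * Module.finrank ℝ E + 80) (Module.finrank ℝ E + 1) K R
      (1 - (R ^ 2)⁻¹ * ‖x‖ ^ 2)⁻¹ (2 / (k₁ * τ) * ‖x - y‖) τ) := by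
  have hR₀ : 0 < R := by linarith
  have hx₀ := (barrier_pos_iff hR₀).2 hx
  have hr : (R ^ 2)⁻¹ * ‖x‖ ^ 2 ≤ 1 := by linarith
  set s := (1 - (R ^ 2)⁻¹ * ‖x‖ ^ 2)⁻¹ with hs
  have hs₁ : 1 ≤ s := one_le_inv_one_sub (by positivity) hx₀
  have htT₀ : t ∈ Icc 0 T := ⟨ht.le, by linarith⟩
  have htT₁ : t + τ ∈ Icc t T := ⟨by linarith, htT⟩
  obtain ⟨p, D, hp, hdx⟩ := hW.eq (t + τ) (by linarith) x
  obtain ⟨p', D', hp', hdy⟩ := hW.eq t ht y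
  have hvar := grad_lap_of_isLocalMax hx₀ hs hp hp' hspace
  obtain ⟨hpy, hpx⟩ := grad_eq_of_isLocalMax hx₀ hs hp hp' hspace
  have hY : ‖(2 / (k₁ * τ)) • (x - y)‖ = 2 / (k₁ * τ) * ‖x - y‖ := by
    rw [norm_smul, Real.norm_of_nonneg (by positivity)]
  have hbar := norm_barrier_grad_le hR hx.le (show 0 ≤ 8 * τ * K * s ^ 5 by positivity)
  rw [mul_right_comm] at hbar
  refine ⟨{
    D := D, D' := D', P := ‖p‖ ^ 2
    kx := k (t + τ), ky := k t, Fx := f (t + τ) x, Fy := f t y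
    kx_mem := hd.k_mem _ ⟨by linarith, htT⟩
    ky_sub_le := by simpa using hd.k_sub_le t htT₀ (t + τ) htT₁
    Fx_le := hd.f_le _ ⟨by linarith, htT⟩ R hR x (by simpa using hx.le)
    Fx_sub_le := ?_
    P_nonneg := by positivity
    P_ge := ?_
    deriv_time := ?_
    deriv_lag := ?_
    second_variation := fun l _ => (hvar l).2.trans ?_ }⟩
  · have := hd.f_sub_le t htT₀ (t + τ) htT₁ R hR x (by simpa using hx.le) y (by simpa using hy)
    convert this using 4
    · ring
    · field_simp
  · have := sq_norm_add_smul_ge (q := (2 / (k₁ * τ)) • (x - y)) hbar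
    rw [← hpx, hY] at this
    linarith
  · have := deriv_sub_nonneg_of_time_max hdx hdy htime
    rwa [hpy, hY] at this
  · convert deriv_nonneg_of_lag_max hτ.ne' hdx hlag using 2
    field_simp
    ring
  · have := barrier_lap_le hR hr hs₁ (Nat.cast_nonneg (Module.finrank ℝ E))
    have hl := mul_le_mul_of_nonneg_left this (show 0 ≤ τ * K * (1 + l) ^ 2 by positivity)
    have : 0 ≤ 2 * l ^ 2 / (k₁ * τ) := by positivity
    calc _ ≤ 2 * (Module.finrank ℝ E : ℝ) * l ^ 2 / (k₁ * τ) + 2 * l ^ 2 / (k₁ * τ) + _ :=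
          add_le_add (by linarith) hl
      _ = _ := by ring

end MaximumConditions

section Existence

variable {E : Type*} [NormedAddCommGroup E] {W : ℝ → E → ℝ} {k₁ K R T N τ t : ℝ} {x y : E}

theorem bounds_of_excess_pos (hk₁ : 0 < k₁) (hK : 0 ≤ K) (hR : 0 < R) (hτ : 0 < τ) (hx : ‖x‖ < R)
    (hN : |W (t + τ) x| ≤ N) (hN' : |W t y| ≤ N) (hpos : 0 ≤ excess W k₁ K R τ t x y) :
    ‖x - y‖ ^ 2 ≤ 2 * N * (k₁ * τ) ∧ τ * K * (1 - (R ^ 2)⁻¹ * ‖x‖ ^ 2)⁻¹ ^ 4 ≤ 2 * N := by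
  have hρ := (barrier_pos_iff hR).2 hx
  have hpen : 0 ≤ ‖x - y‖ ^ 2 / (k₁ * τ) := by positivity
  have hbar : 0 ≤ τ * K * (1 - (R ^ 2)⁻¹ * ‖x‖ ^ 2)⁻¹ ^ 4 := by positivity
  have h := (abs_le.1 hN).2
  have h' := (abs_le.1 hN').1
  rw [excess] at hpos
  exact ⟨(div_le_iff₀ (by positivity)).1 (by linarith), by linarith⟩

theorem exists_forall_excess_lt [ProperSpace E]
    (hW : ContinuousOn (fun q : ℝ × E => W q.1 q.2) (Ici 0 ×ˢ univ)) (hk₁ : 0 < k₁) (hK : 0 ≤ K)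
    (hR : 0 < R) {δ : ℝ} (hδ : 0 < δ) :
    ∃ τ₁ > 0, ∀ τ ∈ Ioo 0 τ₁, τ ≤ 1 → ∀ t ∈ Icc 0 T, ∀ x, ‖x‖ < R →
      ∀ y ∈ Metric.closedBall (0 : E) (2 * R), excess W k₁ K R τ t x y < δ := by
  have hS : IsCompact (Icc 0 (T + 1) ×ˢ Metric.closedBall (0 : E) (2 * R)) :=
    isCompact_Icc.prod (isCompact_closedBall 0 (2 * R))
  have hWS := hW.mono (prod_mono (Icc_subset_Ici_self : Icc 0 (T + 1) ⊆ Ici 0)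
    (subset_univ (Metric.closedBall (0 : E) (2 * R))))
  obtain ⟨N, hN⟩ := hS.exists_bound_of_continuousOn hWS
  obtain ⟨r, hr, hunif⟩ := Metric.uniformContinuousOn_iff.1
    (hS.uniformContinuousOn_of_continuous hWS) δ hδ
  refine ⟨min r (r ^ 2 / (2 * (|N| + 1) * k₁)), by positivity, fun τ hτ hτ₁ t ht x hx y hy => ?_⟩
  obtain ⟨hτr, hτN⟩ := lt_min_iff.1 hτ.2
  rw [lt_div_iff₀ (by positivity)] at hτN
  have hS₁ : (t + τ, x) ∈ Icc 0 (T + 1) ×ˢ Metric.closedBall (0 : E) (2 * R) :=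
    ⟨⟨by linarith [ht.1, hτ.1], by linarith [ht.2]⟩, mem_closedBall_zero_iff.2 (by linarith)⟩
  have hS₂ : (t, y) ∈ Icc 0 (T + 1) ×ˢ Metric.closedBall (0 : E) (2 * R) :=
    ⟨⟨ht.1, by linarith [ht.2]⟩, hy⟩
  by_contra! hge
  obtain ⟨hxy, -⟩ := bounds_of_excess_pos hk₁ hK hR hτ.1 hx ((hN _ hS₁).trans (le_abs_self N))
    ((hN _ hS₂).trans (le_abs_self N)) (hδ.le.trans hge)
  have hdist : dist (t + τ, x) (t, y) < r := by
    rw [Prod.dist_eq, max_lt_iff, dist_eq_norm x y]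
    refine ⟨by simpa [abs_of_pos hτ.1] using hτr, lt_of_pow_lt_pow_left₀ 2 hr.le ?_⟩
    linarith [mul_pos hk₁ hτ.1]
  have hlt := (le_abs_self _).trans_lt (hunif _ hS₁ _ hS₂ hdist)
  have hpen : 0 ≤ ‖x - y‖ ^ 2 / (k₁ * τ) := by
    have := hτ.1
    positivity
  have hbar : 0 ≤ τ * K * (1 - (R ^ 2)⁻¹ * ‖x‖ ^ 2)⁻¹ ^ 4 := by
    have := (barrier_pos_iff hR).2 hx
    have := hτ.1
    positivity
  rw [excess] at hge
  linarith

theorem exists_forall_excess_le [ProperSpace E]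
    (hW : ContinuousOn (fun q : ℝ × E => W q.1 q.2) (Ici 0 ×ˢ univ)) (hk₁ : 0 < k₁) (hK : 0 < K)
    (hR : 0 < R) {τ₀ τ₁ : ℝ} (hτ₁ : 0 < τ₁) (hτ : τ ∈ Icc τ₁ τ₀) (ht : t ∈ Icc 0 T) :
    ∃ τ ∈ Icc τ₁ τ₀, ∃ t ∈ Icc 0 T, ∃ x y, ‖x‖ < R ∧ y ∈ Metric.closedBall 0 (2 * R) ∧
      ∀ τ' ∈ Icc τ₁ τ₀, ∀ t' ∈ Icc 0 T, ∀ x', ‖x'‖ < R → ∀ y' ∈ Metric.closedBall 0 (2 * R),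
        excess W k₁ K R τ' t' x' y' ≤ excess W k₁ K R τ t x y := by
  set S := Icc τ₁ τ₀ ×ˢ Icc 0 T ×ˢ Metric.closedBall (0 : E) R ×ˢ Metric.closedBall (0 : E) (2 * R)
  have hG : ContinuousOn (fun z : ℝ × ℝ × E × E =>
      W (z.2.1 + z.1) z.2.2.1 - W z.2.1 z.2.2.2 - ‖z.2.2.1 - z.2.2.2‖ ^ 2 / (k₁ * z.1)) S := by
    have h₁ : ContinuousOn (fun z : ℝ × ℝ × E × E => W (z.2.1 + z.1) z.2.2.1) S :=
      hW.comp (f := fun z : ℝ × ℝ × E × E => (z.2.1 + z.1, z.2.2.1)) (by fun_prop) fun z hz =>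
        ⟨add_nonneg hz.2.1.1 (hτ₁.le.trans hz.1.1), mem_univ _⟩
    have h₂ : ContinuousOn (fun z : ℝ × ℝ × E × E => W z.2.1 z.2.2.2) S :=
      hW.comp (f := fun z : ℝ × ℝ × E × E => (z.2.1, z.2.2.2)) (by fun_prop) fun z hz =>
        ⟨hz.2.1.1, mem_univ _⟩
    exact (h₁.sub h₂).sub (ContinuousOn.div (by fun_prop) (by fun_prop) fun z hz =>
      (mul_pos hk₁ (hτ₁.trans_le hz.1.1)).ne')
  have hρ₀ : ∀ z ∈ S, 0 ≤ 1 - (R ^ 2)⁻¹ * ‖z.2.2.1‖ ^ 2 := fun z hz => by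
    have : ‖z.2.2.1‖ ^ 2 ≤ R ^ 2 := by
      gcongr
      exact mem_closedBall_zero_iff.1 hz.2.2.1
    simpa using (inv_mul_le_one₀ (by positivity)).2 this
  obtain ⟨⟨σ, r, a, b⟩, hz, hρ, hmax⟩ := exists_forall_sub_barrier_le four_ne_zero
    (isCompact_Icc.prod (isCompact_Icc.prod ((isCompact_closedBall 0 R).prod
      (isCompact_closedBall 0 (2 * R))))) hG
    (M := fun z => z.1 * K) (by fun_prop) (fun z hz => mul_pos (hτ₁.trans_le hz.1.1) hK)
    (ρ := fun z => 1 - (R ^ 2)⁻¹ * ‖z.2.2.1‖ ^ 2) (by fun_prop) hρ₀ (z₁ := (τ, t, 0, 0))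
    ⟨hτ, ht, Metric.mem_closedBall_self hR.le, Metric.mem_closedBall_self (by positivity)⟩
    (by simp)
  exact ⟨σ, hz.1, r, hz.2.1, a, b, (barrier_pos_iff hR).1 hρ, hz.2.2.2,
    fun τ' hτ' t' ht' x' hx' y' hy' => hmax (τ', t', x', y')
      ⟨hτ', ht', mem_closedBall_zero_iff.2 hx'.le, hy'⟩ ((barrier_pos_iff hR).2 hx')⟩

theorem exists_max_of_excess_pos [ProperSpace E]
    (hW : ContinuousOn (fun q : ℝ × E => W q.1 q.2) (Ici 0 ×ˢ univ)) (hk₁ : 0 < k₁) (hK : 0 < K)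
    (hR : 0 < R) {τ₀ : ℝ} (hτ₀ : τ₀ ≤ 1) (hτ : τ ∈ Ioc 0 τ₀) (ht : t ∈ Icc 0 T) (hx : ‖x‖ < R)
    (hy : y ∈ Metric.closedBall 0 (2 * R)) (hpos : 0 < excess W k₁ K R τ t x y) :
    ∃ τ ∈ Ioc 0 τ₀, ∃ t ∈ Icc 0 T, ∃ x y, ‖x‖ < R ∧ y ∈ Metric.closedBall 0 (2 * R) ∧
      0 < excess W k₁ K R τ t x y ∧ ∀ τ' ∈ Ioc 0 τ₀, ∀ t' ∈ Icc 0 T, ∀ x', ‖x'‖ < R →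
        ∀ y' ∈ Metric.closedBall 0 (2 * R),
          excess W k₁ K R τ' t' x' y' ≤ excess W k₁ K R τ t x y := by
  obtain ⟨τ₁, hτ₁, hlt⟩ := exists_forall_excess_lt (T := T) hW hk₁ hK.le hR hpos
  have hτ₁τ : τ₁ ≤ τ := by
    by_contra! h
    exact (hlt τ ⟨hτ.1, h⟩ (hτ.2.trans hτ₀) t ht x hx y hy).false
  obtain ⟨σ, hσ, r, hr, a, b, ha, hb, hmax⟩ :=
    exists_forall_excess_le hW hk₁ hK hR hτ₁ ⟨hτ₁τ, hτ.2⟩ ht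
  have hle := hmax τ ⟨hτ₁τ, hτ.2⟩ t ht x hx y hy
  refine ⟨σ, ⟨hτ₁.trans_le hσ.1, hσ.2⟩, r, hr, a, b, ha, hb, hpos.trans_le hle,
    fun τ' hτ' t' ht' x' hx' y' hy' => ?_⟩
  rcases lt_or_ge τ' τ₁ with h | h
  · exact (hlt τ' ⟨hτ'.1, h⟩ (hτ'.2.trans hτ₀) t' ht' x' hx' y' hy').le.trans hle
  · exact hmax τ' ⟨h, hτ'.2⟩ t' ht' x' hx' y' hy'

end Existence

section Harnack

variable {E : Type*} [NormedAddCommGroup E] {W f : ℝ → E → ℝ}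

/-- The short-time Harnack inequality on `[0, T]`, localised to balls: with `C₀` uniform in the
radius `R`, the excess is nonpositive for all small time lags. -/
def HasShortTimeHarnack (W : ℝ → E → ℝ) (k₁ T C₀ : ℝ) : Prop :=
  ∀ R ≥ 1, ∃ τ₀ > 0, ∀ τ ∈ Ioc 0 τ₀, ∀ t ∈ Icc 0 T, ∀ x, ‖x‖ < R →
    ∀ y ∈ Metric.closedBall 0 (2 * R), excess W k₁ (C₀ * R ^ 2) R τ t x y ≤ 0

theorem lag_mul_pow_le {B K N s τ τ₀ : ℝ} (hB : 0 ≤ B) (hK : 1 ≤ K) (hN : 0 ≤ N)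
    (hτ : 0 ≤ τ) (hττ₀ : τ ≤ τ₀) (hτ₀ : B ^ 2 * N ^ 3 * τ₀ ≤ 1) (hbar : τ * K * s ^ 4 ≤ N) :
    B * K * (τ ^ 2 * s ^ 6) ≤ 1 := by
  have hcube : (τ * K * s ^ 4) ^ 3 ≤ N ^ 3 := by gcongr
  have hsq : (B * K * (τ ^ 2 * s ^ 6)) ^ 2 ≤ 1 := calc
    (B * K * (τ ^ 2 * s ^ 6)) ^ 2 ≤ (B * K * (τ ^ 2 * s ^ 6)) ^ 2 * K :=
      le_mul_of_one_le_right (by positivity) hK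
    _ = B ^ 2 * (τ * K * s ^ 4) ^ 3 * τ := by ring
    _ ≤ B ^ 2 * N ^ 3 * τ₀ := by gcongr
    _ ≤ 1 := hτ₀
  exact (sq_le_one_iff₀ (by positivity)).1 hsq

theorem excess_zero_nonpos {k₁ C₁ K R τ : ℝ} {x y : E} (hR : 0 < R) (hτ : 0 ≤ τ) (hx : ‖x‖ < R)
    (hK : 0 ≤ K) (hC₁ : C₁ ≤ K) (h : W τ x - W 0 y ≤ ‖x - y‖ ^ 2 / (k₁ * τ) + τ * C₁) :
    excess W k₁ K R τ 0 x y ≤ 0 := by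
  have hs := one_le_pow₀ (n := 4)
    (one_le_inv_one_sub (by positivity) ((barrier_pos_iff hR).2 hx))
  have hKs := mul_le_mul_of_nonneg_left (hC₁.trans (le_mul_of_one_le_right hK hs)) hτ
  rw [excess, zero_add]
  linarith

theorem exists_forall_abs_le_of_norm_le [ProperSpace E]
    (hW : ContinuousOn (fun q : ℝ × E => W q.1 q.2) (Ici 0 ×ˢ univ)) (T r : ℝ) :
    ∃ N ≥ 0, ∀ t ∈ Icc 0 T, ∀ x, ‖x‖ ≤ r → |W t x| ≤ N := by
  obtain ⟨N, hN⟩ := (isCompact_Icc.prod (isCompact_closedBall (0 : E) r))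
    |>.exists_bound_of_continuousOn
      (hW.mono (prod_mono (Icc_subset_Ici_self : Icc 0 T ⊆ Ici 0) (subset_univ _)))
  exact ⟨|N|, abs_nonneg N, fun t ht x hx =>
    (hN (t, x) ⟨ht, mem_closedBall_zero_iff.2 hx⟩).trans (le_abs_self N)⟩

theorem dist_lt_one_and_lag_mul_pow_le {B K R N M τ t : ℝ} {x y : E} (hk₁ : 0 < k₁) (hB : 0 ≤ B)
    (hK : 1 ≤ K) (hR : 0 < R) (hM : M = 1 + 2 * N * k₁ + B ^ 2 * (2 * N) ^ 3)
    (hτ : τ ∈ Ioc 0 M⁻¹) (hx : ‖x‖ < R) (hN : |W (t + τ) x| ≤ N) (hN' : |W t y| ≤ N)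
    (hpos : 0 ≤ excess W k₁ K R τ t x y) :
    ‖x - y‖ < 1 ∧ B * K * (τ ^ 2 * (1 - (R ^ 2)⁻¹ * ‖x‖ ^ 2)⁻¹ ^ 6) ≤ 1 := by
  have hN₀ : 0 ≤ N := (abs_nonneg _).trans hN
  have hk₀ : 0 ≤ 2 * N * k₁ := by positivity
  have hB₀ : 0 ≤ B ^ 2 * (2 * N) ^ 3 := by positivity
  have hM₀ : 0 < M := by linarith
  have hle {a : ℝ} (ha : a ≤ M) : a * M⁻¹ ≤ 1 :=
    (mul_le_mul_of_nonneg_right ha (inv_nonneg.2 hM₀.le)).trans_eq (mul_inv_cancel₀ hM₀.ne')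
  obtain ⟨hxy, hbar⟩ := bounds_of_excess_pos hk₁ (by linarith) hR hτ.1 hx hN hN' hpos
  refine ⟨lt_of_pow_lt_pow_left₀ 2 zero_le_one ?_,
    lag_mul_pow_le hB hK (by positivity) hτ.1.le hτ.2 (hle (by linarith)) hbar⟩
  have hτM : 2 * N * k₁ * τ ≤ 2 * N * k₁ * M⁻¹ := mul_le_mul_of_nonneg_left hτ.2 hk₀
  have hsum : (2 * N * k₁ + 1) * M⁻¹ ≤ 1 := hle (by linarith)
  linarith [inv_pos.2 hM₀]

variable [InnerProductSpace ℝ E] [FiniteDimensional ℝ E] {k : ℝ → ℝ}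
  {ν k₁ k₂ Lk Cf T C₁ : ℝ}

theorem nonempty_maxPoint_of_forall_le {K R τ τ₀ t : ℝ} {x y : E} (hW : IsViscousHJ ν k f W)
    (hd : IsQuadraticData k f (T + 1) k₁ k₂ Lk Cf) (hk₁ : 0 < k₁) (hK : 0 ≤ K) (hR : 1 ≤ R)
    (hτ : τ ∈ Ioc 0 τ₀) (hτ₁ : τ ≤ 1) (ht : t ∈ Ioc 0 T) (hx : ‖x‖ < R) (hy : ‖y‖ < 2 * R)
    (hmax : ∀ τ' ∈ Ioc 0 τ₀, ∀ t' ∈ Icc 0 T, ∀ x', ‖x'‖ < R →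
      ∀ y' ∈ Metric.closedBall 0 (2 * R),
        excess W k₁ K R τ' t' x' y' ≤ excess W k₁ K R τ t x y) :
    Nonempty (MaxPoint ν k₁ k₂ Lk Cf (8 * Module.finrank ℝ E + 80) (Module.finrank ℝ E + 1) K R
      (1 - (R ^ 2)⁻¹ * ‖x‖ ^ 2)⁻¹ (2 / (k₁ * τ) * ‖x - y‖) τ) := by
  refine nonempty_maxPoint hW hd hk₁ hK hR hτ.1 ht.1 (by linarith [ht.2]) hx hy.le ?_ ?_ ?_
  · have hx' : ∀ᶠ z : E × E in 𝓝 (x, y), ‖z.1‖ < R :=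
      continuous_fst.norm.continuousAt.eventually_lt continuousAt_const hx
    have hy' : ∀ᶠ z : E × E in 𝓝 (x, y), ‖z.2‖ < 2 * R :=
      continuous_snd.norm.continuousAt.eventually_lt continuousAt_const hy
    filter_upwards [hx', hy'] with z hz₁ hz₂
    exact hmax τ hτ t (Ioc_subset_Icc_self ht) _ hz₁ _ (mem_closedBall_zero_iff.2 hz₂.le)
  · filter_upwards [Ioo_mem_nhdsLT ht.1] with u hu
    exact hmax τ hτ u ⟨hu.1.le, hu.2.le.trans ht.2⟩ x hx y (mem_closedBall_zero_iff.2 hy.le)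
  · filter_upwards [Ioo_mem_nhdsLT hτ.1] with u hu
    exact hmax u ⟨hu.1, hu.2.le.trans hτ.2⟩ t (Ioc_subset_Icc_self ht) x hx y
      (mem_closedBall_zero_iff.2 hy.le)

theorem exists_hasShortTimeHarnack (hW : IsViscousHJ ν k f W)
    (hd : IsQuadraticData k f (T + 1) k₁ k₂ Lk Cf) (hν : 0 < ν) (hk₁ : 0 < k₁) (hk₂ : 0 ≤ k₂)
    (hLk : 0 ≤ Lk) (hCf : 0 ≤ Cf)
    (hinit : ∀ R ≥ 1, ∀ τ ∈ Ioc 0 1, ∀ x ∈ Metric.closedBall 0 R,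
      ∀ y ∈ Metric.closedBall 0 (2 * R),
        W τ x - W 0 y ≤ ‖x - y‖ ^ 2 / (k₁ * τ) + τ * (C₁ * R ^ 2)) :
    ∃ C₀ ≥ 0, HasShortTimeHarnack W k₁ T C₀ := by
  obtain ⟨B, hB, hempty⟩ := exists_forall_isEmpty_maxPoint (c := 8 * Module.finrank ℝ E + 80)
    (q := Module.finrank ℝ E + 1) hν hk₁ hk₂ hLk hCf (by positivity) (by positivity)
  refine ⟨B + |C₁|, by positivity, fun R hR => ?_⟩
  obtain ⟨N, hN₀, hN⟩ := exists_forall_abs_le_of_norm_le hW.continuousOn (T + 1) (2 * R)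
  have hR₂ : 1 ≤ R ^ 2 := one_le_pow₀ hR
  have hBK : B * R ^ 2 ≤ (B + |C₁|) * R ^ 2 := by gcongr; simp
  have hC₁K : C₁ * R ^ 2 ≤ (B + |C₁|) * R ^ 2 := by gcongr; linarith [le_abs_self C₁]
  set K := (B + |C₁|) * R ^ 2
  have hK : 1 ≤ K := (one_le_mul_of_one_le_of_one_le hB hR₂).trans hBK
  set M := 1 + 2 * N * k₁ + B ^ 2 * (2 * N) ^ 3 with hM
  have hM₁ : M⁻¹ ≤ 1 := inv_le_one_of_one_le₀
    (by linarith [show 0 ≤ 2 * N * k₁ + B ^ 2 * (2 * N) ^ 3 by positivity])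
  refine ⟨M⁻¹, by positivity, ?_⟩
  by_contra! hcon
  obtain ⟨_, hτ', _, ht', _, hx', _, hy', hpos'⟩ := hcon
  obtain ⟨τ, hτ, t, ht, x, y, hx, hy, hpos, hmax⟩ := exists_max_of_excess_pos hW.continuousOn hk₁
    (by linarith) (by linarith) hM₁ hτ' ht' hx' hy' hpos'
  have hτ₁ : τ ≤ 1 := hτ.2.trans hM₁
  obtain ⟨hxy, hlag⟩ := dist_lt_one_and_lag_mul_pow_le hk₁ (by linarith) hK (by linarith) hM hτ hx
    (hN (t + τ) ⟨add_nonneg ht.1 hτ.1.le, add_le_add ht.2 hτ₁⟩ x (by linarith))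
    (hN t ⟨ht.1, by linarith [ht.2]⟩ y (mem_closedBall_zero_iff.1 hy)) hpos.le
  rcases ht.1.eq_or_lt with rfl | ht₀
  · exact hpos.not_ge (excess_zero_nonpos (by linarith) hτ.1.le hx (by linarith) hC₁K
      (hinit R hR τ ⟨hτ.1, hτ₁⟩ x (mem_closedBall_zero_iff.2 hx.le) y hy))
  · have hyR : ‖y‖ < 2 * R := by linarith [norm_le_norm_add_norm_sub x y]
    have hs := one_le_inv_one_sub (by positivity) ((barrier_pos_iff (by linarith)).2 hx)
    exact (nonempty_maxPoint_of_forall_le hW hd hk₁ (by linarith) hR hτ hτ₁ ⟨ht₀, ht.2⟩ hx hyR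
      hmax).elim (hempty K R _ _ τ hR hs (by have := hτ.1; positivity) hτ.1 hBK hlag).false

end Harnack

section Chain

variable {E : Type*} [NormedAddCommGroup E] {W : ℝ → E → ℝ} {k₁ K R T C₀ τ t : ℝ} {x y : E}

theorem le_of_excess_nonpos (hτ : 0 ≤ τ) (hK : 0 ≤ K) (hR : 0 < R) (hx : ‖x‖ ≤ R / 2)
    (h : excess W k₁ K R τ t x y ≤ 0) :
    W (t + τ) x ≤ W t y + ‖x - y‖ ^ 2 / (k₁ * τ) + 4 * τ * K := by
  have hxR : (R ^ 2)⁻¹ * ‖x‖ ^ 2 ≤ 1 / 4 := by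
    rw [inv_mul_le_iff₀ (by positivity)]
    calc ‖x‖ ^ 2 ≤ (R / 2) ^ 2 := by gcongr
      _ = R ^ 2 * (1 / 4) := by ring
  have hs : (1 - (R ^ 2)⁻¹ * ‖x‖ ^ 2)⁻¹ ^ 4 ≤ 4 := calc
    (1 - (R ^ 2)⁻¹ * ‖x‖ ^ 2)⁻¹ ^ 4 ≤ (3 / 4 : ℝ)⁻¹ ^ 4 := by
      gcongr
      · exact inv_nonneg.2 (by linarith)
      · linarith
    _ ≤ 4 := by norm_num
  have hbar := mul_le_mul_of_nonneg_left hs (mul_nonneg hτ hK)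
  rw [excess] at h
  linarith

variable [NormedSpace ℝ E]

theorem norm_lineMap_add_one_div_sub_lineMap (x y : E) (r : ℝ) {n : ℝ} (hn : 0 < n) :
    ‖AffineMap.lineMap y x ((r + 1) / n) - AffineMap.lineMap y x (r / n)‖ = ‖x - y‖ / n := by
  rw [← dist_eq_norm, dist_lineMap_lineMap, dist_comm y x, dist_eq_norm x y, Real.dist_eq, add_div,
    add_sub_cancel_left, abs_of_pos (by positivity), one_div_mul_eq_div]

theorem HasShortTimeHarnack.le_add (h : HasShortTimeHarnack W k₁ T C₀) (hC₀ : 0 ≤ C₀) {t' : ℝ}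
    (ht : 0 ≤ t) (htt' : t < t') (ht' : t' ≤ T) (hR : 1 ≤ R) (hx : ‖x‖ ≤ R / 2)
    (hy : ‖y‖ ≤ R / 2) :
    W t' x ≤ W t y + ‖x - y‖ ^ 2 / (k₁ * (t' - t)) + 4 * (t' - t) * (C₀ * R ^ 2) := by
  obtain ⟨τ₀, hτ₀, hharnack⟩ := h R hR
  have hL : 0 < t' - t := sub_pos.2 htt'
  obtain ⟨n, hn⟩ := exists_nat_gt ((t' - t) / τ₀)
  have hn₀ : (0 : ℝ) < n := (by positivity : 0 < (t' - t) / τ₀).trans hn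
  set τ := (t' - t) / n with hτ_def
  have hτ : τ ∈ Ioc 0 τ₀ := ⟨by positivity, (div_le_iff₀ hn₀).2 ((div_lt_iff₀' hτ₀).1 hn).le⟩
  have hnτ : t + n * τ = t' := by rw [hτ_def]; field_simp; ring
  set z : ℕ → E := fun j => AffineMap.lineMap y x (j / n : ℝ)
  have hz {j : ℕ} (hj : j ≤ n) : ‖z j‖ ≤ R / 2 := mem_closedBall_zero_iff.1 <|
    (convex_closedBall 0 (R / 2)).lineMap_mem (mem_closedBall_zero_iff.2 hy)
      (mem_closedBall_zero_iff.2 hx)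
      ⟨by positivity, (div_le_one hn₀).2 (Nat.cast_le.2 hj)⟩
  have hzz (j : ℕ) : ‖z (j + 1) - z j‖ = ‖x - y‖ / n := by
    simpa [z] using norm_lineMap_add_one_div_sub_lineMap x y j hn₀
  have hchain (j : ℕ) (hj : j ≤ n) : W (t + j * τ) (z j) ≤
      W t y + j * ((‖x - y‖ / n) ^ 2 / (k₁ * τ) + 4 * τ * (C₀ * R ^ 2)) := by
    induction j with
    | zero => simp [z]
    | succ j ih =>
      have hjτ : (j : ℝ) * τ ≤ n * τ :=
        mul_le_mul_of_nonneg_right (Nat.cast_le.2 (Nat.le_of_succ_le hj)) hτ.1.le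
      have hstep := le_of_excess_nonpos hτ.1.le (by positivity) (by linarith) (hz hj)
        (hharnack τ hτ (t + j * τ) ⟨by have := hτ.1; positivity, by linarith⟩ (z (j + 1))
          (by linarith [hz hj]) (z j)
          (mem_closedBall_zero_iff.2 (by linarith [hz (Nat.le_of_succ_le hj)])))
      rw [hzz] at hstep
      push_cast
      rw [add_one_mul (j : ℝ) τ, ← add_assoc]
      linarith [ih (Nat.le_of_succ_le hj)]
  have := hchain n le_rfl
  have hzn : z n = x := by simp [z, hn₀.ne']
  rw [hzn, hnτ] at this
  convert this using 1
  rw [hτ_def]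
  field_simp
  ring

theorem HasShortTimeHarnack.exists_forall_neg_le (h : HasShortTimeHarnack W k₁ (T + 1) C₀)
    (hk₁ : 0 < k₁) (hC₀ : 0 ≤ C₀) :
    ∃ C, ∀ t ∈ Icc 0 T, ∀ y, -(C * (1 + ‖y‖ ^ 2)) ≤ W t y := by
  refine ⟨|W (T + 1) 0| + k₁⁻¹ + 32 * (T + 1) * C₀, fun t ht y => ?_⟩
  have hy := norm_nonneg y
  have hL : 1 ≤ T + 1 - t := by linarith [ht.2]
  have := h.le_add hC₀ (R := 2 * ‖y‖ + 2) (x := 0) (y := y) ht.1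
    (by linarith [ht.2] : t < T + 1) le_rfl (by linarith) (by simp; linarith) (by linarith)
  rw [zero_sub, norm_neg] at this
  have hpen : ‖y‖ ^ 2 / (k₁ * (T + 1 - t)) ≤ k₁⁻¹ * ‖y‖ ^ 2 := by
    rw [div_eq_inv_mul]
    gcongr
    exact le_mul_of_one_le_right hk₁.le hL
  have hR : (2 * ‖y‖ + 2) ^ 2 ≤ 8 * (1 + ‖y‖ ^ 2) := by nlinarith [sq_nonneg (‖y‖ - 1)]
  have hbar : 4 * (T + 1 - t) * (C₀ * (2 * ‖y‖ + 2) ^ 2) ≤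
      4 * (T + 1) * (C₀ * (8 * (1 + ‖y‖ ^ 2))) := by
    have := ht.1
    gcongr <;> linarith
  have : 0 ≤ |W (T + 1) 0| * ‖y‖ ^ 2 + k₁⁻¹ := by positivity
  linarith [neg_abs_le (W (T + 1) 0)]

end Chain

end TwoPoint

section Growth

variable {E : Type*} [NormedAddCommGroup E] {W f : ℝ → E → ℝ} {G : E → E} {k : ℝ → ℝ}
  {ν k₁ k₂ T A C b : ℝ}

theorem TwoPoint.IsQuadraticData.le_mul (hd : IsQuadraticData k f T k₁ k₂ A C) {t : ℝ}
    (ht : t ∈ Icc 0 T) (x : E) : f t x ≤ C * (1 + ‖x‖ ^ 2) := by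
  have hx : ‖x‖ ≤ √(1 + ‖x‖ ^ 2) := Real.le_sqrt_of_sq_le (by linarith)
  have := hd.f_le t ht √(1 + ‖x‖ ^ 2) (Real.one_le_sqrt.2 (by simp)) x
    (mem_closedBall_zero_iff.2 hx)
  rwa [Real.sq_sqrt (by positivity)] at this

variable [InnerProductSpace ℝ E]

theorem sub_le_of_hasTangentBound_initial (hk₁ : 0 < k₁) (hA : 0 ≤ A) (hC : 0 ≤ C)
    (hl : HasTangentBound (W 0) G 0) (hG : ∀ x, ‖G x‖ ^ 2 ≤ C * (1 + ‖x‖ ^ 2)) {R τ : ℝ}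
    (hR : 1 ≤ R) (hτ : 0 < τ) {x : E} (hx : ‖x‖ ≤ R) (y : E)
    (hup : W τ x ≤ W 0 x + A * (1 + ‖x‖ ^ 2) * τ) :
    W τ x - W 0 y ≤ ‖x - y‖ ^ 2 / (k₁ * τ) + τ * ((2 * A + k₁ * C / 2) * R ^ 2) := by
  have hxR : 1 + ‖x‖ ^ 2 ≤ 2 * R ^ 2 := by
    linarith [one_le_pow₀ hR (n := 2), pow_le_pow_left₀ (norm_nonneg x) hx 2]
  have htangent := hl.add_inner_le x y
  rw [← neg_sub x y, inner_neg_right] at htangent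
  have hyoung : ‖G x‖ * ‖x - y‖ ≤ ‖x - y‖ ^ 2 / (k₁ * τ) + k₁ * τ / 4 * ‖G x‖ ^ 2 := by
    have : 0 ≤ (‖x - y‖ - k₁ * τ / 2 * ‖G x‖) ^ 2 / (k₁ * τ) := by positivity
    have hsq : (‖x - y‖ - k₁ * τ / 2 * ‖G x‖) ^ 2 / (k₁ * τ) =
        ‖x - y‖ ^ 2 / (k₁ * τ) + k₁ * τ / 4 * ‖G x‖ ^ 2 - ‖G x‖ * ‖x - y‖ := by
      field_simp
      ring
    linarith
  have hGx : k₁ * τ / 4 * ‖G x‖ ^ 2 ≤ k₁ * τ / 4 * (C * (2 * R ^ 2)) := by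
    gcongr
    exact (hG x).trans (mul_le_mul_of_nonneg_left hxR hC)
  have hAx : A * (1 + ‖x‖ ^ 2) * τ ≤ A * (2 * R ^ 2) * τ := by gcongr
  linarith [real_inner_le_norm (G x) (x - y)]

variable [FiniteDimensional ℝ E]

theorem IsViscousHJ.exists_forall_le_add (hW : IsViscousHJ ν k f W) (hν : 0 < ν) (hk₁ : 0 < k₁)
    (hk₂ : 0 ≤ k₂) (hk : ∀ t ∈ Icc 0 T, k t ∈ Icc k₁ k₂) (hC : 0 ≤ C)
    (hf : ∀ t ∈ Icc 0 T, ∀ x, f t x ≤ C * (1 + ‖x‖ ^ 2)) (hb : 0 ≤ b)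
    (hu : HasTangentBound (-W 0) (-G) (-b)) (hG : ∀ x, ‖G x‖ ^ 2 ≤ A * (1 + ‖x‖ ^ 2))
    (hA : 0 ≤ A) :
    ∃ B ≥ 0, ∀ t ∈ Icc 0 T, ∀ x, W t x ≤ W 0 x + B * (1 + ‖x‖ ^ 2) * t := by
  set n : ℝ := (Module.finrank ℝ E : ℝ)
  set B₀ := ν * b * n + (ν * (2 * n + 8)) ^ 2 / k₁
  have : 0 ≤ B₀ := by positivity
  refine ⟨B₀ + k₂ * A + 3 * C + 1, by positivity, fun t ht a => ?_⟩
  refine hW.le_add_mul_of_le_quadratic hν hk₁ hk a (G a) (div_nonneg hb zero_le_two)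
    (D := 3 * C * (1 + ‖a‖ ^ 2)) (fun t ht x hx => ?_) (fun x _ => hu.le_add_inner a x) ?_ ht
  · have hxa : ‖x‖ ≤ ‖a‖ + 1 := by
      linarith [norm_le_norm_add_norm_sub' x a, mem_closedBall_iff_norm.1 hx]
    have hx₂ : 1 + ‖x‖ ^ 2 ≤ 3 * (1 + ‖a‖ ^ 2) := by
      linarith [pow_le_pow_left₀ (norm_nonneg x) hxa 2, sq_nonneg (‖a‖ - 1), sq_nonneg ‖a‖]
    linarith [hf t ht x, mul_le_mul_of_nonneg_left hx₂ hC]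
  · have : k₂ * ‖G a‖ ^ 2 ≤ k₂ * (A * (1 + ‖a‖ ^ 2)) := by gcongr; exact hG a
    have : 0 ≤ (B₀ + 1) * ‖a‖ ^ 2 := by positivity
    linarith

theorem IsViscousHJ.exists_forall_abs_le (hW : IsViscousHJ ν k f W) {Lk Cf : ℝ} (hT : 0 ≤ T)
    (hd : TwoPoint.IsQuadraticData k f (T + 1 + 1) k₁ k₂ Lk Cf) (hν : 0 < ν) (hk₁ : 0 < k₁)
    (hk₂ : 0 ≤ k₂) (hLk : 0 ≤ Lk) (hCf : 0 ≤ Cf) (hb : 0 < b) (hl : HasTangentBound (W 0) G 0)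
    (hu : HasTangentBound (-W 0) (-G) (-b)) :
    ∃ C ≥ 0, ∀ t ∈ Icc 0 T, ∀ x, |W t x| ≤ C * (1 + ‖x‖ ^ 2) := by
  obtain ⟨A, hA, hgrowth⟩ := hl.exists_growth hu hb
  obtain ⟨B, hB, hup⟩ := hW.exists_forall_le_add hν hk₁ hk₂ hd.k_mem hCf
    (fun t ht => hd.le_mul ht) hb.le hu (fun x => (hgrowth x).2) hA
  obtain ⟨C₀, hC₀, hharnack⟩ := TwoPoint.exists_hasShortTimeHarnack hW hd hν hk₁ hk₂ hLk hCf
    fun R hR τ hτ x hx y _ => sub_le_of_hasTangentBound_initial hk₁ hB hA hl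
      (fun x => (hgrowth x).2) hR hτ.1 (mem_closedBall_zero_iff.1 hx) y
      (hup τ ⟨hτ.1.le, by linarith [hτ.2]⟩ x)
  obtain ⟨C, hlow⟩ := hharnack.exists_forall_neg_le hk₁ hC₀
  refine ⟨|C| + A + B * T, by positivity, fun t ht x => abs_le.2 ⟨?_, ?_⟩⟩
  · have hC : C * (1 + ‖x‖ ^ 2) ≤ |C| * (1 + ‖x‖ ^ 2) := by gcongr; exact le_abs_self C
    have : 0 ≤ (A + B * T) * (1 + ‖x‖ ^ 2) := by positivity
    linarith [hlow t ht x]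
  · have hBT : B * (1 + ‖x‖ ^ 2) * t ≤ B * (1 + ‖x‖ ^ 2) * T := by gcongr; exact ht.2
    have : 0 ≤ |C| * (1 + ‖x‖ ^ 2) := by positivity
    linarith [hup t ⟨ht.1, by linarith [ht.2]⟩ x, (abs_le.1 (hgrowth x).1).2]

end Growth

section Discounted

variable {E : Type*} [NormedAddCommGroup E] [InnerProductSpace ℝ E] {v : ℝ → E → ℝ} {g : E → ℝ}
  {G₀ Gg : E → E} {ν κ γ T b c : ℝ}

theorem IsViscousHJ.exp_mul (hv : IsViscousHJ ν (fun _ => κ) (fun t x => g x - γ * v t x) v) :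
    IsViscousHJ ν (fun t => κ * exp (-(γ * t))) (fun t x => exp (γ * t) * g x)
      (fun t x => exp (γ * t) * v t x) := by
  refine ⟨ContinuousOn.mul (by fun_prop) hv.continuousOn, fun t ht x => ?_⟩
  obtain ⟨p, L, hp, hvt⟩ := hv.eq t ht x
  refine ⟨exp (γ * t) • p, exp (γ * t) * L, hp.const_mul _, ?_⟩
  refine (((hasDerivAt_id t).const_mul γ).exp.fun_mul hvt).congr_deriv ?_
  have hexp : exp (-(γ * t)) * exp (γ * t) ^ 2 = exp (γ * t) := by
    rw [pow_two, ← mul_assoc, ← exp_add]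
    simp
  rw [norm_smul, mul_pow, Real.norm_eq_abs, sq_abs, mul_assoc κ, ← mul_assoc (exp (-(γ * t))), hexp]
  simp only [id]
  ring

theorem exp_mul_sub_exp_mul_le (γ s t : ℝ) :
    exp (γ * t) - exp (γ * s) ≤ exp (γ * t) * (γ * (t - s)) := by
  have := mul_le_mul_of_nonneg_left (one_sub_le_exp_neg (γ * (t - s))) (exp_pos (γ * t)).le
  rw [← exp_add, show γ * t + -(γ * (t - s)) = γ * s by ring] at this
  linarith

theorem sub_le_of_hasTangentBound {C R : ℝ} (hC : 0 ≤ C) (hg : HasTangentBound g Gg 0)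
    (hGg : ∀ x, ‖Gg x‖ ^ 2 ≤ C * (1 + ‖x‖ ^ 2)) (hR : 1 ≤ R) {x : E} (hx : ‖x‖ ≤ R) (y : E) :
    g x - g y ≤ (1 + 2 * C) * R * ‖x - y‖ := by
  have hxR : 1 + ‖x‖ ^ 2 ≤ 2 * R ^ 2 := by
    linarith [one_le_pow₀ hR (n := 2), pow_le_pow_left₀ (norm_nonneg x) hx 2]
  have htangent := hg.add_inner_le x y
  rw [← neg_sub x y, inner_neg_right] at htangent
  have hG : ‖Gg x‖ ≤ (1 + 2 * C) * R := by
    refine le_of_sq_le_sq ?_ (by positivity)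
    have : 0 ≤ (1 + 2 * C + 4 * C ^ 2) * R ^ 2 := by positivity
    linarith [hGg x, mul_le_mul_of_nonneg_left hxR hC]
  linarith [real_inner_le_norm (Gg x) (x - y), mul_le_mul_of_nonneg_right hG (norm_nonneg (x - y))]

theorem exp_mul_sub_exp_mul_le_of_hasTangentBound {C R s t : ℝ} (hγ : 0 ≤ γ) (hC : 0 ≤ C)
    (hg : HasTangentBound g Gg 0) (hgrowth : ∀ x, |g x| ≤ C * (1 + ‖x‖ ^ 2) ∧
      ‖Gg x‖ ^ 2 ≤ C * (1 + ‖x‖ ^ 2)) (hst : s ≤ t) (hR : 1 ≤ R) {x : E} (hx : ‖x‖ ≤ R) (y : E) :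
    exp (γ * t) * g x - exp (γ * s) * g y ≤
      exp (γ * t) * (2 * γ * C * ((t - s) * R ^ 2) + (1 + 2 * C) * (R * ‖x - y‖)) := by
  have hxR : 1 + ‖x‖ ^ 2 ≤ 2 * R ^ 2 := by
    linarith [one_le_pow₀ hR (n := 2), pow_le_pow_left₀ (norm_nonneg x) hx 2]
  have : 0 ≤ γ * (t - s) := mul_nonneg hγ (sub_nonneg.2 hst)
  have hexp : exp (γ * s) ≤ exp (γ * t) := by gcongr
  have htime : (exp (γ * t) - exp (γ * s)) * g x ≤
      exp (γ * t) * (γ * (t - s)) * (C * (2 * R ^ 2)) := calc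
    _ ≤ (exp (γ * t) - exp (γ * s)) * (C * (2 * R ^ 2)) := by
      gcongr
      exact (le_abs_self _).trans ((hgrowth x).1.trans (by gcongr))
    _ ≤ _ := by gcongr; exact exp_mul_sub_exp_mul_le γ s t
  have hspace : exp (γ * s) * (g x - g y) ≤ exp (γ * t) * ((1 + 2 * C) * R * ‖x - y‖) := calc
    _ ≤ exp (γ * s) * ((1 + 2 * C) * R * ‖x - y‖) := by
      gcongr
      exact sub_le_of_hasTangentBound hC hg (fun x => (hgrowth x).2) hR hx y
    _ ≤ _ := by gcongr
  linarith

theorem isQuadraticData_exp {C : ℝ} (hκ : 0 ≤ κ) (hγ : 0 ≤ γ) (hC : 0 ≤ C)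
    (hg : HasTangentBound g Gg 0) (hgrowth : ∀ x, |g x| ≤ C * (1 + ‖x‖ ^ 2) ∧
      ‖Gg x‖ ^ 2 ≤ C * (1 + ‖x‖ ^ 2)) :
    TwoPoint.IsQuadraticData (fun t => κ * exp (-(γ * t))) (fun t x => exp (γ * t) * g x) T
      (κ * exp (-(γ * T))) κ (κ * γ) (exp (γ * T) * (2 * γ * C + 2 * C + 1)) where
  k_mem t ht := ⟨by gcongr; exact ht.2, mul_le_of_le_one_right hκ
    (exp_le_one_iff.2 (neg_nonpos.2 (mul_nonneg hγ ht.1)))⟩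
  k_sub_le s hs t ht := by
    have hexp := exp_mul_sub_exp_mul_le γ (-t) (-s)
    have hle : exp (γ * -s) ≤ 1 := exp_le_one_iff.2 (by linarith [mul_nonneg hγ hs.1])
    have hγst : 0 ≤ γ * (t - s) := mul_nonneg hγ (sub_nonneg.2 ht.1)
    rw [← mul_neg, ← mul_neg, ← mul_sub, mul_assoc]
    refine mul_le_mul_of_nonneg_left (hexp.trans ?_) hκ
    linarith [mul_le_mul_of_nonneg_right hle hγst]
  f_le t ht R hR x hx := by
    have hxR : 1 + ‖x‖ ^ 2 ≤ 2 * R ^ 2 := by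
      linarith [one_le_pow₀ hR (n := 2),
        pow_le_pow_left₀ (norm_nonneg x) (mem_closedBall_zero_iff.1 hx) 2]
    have hgx : g x ≤ C * (2 * R ^ 2) :=
      (le_abs_self _).trans ((hgrowth x).1.trans (by gcongr))
    calc exp (γ * t) * g x ≤ exp (γ * t) * (C * (2 * R ^ 2)) := by gcongr
      _ ≤ exp (γ * T) * (C * (2 * R ^ 2)) := by gcongr; exact ht.2
      _ ≤ _ := by linarith [show 0 ≤ exp (γ * T) * (2 * γ * C + 1) * R ^ 2 by positivity]
  f_sub_le s _ t ht R hR x hx y _ := by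
    have : 0 ≤ R := zero_le_one.trans hR
    have hst : 0 ≤ t - s := sub_nonneg.2 ht.1
    refine (exp_mul_sub_exp_mul_le_of_hasTangentBound hγ hC hg hgrowth ht.1 hR
      (mem_closedBall_zero_iff.1 hx) y).trans ?_
    rw [mul_assoc (exp (γ * T))]
    refine mul_le_mul (by gcongr; exact ht.2) ?_ (by positivity) (exp_pos _).le
    linarith [show 0 ≤ (2 * C + 1) * ((t - s) * R ^ 2) by positivity,
      show 0 ≤ 2 * γ * C * (R * ‖x - y‖) by positivity]

variable [FiniteDimensional ℝ E]

theorem IsViscousHJ.exists_forall_abs_le_of_discounted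
    (hv : IsViscousHJ ν (fun _ => κ) (fun t x => g x - γ * v t x) v) (hν : 0 < ν) (hκ : 0 < κ)
    (hγ : 0 ≤ γ) (hT : 0 ≤ T) (hb : 0 < b) (hc : 0 < c)
    (hvl : HasTangentBound (v 0) G₀ 0) (hvu : HasTangentBound (-v 0) (-G₀) (-b))
    (hgl : HasTangentBound g Gg 0) (hgu : HasTangentBound (-g) (-Gg) (-c)) :
    ∃ C ≥ 0, ∀ t ∈ Icc 0 T, ∀ x, |v t x| ≤ C * (1 + ‖x‖ ^ 2) := by
  obtain ⟨Cg, hCg, hgrowth⟩ := hgl.exists_growth hgu hc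
  have hinit : (fun x => exp (γ * 0) * v 0 x) = v 0 := by simp
  obtain ⟨C, hC, hbound⟩ := hv.exp_mul.exists_forall_abs_le hT
    (isQuadraticData_exp hκ.le hγ hCg hgl hgrowth) hν (by positivity) hκ.le (by positivity)
    (by positivity) hb (by rwa [hinit]) (by rwa [hinit])
  refine ⟨C, hC, fun t ht x => le_trans ?_ (hbound t ht x)⟩
  rw [abs_mul, abs_of_pos (exp_pos _)]
  exact le_mul_of_one_le_left (abs_nonneg _) (one_le_exp (mul_nonneg hγ ht.1))

end Discounted

section Subsolution

variable {E : Type*} [NormedAddCommGroup E] [InnerProductSpace ℝ E] {v : ℝ → E → ℝ} {g : E → ℝ}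
  {ν κ γ T C Cg : ℝ}

/-- `u` satisfies `∂ₜu + δ ≤ ν Δu - k |∇u|² + f - γ u` classically on `(0, T] × E`.  The sign of
`k` is free, so that a supersolution is the negative of a subsolution for `-k` and `-f`. -/
def IsViscousHJSubsolution (ν k γ T δ : ℝ) (f : E → ℝ) (u : ℝ → E → ℝ) : Prop :=
  ∀ t ∈ Ioc 0 T, ∀ x, ∃ p L a, HasGradLapAt (u t) p L x ∧ HasDerivAt (fun s => u s x) a t ∧
    a + δ ≤ ν * L - k * ‖p‖ ^ 2 + f x - γ * u t x

theorem IsViscousHJ.isViscousHJSubsolution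
    (hv : IsViscousHJ ν (fun _ => κ) (fun t x => g x - γ * v t x) v) :
    IsViscousHJSubsolution ν κ γ T 0 g v := fun t ht x => by
  obtain ⟨p, L, hp, ha⟩ := hv.eq t ht.1 x
  exact ⟨p, L, _, hp, ha, by linarith⟩

-- Squaring `w = v + B (1 + |x|²)` produces `2 κ w |∇w|²` in the gradient term, which absorbs the
-- `2 ν |∇w|²` of the Laplacian since `ν ≤ κ w`; `lam` takes care of all the terms of order `w²`.
theorem perturbation_gap_le {n r B w e z G Q lam : ℝ} (hν : 0 ≤ ν) (hκ : 0 ≤ κ) (hγ : 0 ≤ γ)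
    (hn : 0 ≤ n) (hB : 0 ≤ B) (he : 0 ≤ e) (hQ : 0 ≤ Q) (hw : 1 ≤ w) (hνw : ν ≤ κ * w)
    (hr : r ≤ w) (hG : -(Cg * w) ≤ G) (hz : z ≤ w)
    (hlam : 2 * Cg + 2 * γ + 4 * ν * B * n + 8 * κ * B ^ 2 + 1 ≤ lam) :
    e ≤ e * (2 * w * (G - γ * z) + lam * w ^ 2 + γ * w ^ 2 - 2 * ν * Q - 4 * ν * w * B * n +
      2 * κ * w * Q - 8 * κ * w * B ^ 2 * r + 4 * κ * e * w ^ 2 * Q) := by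
  have hw₀ : 0 ≤ w := zero_le_one.trans hw
  have hgrad : 2 * ν * Q ≤ 2 * κ * w * Q := by linarith [mul_le_mul_of_nonneg_right hνw hQ]
  have hsource : -(2 * Cg * w ^ 2) ≤ 2 * w * G := by
    linarith [mul_le_mul_of_nonneg_left hG hw₀]
  have hdiscount : 2 * w * (γ * z) ≤ 2 * γ * w ^ 2 := by
    linarith [mul_le_mul_of_nonneg_left hz (mul_nonneg hγ hw₀)]
  have hlap : 4 * ν * w * B * n ≤ 4 * ν * B * n * w ^ 2 := by
    linarith [mul_le_mul_of_nonneg_left hw (show 0 ≤ 4 * ν * B * n * w by positivity)]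
  have hquad : 8 * κ * w * B ^ 2 * r ≤ 8 * κ * B ^ 2 * w ^ 2 := by
    linarith [mul_le_mul_of_nonneg_left hr (show 0 ≤ 8 * κ * B ^ 2 * w by positivity)]
  refine le_mul_of_one_le_right he ?_
  linarith [mul_le_mul_of_nonneg_right hlam (sq_nonneg w), one_le_pow₀ hw (n := 2),
    show 0 ≤ 4 * κ * e * w ^ 2 * Q by positivity, show 0 ≤ γ * w ^ 2 by positivity]

theorem norm_add_smul_add_sq (p y : E) (c : ℝ) :
    ‖p + c • (p + y)‖ ^ 2 =
      ‖p‖ ^ 2 + c * (‖p‖ ^ 2 + ‖p + y‖ ^ 2 - ‖y‖ ^ 2) + c ^ 2 * ‖p + y‖ ^ 2 := by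
  have hinner : 2 * ⟪p, p + y⟫ = ‖p‖ ^ 2 + ‖p + y‖ ^ 2 - ‖y‖ ^ 2 := by
    rw [norm_add_sq_real, inner_add_right, real_inner_self_eq_norm_sq]
    ring
  rw [norm_add_sq_real p, norm_smul, mul_pow, Real.norm_eq_abs, sq_abs, inner_smul_right, ← hinner]
  ring

variable [FiniteDimensional ℝ E]

theorem HasGradLapAt.add_mul_add_sq {u : E → ℝ} {p x : E} {L : ℝ} (hu : HasGradLapAt u p L x)
    (e B : ℝ) : HasGradLapAt (fun y => u y + e * (u y + B * (1 + ‖y‖ ^ 2)) ^ 2)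
      (p + (2 * e * (u x + B * (1 + ‖x‖ ^ 2))) • (p + (2 * B) • x))
      (L + e * (2 * ‖p + (2 * B) • x‖ ^ 2 + 2 * (u x + B * (1 + ‖x‖ ^ 2)) *
        (L + 2 * B * Module.finrank ℝ E))) x := by
  have hw := hu.add (((const 1 x).add (norm_sq x)).const_mul B)
  have hsq := hw.comp_real (φ := fun r => r ^ 2) (φ' := fun r => 2 * r) (φ'' := 2)
    (.of_forall fun r => by simpa using hasDerivAt_pow 2 r)
    (((hasDerivAt_id _).const_mul 2).congr_deriv (mul_one 2))
  convert hu.add (hsq.const_mul e) using 1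
  · module
  · rw [zero_add, zero_add, smul_smul, mul_comm B 2]
    ring

/-- With `w = v + B (1 + |x|²)` positive, `v + ε exp (lam t) w²` is a strict supersolution for `lam`
large, whatever `ε > 0`, and it dominates `v` by a quartic. -/
def squarePerturbation (v : ℝ → E → ℝ) (B lam t : ℝ) (x : E) : ℝ :=
  exp (lam * t) * (v t x + B * (1 + ‖x‖ ^ 2)) ^ 2

theorem IsViscousHJ.isViscousHJSubsolution_neg_add_squarePerturbation
    (hv : IsViscousHJ ν (fun _ => κ) (fun t x => g x - γ * v t x) v) (hν : 0 ≤ ν) (hκ : 0 < κ)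
    (hγ : 0 ≤ γ) {B lam ε : ℝ} (hB : 0 ≤ B) (hlam₀ : 0 ≤ lam) (hε : 0 ≤ ε)
    (hg : ∀ x, |g x| ≤ Cg * (1 + ‖x‖ ^ 2)) (hCg : 0 ≤ Cg)
    (hw : ∀ t ∈ Ioc 0 T, ∀ x, (1 + ν / κ) * (1 + ‖x‖ ^ 2) ≤ v t x + B * (1 + ‖x‖ ^ 2))
    (hlam : 2 * Cg + 2 * γ + 4 * ν * B * Module.finrank ℝ E + 8 * κ * B ^ 2 + 1 ≤ lam) :
    IsViscousHJSubsolution ν (-κ) γ T ε (fun x => -g x)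
      (fun t x => -(v t x + ε * squarePerturbation v B lam t x)) := by
  intro t ht x
  obtain ⟨p, L, hp, hvt⟩ := hv.eq t ht.1 x
  have hexp := ((hasDerivAt_id t).const_mul lam).exp
  have hder := hvt.fun_add ((hexp.fun_mul
    ((hvt.add_const (B * (1 + ‖x‖ ^ 2))).fun_pow 2)).const_mul ε)
  have hjet := (hp.add_mul_add_sq (ε * exp (lam * t)) B).neg
  simp only [mul_assoc ε] at hjet
  refine ⟨_, _, _, hjet, hder.fun_neg, ?_⟩
  have hwx := hw t ht x
  have hBx : 0 ≤ B * (1 + ‖x‖ ^ 2) := by positivity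
  set w := v t x + B * (1 + ‖x‖ ^ 2) with hw_def
  have hνκ : (1 + ν / κ) * κ = κ + ν := by field_simp
  have hw_ge : 1 + ‖x‖ ^ 2 ≤ w := (le_mul_of_one_le_left (by positivity)
    (le_add_of_nonneg_right (by positivity))).trans hwx
  have hνw : ν ≤ κ * w := by
    have : (1 + ν / κ) * 1 ≤ (1 + ν / κ) * (1 + ‖x‖ ^ 2) := by
      gcongr
      linarith [sq_nonneg ‖x‖]
    linarith [mul_le_mul_of_nonneg_left (this.trans hwx) hκ.le]
  have hε_le : ε ≤ ε * exp (lam * t) :=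
    le_mul_of_one_le_right hε (one_le_exp (mul_nonneg hlam₀ ht.1.le))
  have hgap := perturbation_gap_le (e := ε * exp (lam * t)) (G := g x) (z := v t x) (r := ‖x‖ ^ 2)
    (Q := ‖p + (2 * B) • x‖ ^ 2) hν hκ.le hγ (Nat.cast_nonneg (Module.finrank ℝ E)) hB
    (by positivity) (by positivity) (by linarith [sq_nonneg ‖x‖]) hνw (by linarith)
    (by linarith [(abs_le.1 (hg x)).1, mul_le_mul_of_nonneg_left hw_ge hCg]) (by linarith) hlam
  rw [norm_neg, ← mul_assoc ε, norm_add_smul_add_sq, norm_smul, mul_pow (‖2 * B‖),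
    Real.norm_eq_abs, sq_abs]
  simp only [squarePerturbation, id, ← hw_def, Nat.cast_ofNat, Nat.add_one_sub_one, pow_one]
  linarith

theorem IsViscousHJ.exists_forall_isViscousHJSubsolution
    (hv : IsViscousHJ ν (fun _ => κ) (fun t x => g x - γ * v t x) v) (hν : 0 ≤ ν) (hκ : 0 < κ)
    (hγ : 0 ≤ γ) (hC : 0 ≤ C) (hCg : 0 ≤ Cg) (hg : ∀ x, |g x| ≤ Cg * (1 + ‖x‖ ^ 2))
    (hvC : ∀ t ∈ Icc 0 T, ∀ x, |v t x| ≤ C * (1 + ‖x‖ ^ 2)) :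
    ∃ h : ℝ → E → ℝ, ContinuousOn (fun q : ℝ × E => h q.1 q.2) (Ici 0 ×ˢ univ) ∧
      (∀ t ∈ Icc 0 T, ∀ x, (1 + ‖x‖ ^ 2) ^ 2 ≤ h t x) ∧
      ∀ ε ≥ 0, IsViscousHJSubsolution ν (-κ) γ T ε (fun x => -g x)
        (fun t x => -(v t x + ε * h t x)) := by
  set B := C + 1 + ν / κ
  have hw (t) (ht : t ∈ Icc 0 T) (x) :
      (1 + ν / κ) * (1 + ‖x‖ ^ 2) ≤ v t x + B * (1 + ‖x‖ ^ 2) := by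
    linarith [(abs_le.1 (hvC t ht x)).1]
  set lam := 2 * Cg + 2 * γ + 4 * ν * B * Module.finrank ℝ E + 8 * κ * B ^ 2 + 1
  have hlam : 0 ≤ lam := by positivity
  refine ⟨squarePerturbation v B lam, ?_, fun t ht x => ?_, fun ε hε =>
    hv.isViscousHJSubsolution_neg_add_squarePerturbation hν hκ hγ (by positivity) hlam hε hg hCg
      (fun t ht => hw t (Ioc_subset_Icc_self ht)) le_rfl⟩
  · have := hv.continuousOn
    unfold squarePerturbation
    fun_prop
  · have hwx : 1 + ‖x‖ ^ 2 ≤ v t x + B * (1 + ‖x‖ ^ 2) := (le_mul_of_one_le_left (by positivity)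
      (le_add_of_nonneg_right (by positivity))).trans (hw t ht x)
    exact (pow_le_pow_left₀ (by positivity) hwx 2).trans
      (le_mul_of_one_le_left (sq_nonneg _) (one_le_exp (mul_nonneg hlam ht.1)))

end Subsolution

section SecondDifference

variable {E : Type*} [NormedAddCommGroup E]

/-- The excess of `F t (m + ξ) + F t (m - ξ) + 2 G t m` over `ψ t ξ`, with `z = (m, ξ)`.  For
`G = -F` this is the excess of the second difference of `F`. -/
def secondGap (F G ψ : ℝ → E → ℝ) (t : ℝ) (z : E × E) : ℝ :=
  F t (z.1 + z.2) + F t (z.1 - z.2) + 2 * G t z.1 - ψ t z.2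

variable {F G ψ : ℝ → E → ℝ} {ν k γ T t δ δ' : ℝ}

theorem continuousOn_secondGap (hF : ContinuousOn (fun q : ℝ × E => F q.1 q.2) (Ici 0 ×ˢ univ))
    (hG : ContinuousOn (fun q : ℝ × E => G q.1 q.2) (Ici 0 ×ˢ univ))
    (hψ : ContinuousOn (fun q : ℝ × E => ψ q.1 q.2) (Icc 0 T ×ˢ univ)) :
    ContinuousOn (fun q : ℝ × E × E => secondGap F G ψ q.1 q.2) (Icc 0 T ×ˢ univ) := by
  have hcomp {u : ℝ → E → ℝ} {l : E × E → E} {s : Set ℝ}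
      (hu : ContinuousOn (fun q : ℝ × E => u q.1 q.2) (s ×ˢ univ)) (hs : Icc 0 T ⊆ s)
      (hl : Continuous l) :
      ContinuousOn (fun q : ℝ × E × E => u q.1 (l q.2)) (Icc 0 T ×ˢ univ) :=
    hu.comp (f := fun q : ℝ × E × E => (q.1, l q.2)) (by fun_prop)
      fun q hq => ⟨hs hq.1, mem_univ _⟩
  have hIci : Icc 0 T ⊆ Ici (0 : ℝ) := Icc_subset_Ici_self
  exact (((hcomp hF hIci (by fun_prop : Continuous fun z : E × E => z.1 + z.2)).add
    (hcomp hF hIci (by fun_prop : Continuous fun z : E × E => z.1 - z.2))).add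
    ((hcomp hG hIci continuous_fst).const_mul 2)).sub (hcomp hψ subset_rfl continuous_snd)

variable [InnerProductSpace ℝ E] [FiniteDimensional ℝ E]

theorem HasGradLapAt.of_isMax_secondGap {a b p q m ξ : E} {La Lb L : ℝ}
    (ha : HasGradLapAt (F t) a La (m + ξ)) (hb : HasGradLapAt (F t) b Lb (m - ξ))
    (hp : HasGradLapAt (G t) p L m) (hq : HasFDerivAt (ψ t) (innerSL ℝ q) ξ)
    (hmax : ∀ z, secondGap F G ψ t z ≤ secondGap F G ψ t (m, ξ)) :
    ‖a‖ ^ 2 + ‖b‖ ^ 2 = 2 * ‖p‖ ^ 2 + ‖q‖ ^ 2 / 2 ∧ La + Lb + 2 * L ≤ 0 := by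
  have hm : a + b + (2 : ℝ) • p = 0 ∧ La + Lb + 2 * L ≤ 0 := by
    have ha' := HasGradLapAt.comp_add_smul (x := ξ) (c := 1) (ξ := m)
      (by rwa [one_smul, add_comm])
    have hb' := HasGradLapAt.comp_add_smul (x := -ξ) (c := 1) (ξ := m)
      (by rwa [one_smul, neg_add_eq_sub])
    have := ((ha'.add hb').add (hp.const_mul 2)).eq_zero_and_nonpos_of_isLocalMax
      (.of_forall fun y => by
        have := hmax (y, ξ)
        simp only [secondGap, one_smul, neg_add_eq_sub, add_comm ξ] at this ⊢
        linarith)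
    simpa using this
  have hξ : a - b = q := by
    have ha' := (HasGradLapAt.comp_add_smul (x := m) (c := 1) (ξ := ξ)
      (by rwa [one_smul])).hasFDerivAt
    have hb' := (HasGradLapAt.comp_add_smul (x := m) (c := -1) (ξ := ξ)
      (by rwa [neg_one_smul, ← sub_eq_add_neg])).hasFDerivAt
    have hzero := IsLocalMax.hasFDerivAt_eq_zero (.of_forall fun η => by
      have := hmax (m, η)
      simp only [secondGap] at this
      simp only [Pi.add_apply, Pi.sub_apply, one_smul, neg_one_smul, ← sub_eq_add_neg]
      linarith) ((ha'.add hb').sub hq)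
    rw [one_smul, neg_one_smul, ← map_add, ← sub_eq_add_neg, sub_eq_zero] at hzero
    exact innerSL_inj.1 hzero
  refine ⟨?_, hm.2⟩
  have hnorm := parallelogram_law_with_norm ℝ a b
  rw [hξ, eq_neg_of_add_eq_zero_left hm.1, norm_neg, norm_smul, Real.norm_two] at hnorm
  linarith

variable {f : E → ℝ}

theorem IsViscousHJSubsolution.secondGap_neg_of_isMax
    (hF : IsViscousHJSubsolution ν k γ T δ f F)
    (hG : IsViscousHJSubsolution ν (-k) γ T δ' (fun x => -f x) G) (hδ : 0 < δ + δ') (hν : 0 ≤ ν)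
    (hγ : 0 ≤ γ) (ht : t ∈ Ioc 0 T) {z : E × E} {q : E} {a : ℝ}
    (hq : HasFDerivAt (ψ t) (innerSL ℝ q) z.2) (ha : HasDerivAt (fun s => ψ s z.2) a t)
    (hψ : f (z.1 + z.2) + f (z.1 - z.2) - 2 * f z.1 ≤ a + γ * ψ t z.2 + k / 2 * ‖q‖ ^ 2)
    (hmax : ∀ s ∈ Icc 0 T, ∀ z', secondGap F G ψ s z' ≤ secondGap F G ψ t z) :
    secondGap F G ψ t z < 0 := by
  obtain ⟨p₁, L₁, a₁, hp₁, ha₁, h₁⟩ := hF t ht (z.1 + z.2)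
  obtain ⟨p₂, L₂, a₂, hp₂, ha₂, h₂⟩ := hF t ht (z.1 - z.2)
  obtain ⟨p, L, a₀, hp, ha₀, h₀⟩ := hG t ht z.1
  obtain ⟨hnorm, hL⟩ := hp₁.of_isMax_secondGap hp₂ hp hq (hmax t (Ioc_subset_Icc_self ht))
  have htime : 0 ≤ a₁ + a₂ + 2 * a₀ - a := by
    refine nonneg_of_hasDerivAt_of_eventually_le_left
      (((ha₁.fun_add ha₂).fun_add (ha₀.const_mul 2)).fun_sub ha) ?_
    filter_upwards [Ioo_mem_nhdsLT ht.1] with s hs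
    exact hmax s ⟨hs.1.le, hs.2.le.trans ht.2⟩ z
  by_contra! hgap
  have hdiscount := mul_nonneg hγ hgap
  rw [secondGap] at hdiscount
  linarith [mul_nonpos_of_nonneg_of_nonpos hν hL, congr(k * $hnorm)]

theorem IsViscousHJSubsolution.secondGap_nonpos
    (hF : IsViscousHJSubsolution ν k γ T δ f F)
    (hG : IsViscousHJSubsolution ν (-k) γ T δ' (fun x => -f x) G) (hδ : 0 < δ + δ') (hν : 0 ≤ ν)
    (hγ : 0 ≤ γ)
    (hcont : ContinuousOn (fun q : ℝ × E × E => secondGap F G ψ q.1 q.2) (Icc 0 T ×ˢ univ))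
    {K : Set (E × E)} (hK : IsCompact K)
    (hsub : ∀ t ∈ Icc 0 T, ∀ z, 0 ≤ secondGap F G ψ t z → z ∈ K)
    (hinit : ∀ z, secondGap F G ψ 0 z ≤ 0)
    (hψ : ∀ t ∈ Ioc 0 T, ∀ ξ, ∃ q a, HasFDerivAt (ψ t) (innerSL ℝ q) ξ ∧
      HasDerivAt (fun s => ψ s ξ) a t ∧
      ∀ m, f (m + ξ) + f (m - ξ) - 2 * f m ≤ a + γ * ψ t ξ + k / 2 * ‖q‖ ^ 2)
    (ht : t ∈ Icc 0 T) (z : E × E) : secondGap F G ψ t z ≤ 0 := by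
  by_contra! hpos
  obtain ⟨⟨s, y⟩, ⟨hs, -⟩, hle, hmax⟩ := exists_isMaxOn_of_isCompact_superlevel
    (Φ := fun q : ℝ × E × E => secondGap F G ψ q.1 q.2) (S := Icc 0 T ×ˢ univ) (z₁ := (t, z))
    ⟨ht, mem_univ z⟩ (isCompact_Icc.prod hK) (hcont.mono (prod_mono_right (subset_univ K)))
    fun q hq hle => ⟨hq.1, hsub q.1 hq.1 q.2 (hpos.le.trans hle)⟩
  rcases hs.1.eq_or_lt with rfl | hs₀
  · exact (hpos.trans_le hle).not_ge (hinit y)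
  · obtain ⟨q, a, hq, ha, hle'⟩ := hψ s ⟨hs₀, hs.2⟩ y.2
    exact (hpos.trans_le hle).not_gt (hF.secondGap_neg_of_isMax hG hδ hν hγ ⟨hs₀, hs.2⟩ hq ha
      (hle' y.1) fun s' hs' z' => hmax (s', z') ⟨hs', mem_univ z'⟩)

end SecondDifference

section SecondDifferenceBounds

theorem le_of_forall_pos_le_add_mul {a b c : ℝ} (h : ∀ ε > 0, a ≤ b + ε * c) : a ≤ b := by
  have hlim : Tendsto (fun ε : ℝ => b + ε * c) (𝓝[>] 0) (𝓝 b) :=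
    ((by fun_prop : Continuous fun ε : ℝ => b + ε * c).tendsto' 0 b (by simp)).mono_left
      nhdsWithin_le_nhds
  exact ge_of_tendsto hlim (eventually_mem_nhdsWithin.mono h)

variable {E : Type*} [NormedAddCommGroup E]

theorem mem_closedBall_of_mul_sq_le {ε M : ℝ} {z : E × E} (hε : 0 < ε)
    (h : ε * (1 + ‖z.1‖ ^ 2 + ‖z.2‖ ^ 2) ^ 2 ≤ M * (1 + ‖z.1‖ ^ 2 + ‖z.2‖ ^ 2)) :
    z ∈ Metric.closedBall 0 (M / ε) := by
  have hr : 1 + ‖z.1‖ ^ 2 + ‖z.2‖ ^ 2 ≤ M / ε := by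
    rw [le_div_iff₀' hε]
    refine le_of_mul_le_mul_right ?_ (show 0 < 1 + ‖z.1‖ ^ 2 + ‖z.2‖ ^ 2 by positivity)
    linarith
  rw [mem_closedBall_zero_iff, Prod.norm_def]
  exact max_le (by nlinarith [sq_nonneg (‖z.1‖ - 1), sq_nonneg ‖z.2‖])
    (by nlinarith [sq_nonneg (‖z.2‖ - 1), sq_nonneg ‖z.1‖])

variable [InnerProductSpace ℝ E] {v h : ℝ → E → ℝ} {g : E → ℝ} {θ θ' : ℝ → ℝ}
  {ν κ γ T C Cg ε kl ku lam t : ℝ}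

theorem hasFDerivAt_comp_norm_sq {φ : ℝ → ℝ} {φ' : ℝ} {ξ : E} (hφ : HasDerivAt φ φ' (‖ξ‖ ^ 2)) :
    HasFDerivAt (fun ξ : E => φ (‖ξ‖ ^ 2)) (innerSL ℝ ((2 * φ') • ξ)) ξ := by
  refine (hφ.comp_hasFDerivAt ξ (hasStrictFDerivAt_norm_sq ξ).hasFDerivAt).congr_fderiv ?_
  rw [map_smul, mul_comm, mul_smul]
  norm_cast

theorem abs_second_difference_le {u : E → ℝ} (hu : ∀ x, |u x| ≤ C * (1 + ‖x‖ ^ 2)) (m ξ : E) :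
    |u (m + ξ) + u (m - ξ) - 2 * u m| ≤ 4 * C * (1 + ‖m‖ ^ 2 + ‖ξ‖ ^ 2) := by
  have hsum : |u (m + ξ)| + |u (m - ξ)| + 2 * |u m| ≤ 4 * C * (1 + ‖m‖ ^ 2 + ‖ξ‖ ^ 2) := by
    have hC : 0 ≤ C := by simpa using (abs_nonneg _).trans (hu 0)
    linarith [hu (m + ξ), hu (m - ξ), hu m, congr(C * $(parallelogram_law_with_norm ℝ m ξ)),
      show 0 ≤ C * ‖ξ‖ ^ 2 by positivity]
  refine le_trans ?_ hsum
  refine (abs_sub _ _).trans ?_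
  rw [abs_mul, abs_two]
  linarith [abs_add_le (u (m + ξ)) (u (m - ξ))]

theorem sq_le_add_of_sq_le {h : E → ℝ} (hh : ∀ x, (1 + ‖x‖ ^ 2) ^ 2 ≤ h x) (m ξ : E) :
    (1 + ‖m‖ ^ 2 + ‖ξ‖ ^ 2) ^ 2 ≤ h (m + ξ) + h (m - ξ) := by
  have hsum := add_sq_le (a := 1 + ‖m + ξ‖ ^ 2) (b := 1 + ‖m - ξ‖ ^ 2)
  rw [show 1 + ‖m + ξ‖ ^ 2 + (1 + ‖m - ξ‖ ^ 2) = 2 * (1 + ‖m‖ ^ 2 + ‖ξ‖ ^ 2) by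
    linarith [parallelogram_law_with_norm ℝ m ξ], mul_pow] at hsum
  linarith [hh (m + ξ), hh (m - ξ), sq_nonneg (1 + ‖m‖ ^ 2 + ‖ξ‖ ^ 2)]

variable [FiniteDimensional ℝ E]

theorem IsViscousHJ.mul_sq_le_second_difference_add
    (hv : IsViscousHJ ν (fun _ => κ) (fun t x => g x - γ * v t x) v) (hν : 0 ≤ ν) (hγ : 0 ≤ γ)
    (hvC : ∀ t ∈ Icc 0 T, ∀ x, |v t x| ≤ C * (1 + ‖x‖ ^ 2))
    (hh : ContinuousOn (fun q : ℝ × E => h q.1 q.2) (Ici 0 ×ˢ univ))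
    (hh₁ : ∀ t ∈ Icc 0 T, ∀ x, (1 + ‖x‖ ^ 2) ^ 2 ≤ h t x) (hε : 0 < ε)
    (hsub : IsViscousHJSubsolution ν (-κ) γ T ε (fun x => -g x) fun t x => -(v t x + ε * h t x))
    (hθ : ∀ t ∈ Icc 0 T, HasDerivAt θ (θ' t) t)
    (hθ' : ∀ t ∈ Icc 0 T, θ' t + γ * θ t + 2 * κ * θ t ^ 2 ≤ kl)
    (hg : ∀ m ξ, kl * ‖ξ‖ ^ 2 ≤ g (m + ξ) + g (m - ξ) - 2 * g m)
    (hv₀ : ∀ m ξ, θ 0 * ‖ξ‖ ^ 2 ≤ v 0 (m + ξ) + v 0 (m - ξ) - 2 * v 0 m)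
    (ht : t ∈ Icc 0 T) (m ξ : E) :
    θ t * ‖ξ‖ ^ 2 ≤ v t (m + ξ) + v t (m - ξ) - 2 * v t m
      + ε * (h t (m + ξ) + h t (m - ξ)) := by
  have hθc : ContinuousOn θ (Icc 0 T) := fun t ht => (hθ t ht).continuousAt.continuousWithinAt
  obtain ⟨Θ, hΘ⟩ := isCompact_Icc.exists_bound_of_continuousOn hθc
  set F : ℝ → E → ℝ := fun t x => -(v t x + ε * h t x)
  set ψ : ℝ → E → ℝ := fun t ξ => -θ t * ‖ξ‖ ^ 2
  have hψ : ContinuousOn (fun q : ℝ × E => ψ q.1 q.2) (Icc 0 T ×ˢ univ) :=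
    (hθc.comp continuousOn_fst fun _ hq => hq.1).neg.mul (by fun_prop)
  have hv' : IsViscousHJSubsolution ν (-(-κ)) γ T 0 (fun x => -(-g x)) v := by
    simpa using hv.isViscousHJSubsolution
  have hgap := hsub.secondGap_nonpos hv' (by linarith) hν hγ
    (continuousOn_secondGap (hv.continuousOn.add (hh.const_mul ε)).neg hv.continuousOn hψ)
    (isCompact_closedBall 0 ((4 * C + Θ) / ε)) ?_ ?_ ?_ ht (m, ξ)
  · simp only [secondGap, F, ψ] at hgap
    linarith
  · intro t ht z hz
    have hθz : θ t * ‖z.2‖ ^ 2 ≤ Θ * (1 + ‖z.1‖ ^ 2 + ‖z.2‖ ^ 2) := by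
      gcongr
      · exact (norm_nonneg _).trans (hΘ t ht)
      · exact (le_abs_self _).trans (hΘ t ht)
      · linarith [sq_nonneg ‖z.1‖]
    simp only [secondGap, F, ψ] at hz
    refine mem_closedBall_of_mul_sq_le hε ?_
    linarith [mul_le_mul_of_nonneg_left (sq_le_add_of_sq_le (hh₁ t ht) z.1 z.2) hε.le,
      neg_le_of_abs_le (abs_second_difference_le (hvC t ht) z.1 z.2)]
  · intro z
    have h₀ : 0 ∈ Icc 0 T := left_mem_Icc.2 (ht.1.trans ht.2)
    have := mul_nonneg hε.le ((sq_nonneg _).trans (sq_le_add_of_sq_le (hh₁ 0 h₀) z.1 z.2))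
    simp only [secondGap, F, ψ]
    linarith [hv₀ z.1 z.2]
  · intro t ht ξ
    refine ⟨_, _, hasFDerivAt_comp_norm_sq (hasDerivAt_const_mul (-θ t)),
      (hθ t (Ioc_subset_Icc_self ht)).fun_neg.mul_const _, fun m => ?_⟩
    have := mul_le_mul_of_nonneg_right (hθ' t (Ioc_subset_Icc_self ht)) (sq_nonneg ‖ξ‖)
    rw [norm_smul, mul_pow, Real.norm_eq_abs, sq_abs]
    simp only [ψ]
    linarith [hg m ξ]

theorem IsViscousHJ.second_difference_le_add
    (hv : IsViscousHJ ν (fun _ => κ) (fun t x => g x - γ * v t x) v) (hν : 0 ≤ ν) (hκ : 0 ≤ κ)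
    (hγ : 0 ≤ γ) (hvC : ∀ t ∈ Icc 0 T, ∀ x, |v t x| ≤ C * (1 + ‖x‖ ^ 2))
    (hh : ContinuousOn (fun q : ℝ × E => h q.1 q.2) (Ici 0 ×ˢ univ))
    (hh₁ : ∀ t ∈ Icc 0 T, ∀ x, (1 + ‖x‖ ^ 2) ^ 2 ≤ h t x) (hε : 0 < ε)
    (hsub : IsViscousHJSubsolution ν (-κ) γ T ε (fun x => -g x) fun t x => -(v t x + ε * h t x))
    (hlam : 0 ≤ lam) (hku : ku ≤ 2 * κ * lam ^ 2)
    (hg : ∀ m ξ, g (m + ξ) + g (m - ξ) - 2 * g m ≤ ku * ‖ξ‖ ^ 2)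
    (hv₀ : ∀ m ξ, v 0 (m + ξ) + v 0 (m - ξ) - 2 * v 0 m ≤ lam * ‖ξ‖ ^ 2)
    (ht : t ∈ Icc 0 T) (m ξ : E) :
    v t (m + ξ) + v t (m - ξ) - 2 * v t m
      ≤ lam * ‖ξ‖ ^ 2 + ε * (2 * h t m + (‖ξ‖ ^ 2) ^ 2) := by
  set G : ℝ → E → ℝ := fun t x => -(v t x + ε * h t x)
  set ψ : ℝ → E → ℝ := fun _ ξ => lam * ‖ξ‖ ^ 2 + ε * (‖ξ‖ ^ 2) ^ 2
  have hgap := hv.isViscousHJSubsolution.secondGap_nonpos hsub (by linarith) hν hγ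
    (continuousOn_secondGap (ψ := ψ) hv.continuousOn (hv.continuousOn.add (hh.const_mul ε)).neg
      (by fun_prop))
    (isCompact_closedBall 0 (4 * C / (ε / 2))) ?_ ?_ ?_ ht (m, ξ)
  · simp only [secondGap, G, ψ] at hgap
    linarith
  · intro t ht z hz
    simp only [secondGap, G, ψ] at hz
    refine mem_closedBall_of_mul_sq_le (half_pos hε) ?_
    have hsq := add_sq_le (a := 1 + ‖z.1‖ ^ 2) (b := ‖z.2‖ ^ 2)
    have hlz : 0 ≤ lam * ‖z.2‖ ^ 2 := by positivity
    linarith [mul_le_mul_of_nonneg_left hsq hε.le, mul_le_mul_of_nonneg_left (hh₁ t ht z.1) hε.le,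
      le_of_abs_le (abs_second_difference_le (hvC t ht) z.1 z.2),
      show 0 ≤ ε * (1 + ‖z.1‖ ^ 2) ^ 2 by positivity]
  · intro z
    have h₀ : 0 ∈ Icc 0 T := left_mem_Icc.2 (ht.1.trans ht.2)
    have := mul_nonneg hε.le ((sq_nonneg _).trans (hh₁ 0 h₀ z.1))
    simp only [secondGap, G, ψ]
    linarith [hv₀ z.1 z.2, show 0 ≤ ε * (‖z.2‖ ^ 2) ^ 2 by positivity]
  · intro t _ ξ
    refine ⟨_, 0, hasFDerivAt_comp_norm_sq (φ := fun r => lam * r + ε * r ^ 2)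
      ((hasDerivAt_const_mul lam).fun_add ((hasDerivAt_pow 2 _).const_mul ε)),
      hasDerivAt_const _ _, fun m => ?_⟩
    rw [norm_smul, mul_pow, Real.norm_eq_abs, sq_abs]
    simp only [ψ]
    linarith [hg m ξ, mul_le_mul_of_nonneg_right hku (sq_nonneg ‖ξ‖),
      show 0 ≤ γ * (lam * ‖ξ‖ ^ 2 + ε * (‖ξ‖ ^ 2) ^ 2) by positivity,
      show 0 ≤ κ * (lam * ε * ‖ξ‖ ^ 2 + ε ^ 2 * (‖ξ‖ ^ 2) ^ 2) * ‖ξ‖ ^ 2 by positivity]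

variable {Gg G₀ G : E → E} {b c η : ℝ}

theorem IsViscousHJ.exists_forall_isViscousHJSubsolution_of_hasTangentBound
    (hv : IsViscousHJ ν (fun _ => κ) (fun t x => g x - γ * v t x) v) (hν : 0 < ν) (hκ : 0 < κ)
    (hγ : 0 ≤ γ) (hT : 0 ≤ T) (hb : 0 < b) (hc : 0 < c)
    (hvl : HasTangentBound (v 0) G₀ 0) (hvu : HasTangentBound (-v 0) (-G₀) (-b))
    (hgl : HasTangentBound g Gg 0) (hgu : HasTangentBound (-g) (-Gg) (-c)) :
    ∃ (C : ℝ) (h : ℝ → E → ℝ), (∀ t ∈ Icc 0 T, ∀ x, |v t x| ≤ C * (1 + ‖x‖ ^ 2)) ∧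
      ContinuousOn (fun q : ℝ × E => h q.1 q.2) (Ici 0 ×ˢ univ) ∧
      (∀ t ∈ Icc 0 T, ∀ x, (1 + ‖x‖ ^ 2) ^ 2 ≤ h t x) ∧
      ∀ ε ≥ 0, IsViscousHJSubsolution ν (-κ) γ T ε (fun x => -g x)
        fun t x => -(v t x + ε * h t x) := by
  obtain ⟨C, hC, hvC⟩ := hv.exists_forall_abs_le_of_discounted hν hκ hγ hT hb hc hvl hvu hgl hgu
  obtain ⟨Cg, hCg, hgC⟩ := hgl.exists_growth hgu hc
  obtain ⟨h, hh⟩ := hv.exists_forall_isViscousHJSubsolution hν.le hκ hγ hC hCg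
    (fun x => (hgC x).1) hvC
  exact ⟨C, h, hvC, hh⟩

theorem IsViscousHJ.hasTangentBound_of_riccati
    (hv : IsViscousHJ ν (fun _ => κ) (fun t x => g x - γ * v t x) v) (hν : 0 < ν) (hκ : 0 < κ)
    (hγ : 0 ≤ γ) (hT : 0 ≤ T) (hb : 0 < b) (hku : 0 < ku) (hη : 0 ≤ η) (hkl : 0 ≤ kl)
    (hvl : HasTangentBound (v 0) G₀ η) (hvu : HasTangentBound (-v 0) (-G₀) (-b))
    (hgl : HasTangentBound g Gg kl) (hgu : HasTangentBound (-g) (-Gg) (-ku))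
    (hG : ∀ x, HasFDerivAt (v T) (innerSL ℝ (G x)) x) (hθ₀ : θ 0 ≤ η)
    (hθ : ∀ t ∈ Icc 0 T, HasDerivAt θ (θ' t) t)
    (hθ' : ∀ t ∈ Icc 0 T, θ' t + γ * θ t + 2 * κ * θ t ^ 2 ≤ kl) :
    HasTangentBound (v T) G (θ T) := by
  obtain ⟨C, h, hvC, hh, hh₁, hsub⟩ :=
    hv.exists_forall_isViscousHJSubsolution_of_hasTangentBound hν hκ hγ hT hb hku (hvl.mono hη) hvu
      (hgl.mono hkl) hgu
  exact .of_le_second_difference hG fun m ξ => le_of_forall_pos_le_add_mul fun ε hε =>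
    hv.mul_sq_le_second_difference_add hν.le hγ hvC hh hh₁ hε (hsub ε hε.le) hθ hθ'
      hgl.le_second_difference (hvl.mono hθ₀).le_second_difference (right_mem_Icc.2 hT) m ξ

theorem IsViscousHJ.hasTangentBound_neg
    (hv : IsViscousHJ ν (fun _ => κ) (fun t x => g x - γ * v t x) v) (hν : 0 < ν) (hκ : 0 < κ)
    (hγ : 0 ≤ γ) (hT : 0 ≤ T) (hlam : 0 < lam) (hku : 0 < ku)
    (hvl : HasTangentBound (v 0) G₀ 0) (hvu : HasTangentBound (-v 0) (-G₀) (-lam))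
    (hgl : HasTangentBound g Gg 0) (hgu : HasTangentBound (-g) (-Gg) (-ku))
    (hG : ∀ x, HasFDerivAt (v T) (innerSL ℝ (G x)) x) (hkulam : ku ≤ 2 * κ * lam ^ 2) :
    HasTangentBound (-v T) (-G) (-lam) := by
  obtain ⟨C, h, hvC, hh, hh₁, hsub⟩ :=
    hv.exists_forall_isViscousHJSubsolution_of_hasTangentBound hν hκ hγ hT hlam hku hvl hvu hgl hgu
  exact .neg_of_second_difference_le hG fun m ξ => le_of_forall_pos_le_add_mul fun ε hε =>
    hv.second_difference_le_add hν.le hκ.le hγ hvC hh hh₁ hε (hsub ε hε.le) hlam.le hkulam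
      hgu.second_difference_le hvu.second_difference_le (right_mem_Icc.2 hT) m ξ

end SecondDifferenceBounds

theorem exists_pos_le_riccati_le {κ γ kl η : ℝ} (hκ : 0 < κ) (hγ : 0 ≤ γ) (hkl : 0 < kl)
    (hη : 0 < η) : ∃ c, 0 < c ∧ c ≤ η ∧ γ * c + 2 * κ * c ^ 2 ≤ kl := by
  set c := min η (min 1 (kl / (γ + 2 * κ)))
  have hc₀ : 0 < c := by positivity
  have hc₁ : c ≤ 1 := (min_le_right _ _).trans (min_le_left _ _)
  have hckl : c * (γ + 2 * κ) ≤ kl :=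
    (le_div_iff₀ (by positivity)).1 ((min_le_right _ _).trans (min_le_right _ _))
  refine ⟨c, hc₀, min_le_left _ _, ?_⟩
  linarith [mul_le_mul_of_nonneg_left (pow_le_of_le_one hc₀.le hc₁ two_ne_zero)
    (show 0 ≤ 2 * κ by positivity)]

theorem exists_ge_le_mul_sq {κ : ℝ} (hκ : 0 < κ) (ku b : ℝ) :
    ∃ c, b ≤ c ∧ ku ≤ 2 * κ * c ^ 2 := by
  have hlim : Tendsto (fun c : ℝ => 2 * κ * c ^ 2) atTop atTop :=
    (tendsto_pow_atTop two_ne_zero).const_mul_atTop (by positivity)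
  exact ((eventually_ge_atTop b).and (hlim.eventually_ge_atTop ku)).exists

theorem hjb_convexity_propagation_general {E : Type*} [NormedAddCommGroup E]
    [InnerProductSpace ℝ E] [FiniteDimensional ℝ E] {g : E → ℝ} {v : ℝ → E → ℝ} {Gg : E → E}
    {G : ℝ → E → E} {ν κ γ kl ku etal etau : ℝ} {θ θ' : ℝ → ℝ}
    (hν : 0 < ν) (hκ : 0 < κ) (hγ : 0 ≤ γ) (hkl : 0 < kl) (hku : 0 < ku)
    (hetal : 0 < etal) (hetau : 0 < etau)
    (hGg : ∀ x, HasFDerivAt g (innerSL ℝ (Gg x)) x)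
    (hg : ∀ x y, kl * ‖x - y‖ ^ 2 ≤ ⟪Gg x - Gg y, x - y⟫ ∧
      ⟪Gg x - Gg y, x - y⟫ ≤ ku * ‖x - y‖ ^ 2)
    (hG : ∀ t ≥ 0, ∀ x, HasFDerivAt (v t) (innerSL ℝ (G t x)) x)
    (hv₀ : ∀ x y, etal * ‖x - y‖ ^ 2 ≤ ⟪G 0 x - G 0 y, x - y⟫ ∧
      ⟪G 0 x - G 0 y, x - y⟫ ≤ etau * ‖x - y‖ ^ 2)
    (hv : IsViscousHJ ν (fun _ => κ) (fun t x => g x - γ * v t x) v)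
    (hθ₀ : θ 0 ≤ etal) (hθ : ∀ t ≥ 0, HasDerivAt θ (θ' t) t)
    (hθ' : ∀ t ≥ 0, θ' t + γ * θ t + 2 * κ * θ t ^ 2 ≤ kl) :
    (∀ t ≥ 0, ∀ x y, θ t * ‖x - y‖ ^ 2 ≤ ⟪G t x - G t y, x - y⟫) ∧
    (∃ c, 0 < c ∧ ∀ t ≥ 0, ∀ x y, c * ‖x - y‖ ^ 2 ≤ ⟪G t x - G t y, x - y⟫) ∧
    ∃ C, ∀ t ≥ 0, ∀ x y, ‖G t x - G t y‖ ≤ C * ‖x - y‖ := by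
  have hgl := HasTangentBound.of_le_inner_sub hGg fun x y => (hg x y).1
  have hgu := HasTangentBound.neg_of_inner_sub_le hGg fun x y => (hg x y).2
  have hvl := HasTangentBound.of_le_inner_sub (hG 0 le_rfl) fun x y => (hv₀ x y).1
  have hvu := HasTangentBound.neg_of_inner_sub_le (hG 0 le_rfl) fun x y => (hv₀ x y).2
  have hlow {φ φ' : ℝ → ℝ} (hφ₀ : φ 0 ≤ etal) (hφ : ∀ t ≥ 0, HasDerivAt φ (φ' t) t)
      (hφ' : ∀ t ≥ 0, φ' t + γ * φ t + 2 * κ * φ t ^ 2 ≤ kl) (t : ℝ) (ht : t ≥ 0) :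
      HasTangentBound (v t) (G t) (φ t) :=
    hv.hasTangentBound_of_riccati hν hκ hγ ht hetau hku hetal.le hkl.le hvl hvu hgl hgu (hG t ht)
      hφ₀ (fun s hs => hφ s hs.1) fun s hs => hφ' s hs.1
  obtain ⟨c, hc, hcη, hckl⟩ := exists_pos_le_riccati_le hκ hγ hkl hetal
  have hconv := hlow (φ := fun _ => c) hcη (fun t _ => hasDerivAt_const t c)
    fun t _ => by linarith
  obtain ⟨C, hCη, hCku⟩ := exists_ge_le_mul_sq hκ ku etau
  refine ⟨fun t ht => (hlow hθ₀ hθ hθ' t ht).le_inner_sub,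
    ⟨c, hc, fun t ht => (hconv t ht).le_inner_sub⟩, 2 * C, fun t ht => ?_⟩
  have hC : 0 < C := hetau.trans_le hCη
  exact ((hconv t ht).mono hc.le).norm_sub_le (hv.hasTangentBound_neg hν hκ hγ ht hC hku
    (hvl.mono hetal.le) (hvu.mono (neg_le_neg hCη)) (hgl.mono hkl.le) hgu (hG t ht) hCku) hC

theorem hasFDerivAt_innerSL_gradient {d : ℕ} {f : Euc d → ℝ} (hf : Differentiable ℝ f)
    (x : Euc d) : HasFDerivAt f (innerSL ℝ (gradient f x)) x :=
  (hf x).hasGradientAt.hasFDerivAt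

theorem inner_sub_le_of_norm_sub_le {F : Type*} [NormedAddCommGroup F] [InnerProductSpace ℝ F]
    {G : F → F} {c : ℝ} {x y : F} (h : ‖G x - G y‖ ≤ c * ‖x - y‖) :
    ⟪G x - G y, x - y⟫ ≤ c * ‖x - y‖ ^ 2 := by
  rw [pow_two, ← mul_assoc]
  exact (real_inner_le_norm _ _).trans (by gcongr)

theorem contDiff_gradient {d : ℕ} {f : Euc d → ℝ} (hf : ContDiff ℝ 2 f) :
    ContDiff ℝ 1 (gradient f) :=
  (InnerProductSpace.toDual ℝ (Euc d)).symm.contDiff.comp (hf.fderiv_right (by norm_num))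

theorem hasGradLapAt_of_contDiff {d : ℕ} {f : Euc d → ℝ} (hf : ContDiff ℝ 2 f) (x : Euc d) :
    HasGradLapAt f (gradient f x) (lap f x) x := by
  refine ⟨gradient f, fderiv ℝ (gradient f) x,
    .of_forall (hasFDerivAt_innerSL_gradient (hf.differentiable two_ne_zero)),
    ((contDiff_gradient hf).differentiable one_ne_zero x).hasFDerivAt, rfl, ?_⟩
  rw [LinearMap.trace_eq_sum_inner _ (EuclideanSpace.basisFun (Fin d) ℝ)]
  simp only [lap, divg, EuclideanSpace.basisFun_apply, real_inner_comm,
    ContinuousLinearMap.coe_coe]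

theorem IsHJBSolution.isViscousHJ {d : ℕ} {σ γ : ℝ} {f : ℝ → Euc d → ℝ} {u₀ : Euc d → ℝ}
    {u : ℝ → Euc d → ℝ} (hu : IsHJBSolution σ γ f u₀ u) :
    IsViscousHJ (σ ^ 2 / 2) (fun _ => σ ^ 2 / 4) (fun t x => f t x - γ * u t x) u where
  continuousOn := hu.1
  eq t ht x := ⟨gradient (u t) x, lap (u t) x,
    hasGradLapAt_of_contDiff ((hu.2.1 t ht).of_le (by norm_num)) x,
    (hu.2.2.2 x t ht).congr_deriv (by ring)⟩

theorem IsHJBSolution.differentiable {d : ℕ} {σ γ t : ℝ} {f : ℝ → Euc d → ℝ} {u₀ : Euc d → ℝ}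
    {u : ℝ → Euc d → ℝ} (hu : IsHJBSolution σ γ f u₀ u) (hu₀ : Differentiable ℝ u₀) (ht : 0 ≤ t) :
    Differentiable ℝ (u t) := by
  rcases ht.eq_or_lt with rfl | ht₀
  · rwa [funext hu.2.2.1]
  · exact (hu.2.1 t ht₀).differentiable three_ne_zero

/-- Convexity propagation for the HJB equation with strongly convex source `g`:
the solution `v` of `∂ₜv = (σ²/2)Δv − (σ²/4)|∇v|² + g − γv`, `v(0,·) = v₀`,
satisfies (i) `∇²v(t,·) ≥ θ_t I` where `θ` solves the Riccati equation
`θ' = κ̲ − γθ − σ²θ²`, `θ₀ = η̲` — in particular `v(t,·)` is strictly convex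
uniformly in `t ≥ 0` — and (ii) `∇²v(t,·)` is bounded uniformly in `t > 0`. -/
theorem hjb_convexity_propagation (d : ℕ)
    (g v0 : Euc d → ℝ) (σ γ kl ku etal etau : ℝ)
    (hσ : 0 < σ) (hγ : 0 ≤ γ) (hkl : 0 < kl) (hklku : kl ≤ ku)
    (hetal : 0 < etal) (hetau : 0 < etau)
    (hgC2 : ContDiff ℝ 2 g)
    (hgHess : ∀ x y : Euc d,
      kl * ‖x - y‖ ^ 2 ≤ ⟪gradient g x - gradient g y, x - y⟫ ∧
      ⟪gradient g x - gradient g y, x - y⟫ ≤ ku * ‖x - y‖ ^ 2)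
    (hv0C1 : ContDiff ℝ 1 v0)
    (hv0Lip : ∀ x y : Euc d, ‖gradient v0 x - gradient v0 y‖ ≤ etau * ‖x - y‖)
    (hv0conv : ∀ x y : Euc d, etal * ‖x - y‖ ^ 2 ≤ ⟪gradient v0 x - gradient v0 y, x - y⟫)
    (v : ℝ → Euc d → ℝ)
    (hv : IsHJBSolution σ γ (fun _ x => g x) v0 v)
    (θ : ℝ → ℝ) (hθ0 : θ 0 = etal)
    (hθ : ∀ t ≥ (0:ℝ), HasDerivAt θ (kl - γ * θ t - σ ^ 2 * θ t ^ 2) t) :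
    (∀ t ≥ (0:ℝ), ∀ x y : Euc d,
      θ t * ‖x - y‖ ^ 2 ≤ ⟪gradient (v t) x - gradient (v t) y, x - y⟫) ∧
    (∃ c : ℝ, 0 < c ∧ ∀ t ≥ (0:ℝ), ∀ x y : Euc d,
      c * ‖x - y‖ ^ 2 ≤ ⟪gradient (v t) x - gradient (v t) y, x - y⟫) ∧
    (∃ C : ℝ, ∀ t > (0:ℝ), ∀ x y : Euc d,
      ‖gradient (v t) x - gradient (v t) y‖ ≤ C * ‖x - y‖) := by
  obtain rfl : v 0 = v0 := funext hv.2.2.1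
  obtain ⟨hriccati, hconv, C, hC⟩ := hjb_convexity_propagation_general
    (G := fun t => gradient (v t)) (half_pos (pow_pos hσ 2)) (by positivity) hγ hkl
    (hkl.trans_le hklku) hetal hetau
    (hasFDerivAt_innerSL_gradient (hgC2.differentiable two_ne_zero)) hgHess
    (fun t ht => hasFDerivAt_innerSL_gradient
      (hv.differentiable (hv0C1.differentiable one_ne_zero) ht))
    (fun x y => ⟨hv0conv x y, inner_sub_le_of_norm_sub_le (hv0Lip x y)⟩) hv.isViscousHJ hθ0.le hθ
    fun t _ => by linarith [mul_nonneg (sq_nonneg σ) (sq_nonneg (θ t))]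
  exact ⟨hriccati, hconv, C, fun t ht => hC t ht.le⟩
end
end

section
/- Let F : P₂(ℝ^d) → ℝ be convex and C¹, and let σ > 0, γ ≥ 0. Then the generalized free energy ℱ^{σ,γ}(p) := F(p) + σ² I(p) + γ H(p) is convex on P_H. Moreover, if ℱ^{σ,γ} admits a minimizer p* ∈ P_H whose density satisfies 1/p* ∈ L^∞_loc(ℝ^d), then this minimizer is unique. -/
/-!
With `u = √p` and `v = √q`, the Fisher density `|∇√p|²` is positively homogeneous in `p`, and
Lagrange's identity
`(u² + v²)(|∇u|² + |∇v|²) = |u ∇u + v ∇v|² + |u ∇v - v ∇u|²`,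
together with `√(p + q) ∇√(p + q) = u ∇u + v ∇v`, makes it subadditive. Hence `I` is convex, and
where `p > 0` equality forces `∇(v / u) = 0`, so that `q` is a multiple of `p`. Since every
competitor is everywhere differentiable, a gradient vanishing almost everywhere suffices for this.

Convexity of `H` is that of `s ↦ s log s`, once `p log p` is known to be integrable. The second
moment controls the region where `p` is small, and a Gagliardo–Nirenberg inequality
`W^{1,1} ⊆ L^{1+r}`, applied to `p` itself, controls the region where `p` is large.
-/

open MeasureTheory Real Filter Set
open scoped RealInnerProductSpace Topology ENNReal NNReal

noncomputable section

/-- Convex combination `(1-η) μ + η ν` of measures. -/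
def mix {d : ℕ} (η : ℝ) (μ ν : Measure (Euc d)) : Measure (Euc d) :=
  ENNReal.ofReal (1 - η) • μ + ENNReal.ofReal η • ν

/-- `F` is `C¹` with linear (flat) derivative `DF`: `DF μ` is continuous of
quadratic growth in the space variable and the fundamental theorem of calculus
holds along straight lines between measures of `P₂`. -/
def IsLinearDeriv {d : ℕ} (F : Measure (Euc d) → ℝ)
    (DF : Measure (Euc d) → Euc d → ℝ) : Prop :=
  (∀ μ ∈ P2 d, Continuous (DF μ)) ∧
  (∀ μ ∈ P2 d, ∃ C : ℝ, ∀ x, |DF μ x| ≤ C * (1 + ‖x‖ ^ 2)) ∧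
  (∀ μ ∈ P2 d, ∀ ν ∈ P2 d,
    F ν - F μ = ∫ η in Ioc (0:ℝ) 1,
      ((∫ x, DF (mix η μ ν) x ∂ν) - ∫ x, DF (mix η μ ν) x ∂μ))

/-- Convexity of a functional on `P₂`. -/
def ConvexOnP2 {d : ℕ} (F : Measure (Euc d) → ℝ) : Prop :=
  ∀ μ ∈ P2 d, ∀ ν ∈ P2 d, ∀ t ∈ Icc (0:ℝ) 1,
    F (mix t μ ν) ≤ (1 - t) * F μ + t * F ν

/-- Assumption (A1): `F` is convex, `C¹`, and `F(μ) ≥ lam ∫ |x|² μ(dx)`, `lam > 0`. -/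
def AssumptionA1 {d : ℕ} (F : Measure (Euc d) → ℝ)
    (DF : Measure (Euc d) → Euc d → ℝ) (lam : ℝ) : Prop :=
  0 < lam ∧ ConvexOnP2 F ∧ IsLinearDeriv F DF ∧
    ∀ μ ∈ P2 d, lam * (∫ x, ‖x‖ ^ 2 ∂μ) ≤ F μ
/-- The generalized free energy `ℱ^{σ,γ}(p) = F(p) + σ² I(p) + γ H(p)`. -/
def FreeEnergy {d : ℕ} (σ γ : ℝ) (F : Measure (Euc d) → ℝ) (p : Euc d → ℝ) : ℝ :=
  F (toMeas p) + σ ^ 2 * FisherInfo p + γ * Entropy p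

open scoped Gradient

section VanishingDerivative

variable {E F : Type*} [NormedAddCommGroup E] [NormedSpace ℝ E] [NormedAddCommGroup F]
  [NormedSpace ℝ F] [CompleteSpace F]

lemma eq_of_ae_deriv_eq_zero {f : ℝ → F} (hf : Differentiable ℝ f) (h : ∀ᵐ t, deriv f t = 0)
    (a b : ℝ) : f a = f b := by
  have hint : IntervalIntegrable (deriv f) volume a b :=
    ((integrable_zero ℝ F volume).congr (h.mono fun _ ht => ht.symm)).intervalIntegrable
  have hzero : ∫ t in a..b, deriv f t = 0 :=
    intervalIntegral.integral_zero_ae (h.mono fun _ ht _ => ht)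
  rw [intervalIntegral.integral_deriv_eq_sub (fun t _ => hf t) hint, sub_eq_zero] at hzero
  exact hzero.symm

variable [FiniteDimensional ℝ E] [MeasurableSpace E] [BorelSpace E] (μ : Measure E)
  [μ.IsAddHaarMeasure]

lemma eq_of_ae_fderiv_eq_zero {f : E → F} (hf : Differentiable ℝ f)
    (h : ∀ᵐ x ∂μ, fderiv ℝ f x = 0) (x y : E) : f x = f y := by
  have htranslate (v : E) : (fun z => f (z + v)) = f := by
    refine Continuous.ae_eq_iff_eq (μ := μ)
      (hf.continuous.comp (continuous_add_const v)) hf.continuous |>.1 ?_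
    have hlines : ∀ᵐ z ∂μ, ∀ᵐ t : ℝ, fderiv ℝ f (z + t • v) = 0 :=
      (ae_ae_add_linearMap_mem_iff (LinearMap.toSpanSingleton ℝ E v) volume μ
        (measurable_fderiv ℝ f (measurableSet_singleton 0))).2 h
    filter_upwards [hlines] with z hz
    have hderiv (t : ℝ) :
        HasDerivAt (fun t : ℝ => f (z + t • v)) (fderiv ℝ f (z + t • v) v) t :=
      (hf _).hasFDerivAt.comp_hasDerivAt t
        (by simpa using ((hasDerivAt_id t).smul_const v).const_add z)
    simpa using eq_of_ae_deriv_eq_zero (fun t => (hderiv t).differentiableAt)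
      (hz.mono fun t ht => by simp [(hderiv t).deriv, ht]) 1 0
  simpa using (congrFun (htranslate (y - x)) x).symm

lemma exists_eq_const_mul_of_ae_smul_fderiv_eq {u v : E → ℝ} (hu : Differentiable ℝ u)
    (hv : Differentiable ℝ v) (hu0 : ∀ x, u x ≠ 0)
    (h : ∀ᵐ x ∂μ, u x • fderiv ℝ v x = v x • fderiv ℝ u x) : ∃ c : ℝ, ∀ x, v x = c * u x := by
  have hquot (x : E) : HasFDerivAt (fun y => v y * (u y)⁻¹)
      (v x • -(u x ^ 2)⁻¹ • fderiv ℝ u x + (u x)⁻¹ • fderiv ℝ v x) x :=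
    (hv x).hasFDerivAt.mul
      ((hasDerivAt_inv (hu0 x)).comp_hasFDerivAt x (hu x).hasFDerivAt)
  have hzero : ∀ᵐ x ∂μ, fderiv ℝ (fun y => v y * (u y)⁻¹) x = 0 := by
    filter_upwards [h] with x hx
    calc fderiv ℝ (fun y => v y * (u y)⁻¹) x
        = (u x ^ 2)⁻¹ • (u x • fderiv ℝ v x - v x • fderiv ℝ u x) := by
          have := hu0 x
          rw [(hquot x).fderiv]
          match_scalars <;> field_simp
      _ = 0 := by rw [hx, sub_self, smul_zero]
  refine ⟨v 0 * (u 0)⁻¹, fun x => ?_⟩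
  rw [← eq_of_ae_fderiv_eq_zero μ (fun x => (hquot x).differentiableAt) hzero x 0,
    inv_mul_cancel_right₀ (hu0 x)]

end VanishingDerivative

section Sobolev

variable {F : Type*} [NormedAddCommGroup F] [NormedSpace ℝ F] [CompleteSpace F]

lemma enorm_le_lintegral_enorm_add_enorm_deriv {f : ℝ → F} (hf : Differentiable ℝ f) (s : ℝ) :
    ‖f s‖ₑ ≤ ∫⁻ t, (‖f t‖ₑ + ‖deriv f t‖ₑ) := by
  rw [lintegral_add_left hf.continuous.enorm.measurable]
  rcases eq_or_ne (∫⁻ t, ‖f t‖ₑ) ∞ with h | hf_fin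
  · simp [h]
  rcases eq_or_ne (∫⁻ t, ‖deriv f t‖ₑ) ∞ with h | hf'_fin
  · simp [h]
  have hint : Integrable f := ⟨hf.continuous.aestronglyMeasurable, hf_fin.lt_top⟩
  have hint' : Integrable (deriv f) := ⟨aestronglyMeasurable_deriv f _, hf'_fin.lt_top⟩
  have hderiv : ∀ t ∈ Iic s, HasDerivAt f (deriv f t) t := fun t _ => (hf t).hasDerivAt
  have hlim : Tendsto f atBot (𝓝 0) := tendsto_zero_of_hasDerivAt_of_integrableOn_Iic hderiv
    hint'.integrableOn hint.integrableOn
  have hFTC : ∫ t in Iic s, deriv f t = f s := by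
    simpa using integral_Iic_of_hasDerivAt_of_tendsto' hderiv hint'.integrableOn hlim
  calc ‖f s‖ₑ = ‖∫ t in Iic s, deriv f t‖ₑ := by rw [hFTC]
    _ ≤ ∫⁻ t in Iic s, ‖deriv f t‖ₑ := enorm_integral_le_lintegral_enorm _
    _ ≤ ∫⁻ t, ‖deriv f t‖ₑ := setLIntegral_le_lintegral _ _
    _ ≤ (∫⁻ t, ‖f t‖ₑ) + ∫⁻ t, ‖deriv f t‖ₑ := le_add_self

variable {ι : Type*} [Fintype ι]

lemma enorm_le_lintegral_update [DecidableEq ι] {f : (ι → ℝ) → F} (hf : Differentiable ℝ f)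
    (x : ι → ℝ) (i : ι) :
    ‖f x‖ₑ ≤ ∫⁻ t, (‖f (Function.update x i t)‖ₑ + ‖fderiv ℝ f (Function.update x i t)‖ₑ) := by
  have hderiv (t : ℝ) : HasDerivAt (fun t => f (Function.update x i t))
      (fderiv ℝ f (Function.update x i t) (Pi.single i 1)) t :=
    (hf _).hasFDerivAt.comp_hasDerivAt t (hasDerivAt_update x i t)
  have hline := enorm_le_lintegral_enorm_add_enorm_deriv
    (fun t => (hderiv t).differentiableAt) (x i)
  simp only [Function.update_eq_self] at hline
  refine hline.trans (lintegral_mono fun t => ?_)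
  gcongr
  rw [(hderiv t).deriv]
  exact ((fderiv ℝ f (Function.update x i t)).le_opENorm (Pi.single i 1)).trans_eq
    (by rw [Pi.enorm_single, enorm_one, mul_one])

theorem lintegral_enorm_rpow_one_add_le {r : ℝ} (hr : 0 ≤ r)
    (hr' : (Fintype.card ι - 1 : ℝ) * r ≤ 1) {f : (ι → ℝ) → F} (hf : Differentiable ℝ f) :
    ∫⁻ x, ‖f x‖ₑ ^ (1 + r) ≤ (∫⁻ x, (‖f x‖ₑ + ‖fderiv ℝ f x‖ₑ)) ^ (1 + r) := by
  classical
  have hmeas : Measurable fun x => ‖f x‖ₑ + ‖fderiv ℝ f x‖ₑ :=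
    hf.continuous.enorm.measurable.add (measurable_fderiv ℝ f).enorm
  have hsplit (s : ℝ≥0∞) :
      s ^ (1 + r) = s ^ (1 - (Fintype.card ι - 1 : ℝ) * r) * ∏ _i : ι, s ^ r := by
    rw [Finset.prod_const, Finset.card_univ, ← ENNReal.rpow_mul_natCast,
      ← ENNReal.rpow_add_of_nonneg _ _ (sub_nonneg.2 hr') (by positivity)]
    ring_nf
  refine le_trans (lintegral_mono fun x => ?_)
    (lintegral_mul_prod_lintegral_pow_le (fun _ : ι => (volume : Measure ℝ)) hr hr' hmeas)
  rw [hsplit]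
  gcongr with i
  · exact le_self_add
  · exact enorm_le_lintegral_update hf x i

lemma integrable_norm_rpow_one_add_of_pi {r : ℝ} (hr : 0 ≤ r)
    (hr' : (Fintype.card ι - 1 : ℝ) * r ≤ 1) {f : (ι → ℝ) → F} (hf : Differentiable ℝ f)
    (hint : Integrable f) (hint' : Integrable (fderiv ℝ f)) :
    Integrable fun x => ‖f x‖ ^ (1 + r) := by
  have hr1 : 0 ≤ 1 + r := by positivity
  refine ⟨(hf.continuous.norm.rpow_const fun _ => Or.inr hr1).aestronglyMeasurable, ?_⟩
  have hfin : ∫⁻ x, (‖f x‖ₑ + ‖fderiv ℝ f x‖ₑ) < ∞ := by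
    rw [lintegral_add_left hf.continuous.enorm.measurable]
    exact ENNReal.add_lt_top.2 ⟨hint.2, hint'.2⟩
  simpa [HasFiniteIntegral, Real.enorm_rpow_of_nonneg (norm_nonneg _) hr1] using
    (lintegral_enorm_rpow_one_add_le hr hr' hf).trans_lt (ENNReal.rpow_lt_top_of_nonneg hr1 hfin.ne)

theorem integrable_norm_rpow_one_add {r : ℝ} (hr : 0 ≤ r)
    (hr' : (Fintype.card ι - 1 : ℝ) * r ≤ 1) {f : EuclideanSpace ℝ ι → F}
    (hf : Differentiable ℝ f) (hint : Integrable f) (hint' : Integrable (fderiv ℝ f)) :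
    Integrable fun x => ‖f x‖ ^ (1 + r) := by
  let e : (ι → ℝ) ≃L[ℝ] EuclideanSpace ℝ ι := (EuclideanSpace.equiv ι ℝ).symm
  have he : MeasurePreserving e := PiLp.volume_preserving_toLp ι
  have hcomp' : Integrable (fderiv ℝ (f ∘ e)) := by
    have hfderiv : fderiv ℝ (f ∘ e) = fun x => (fderiv ℝ f (e x)).comp (e : (ι → ℝ) →L[ℝ] _) :=
      funext fun _ => e.comp_right_fderiv
    rw [hfderiv]
    exact ((ContinuousLinearMap.compL ℝ (ι → ℝ) (EuclideanSpace ℝ ι) F).flip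
      (e : (ι → ℝ) →L[ℝ] EuclideanSpace ℝ ι)).integrable_comp
        (he.integrable_comp_of_integrable hint')
  exact (he.integrable_comp_emb e.toHomeomorph.measurableEmbedding).1
    (integrable_norm_rpow_one_add_of_pi hr hr' (hf.comp e.differentiable)
      (he.integrable_comp_of_integrable hint) hcomp')

end Sobolev

section Entropy

lemma abs_mul_log_le {s r ε : ℝ} (hs : 0 ≤ s) (hr : 0 ≤ r) (hε : 0 < ε) :
    |s * Real.log s| ≤ r * s + Real.exp (-r) + s ^ (1 + ε) / ε := by
  rcases hs.eq_or_lt with rfl | hs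
  · simpa [Real.zero_rpow (by positivity : 1 + ε ≠ 0)] using (Real.exp_pos (-r)).le
  have hlower : s - Real.exp (-r) ≤ s * (Real.log s + r) := by
    have h := Real.one_sub_inv_le_log_of_pos (div_pos hs (Real.exp_pos (-r)))
    rw [Real.log_div hs.ne' (Real.exp_pos _).ne', Real.log_exp, inv_div, sub_neg_eq_add] at h
    calc s - Real.exp (-r) = s * (1 - Real.exp (-r) / s) := by field_simp
      _ ≤ s * (Real.log s + r) := by gcongr
  have hupper : s * Real.log s ≤ s ^ (1 + ε) / ε := by
    calc s * Real.log s ≤ s * (s ^ ε / ε) := by gcongr; exact Real.log_le_rpow_div hs.le hε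
      _ = s ^ (1 + ε) / ε := by rw [Real.rpow_add hs, Real.rpow_one]; ring
  have hrs : 0 ≤ r * s := by positivity
  have hpow : 0 ≤ s ^ (1 + ε) / ε := by positivity
  rw [abs_le]
  constructor <;> linarith [Real.exp_pos (-r)]

lemma integrable_mul_log_of_integrable_rpow {α : Type*} [MeasurableSpace α] {μ : Measure α}
    {p V : α → ℝ} {ε : ℝ} (hp : AEMeasurable p μ) (hp0 : 0 ≤ p) (hV0 : 0 ≤ V)
    (hε : 0 < ε) (hexp : Integrable (fun x => Real.exp (-V x)) μ)
    (hVp : Integrable (fun x => V x * p x) μ) (hpow : Integrable (fun x => p x ^ (1 + ε)) μ) :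
    Integrable (fun x => p x * Real.log (p x)) μ :=
  ((hVp.add hexp).add (hpow.div_const ε)).mono' (hp.mul hp.log).aestronglyMeasurable
    (Eventually.of_forall fun x => abs_mul_log_le (hp0 x) (hV0 x) hε)

lemma integrable_exp_neg_norm_sq (V : Type*) [NormedAddCommGroup V] [InnerProductSpace ℝ V]
    [FiniteDimensional ℝ V] [MeasurableSpace V] [BorelSpace V] :
    Integrable fun x : V => Real.exp (-‖x‖ ^ 2) := by
  refine (GaussianFourier.integrable_cexp_neg_mul_sq_norm_add (V := V) (b := 1)
    (by simp) 0 0).norm.congr (Eventually.of_forall fun x => ?_)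
  simp [Complex.norm_exp, ← Complex.ofReal_pow]

end Entropy

section FisherDensity

section Differentiability

lemma sqrt_comp_smul {α : Type*} {a : ℝ} (ha : 0 ≤ a) (p : α → ℝ) :
    (fun y => √((a • p) y)) = √a • fun y => √(p y) :=
  funext fun _ => Real.sqrt_mul ha _

variable {E : Type*} [NormedAddCommGroup E] [NormedSpace ℝ E] {p q : E → ℝ} {x : E}

lemma isLittleO_sub_of_nonneg_of_eq_zero {u : E → ℝ} (hu0 : 0 ≤ u) (hu : DifferentiableAt ℝ u x)
    (hx : u x = 0) : u =o[𝓝 x] fun y => y - x := by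
  have hmin : IsLocalMin u x := Eventually.of_forall fun y => hx.trans_le (hu0 y)
  simpa [hmin.fderiv_eq_zero, hx] using hu.hasFDerivAt.isLittleO

lemma differentiableAt_sqrt_add (hp0 : 0 ≤ p) (hq0 : 0 ≤ q)
    (hp : DifferentiableAt ℝ (fun y => √(p y)) x) (hq : DifferentiableAt ℝ (fun y => √(q y)) x) :
    DifferentiableAt ℝ (fun y => √((p + q) y)) x := by
  by_cases hx : (p + q) x = 0
  · obtain ⟨hpx, hqx⟩ := (add_eq_zero_iff_of_nonneg (hp0 x) (hq0 x)).1 hx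
    have hbound : (fun y => √((p + q) y)) =O[𝓝 x] fun y => √(p y) + √(q y) := by
      refine .of_bound 1 (Eventually.of_forall fun y => ?_)
      rw [one_mul, Real.norm_of_nonneg (by positivity), Real.norm_of_nonneg (by positivity)]
      simp only [Real.sqrt_eq_rpow]
      exact Real.rpow_add_le_add_rpow (hp0 y) (hq0 y) (by norm_num) (by norm_num)
    have hsmall : (fun y => √((p + q) y)) =o[𝓝 x] fun y => y - x := hbound.trans_isLittleO
      ((isLittleO_sub_of_nonneg_of_eq_zero (fun _ => Real.sqrt_nonneg _) hp (by simp [hpx])).add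
        (isLittleO_sub_of_nonneg_of_eq_zero (fun _ => Real.sqrt_nonneg _) hq (by simp [hqx])))
    refine (HasFDerivAt.of_isLittleO (f' := 0) ?_).differentiableAt
    simpa [hpx, hqx] using hsmall
  · refine DifferentiableAt.sqrt ?_ hx
    convert! (hp.pow 2).add (hq.pow 2) using 1
    funext y
    simp [Real.sq_sqrt (hp0 y), Real.sq_sqrt (hq0 y)]

lemma differentiableAt_sqrt_smul {a : ℝ} (ha : 0 ≤ a)
    (hp : DifferentiableAt ℝ (fun y => √(p y)) x) :
    DifferentiableAt ℝ (fun y => √((a • p) y)) x := by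
  rw [sqrt_comp_smul ha]
  exact hp.const_smul _

end Differentiability

variable {E : Type*} [NormedAddCommGroup E] [InnerProductSpace ℝ E]

lemma add_sq_mul_add_norm_sq (a b : ℝ) (x y : E) :
    (a ^ 2 + b ^ 2) * (‖x‖ ^ 2 + ‖y‖ ^ 2) = ‖a • x + b • y‖ ^ 2 + ‖a • y - b • x‖ ^ 2 := by
  rw [norm_add_sq_real, norm_sub_sq_real]
  simp only [norm_smul, mul_pow, Real.norm_eq_abs, sq_abs, real_inner_smul_left,
    real_inner_smul_right, real_inner_comm x y]
  ring

variable [CompleteSpace E] {p q : E → ℝ} {x : E}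

lemma norm_gradient_eq_norm_fderiv (f : E → ℝ) (x : E) : ‖∇ f x‖ = ‖fderiv ℝ f x‖ := by
  rw [← toDual_gradient, LinearIsometryEquiv.norm_map]

/-- The integrand `|∇√p|²` of the Fisher information, on an arbitrary Hilbert space. It is `0` where
`√p` is not differentiable. -/
def fisherDensity (p : E → ℝ) (x : E) : ℝ := ‖∇ (fun y => √(p y)) x‖ ^ 2

lemma fisherDensity_nonneg (p : E → ℝ) (x : E) : 0 ≤ fisherDensity p x := sq_nonneg _

lemma measurable_fisherDensity [MeasurableSpace E] [OpensMeasurableSpace E] (p : E → ℝ) :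
    Measurable (fisherDensity p) := by
  have h : fisherDensity p = fun x => ‖fderiv ℝ (fun y => √(p y)) x‖ ^ 2 :=
    funext fun x => by rw [fisherDensity, norm_gradient_eq_norm_fderiv]
  rw [h]
  exact (measurable_fderiv ℝ _).norm.pow_const 2

lemma fisherDensity_of_eq_zero (hx : p x = 0) : fisherDensity p x = 0 := by
  have hmin : IsLocalMin (fun y => √(p y)) x :=
    Eventually.of_forall fun y => by simp [hx]
  simp [fisherDensity, norm_gradient_eq_norm_fderiv, hmin.fderiv_eq_zero]

lemma fisherDensity_smul {a : ℝ} (ha : 0 ≤ a) (p : E → ℝ) :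
    fisherDensity (a • p) = a • fisherDensity p := by
  funext x
  rw [Pi.smul_apply, smul_eq_mul, fisherDensity, fisherDensity, norm_gradient_eq_norm_fderiv,
    norm_gradient_eq_norm_fderiv, sqrt_comp_smul ha, fderiv_const_smul_field, Pi.smul_apply,
    norm_smul, mul_pow, Real.norm_eq_abs, sq_abs, Real.sq_sqrt ha]

lemma hasGradientAt_of_differentiableAt_sqrt (hp0 : 0 ≤ p)
    (hp : DifferentiableAt ℝ (fun y => √(p y)) x) :
    HasGradientAt p ((2 * √(p x)) • ∇ (fun y => √(p y)) x) x := by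
  have hsq : (fun y => √(p y) ^ 2) = p := funext fun y => Real.sq_sqrt (hp0 y)
  have h := hp.hasFDerivAt.pow 2
  rw [hsq] at h
  rw [hasGradientAt_iff_hasFDerivAt]
  simpa [toDual_gradient] using h

lemma norm_fderiv_le_add_fisherDensity (hp0 : 0 ≤ p)
    (hp : DifferentiableAt ℝ (fun y => √(p y)) x) :
    ‖fderiv ℝ p x‖ ≤ p x + fisherDensity p x := by
  rw [← norm_gradient_eq_norm_fderiv, (hasGradientAt_of_differentiableAt_sqrt hp0 hp).gradient,
    norm_smul, Real.norm_of_nonneg (by positivity), fisherDensity]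
  nth_rw 2 [← Real.sq_sqrt (hp0 x)]
  exact two_mul_le_add_sq _ _

lemma sqrt_smul_gradient_sqrt_add (hp0 : 0 ≤ p) (hq0 : 0 ≤ q)
    (hp : DifferentiableAt ℝ (fun y => √(p y)) x) (hq : DifferentiableAt ℝ (fun y => √(q y)) x) :
    √((p + q) x) • ∇ (fun y => √((p + q) y)) x =
      √(p x) • ∇ (fun y => √(p y)) x + √(q x) • ∇ (fun y => √(q y)) x := by
  have hsum : HasGradientAt (p + q) ((2 * √(p x)) • ∇ (fun y => √(p y)) x +
      (2 * √(q x)) • ∇ (fun y => √(q y)) x) x := by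
    rw [hasGradientAt_iff_hasFDerivAt, map_add]
    exact (hasGradientAt_of_differentiableAt_sqrt hp0 hp).hasFDerivAt.add
      (hasGradientAt_of_differentiableAt_sqrt hq0 hq).hasFDerivAt
  have h := (hasGradientAt_of_differentiableAt_sqrt (add_nonneg hp0 hq0)
    (differentiableAt_sqrt_add hp0 hq0 hp hq)).unique hsum
  simp only [mul_smul, ← smul_add] at h
  exact smul_right_injective E two_ne_zero h

lemma mul_fisherDensity_add_sub_fisherDensity (hp0 : 0 ≤ p) (hq0 : 0 ≤ q)
    (hp : DifferentiableAt ℝ (fun y => √(p y)) x) (hq : DifferentiableAt ℝ (fun y => √(q y)) x) :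
    (p + q) x * (fisherDensity p x + fisherDensity q x - fisherDensity (p + q) x) =
      ‖√(p x) • ∇ (fun y => √(q y)) x - √(q x) • ∇ (fun y => √(p y)) x‖ ^ 2 := by
  have hsum : (p + q) x * fisherDensity (p + q) x =
      ‖√(p x) • ∇ (fun y => √(p y)) x + √(q x) • ∇ (fun y => √(q y)) x‖ ^ 2 := by
    rw [← sqrt_smul_gradient_sqrt_add hp0 hq0 hp hq, norm_smul, mul_pow, Real.norm_eq_abs, sq_abs,
      Real.sq_sqrt (add_nonneg hp0 hq0 x), fisherDensity]
  have hlagrange := add_sq_mul_add_norm_sq √(p x) √(q x) (∇ (fun y => √(p y)) x)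
    (∇ (fun y => √(q y)) x)
  rw [Real.sq_sqrt (hp0 x), Real.sq_sqrt (hq0 x), ← hsum] at hlagrange
  rw [mul_sub, sub_eq_iff_eq_add']
  exact hlagrange

lemma fisherDensity_add_le (hp0 : 0 ≤ p) (hq0 : 0 ≤ q)
    (hp : DifferentiableAt ℝ (fun y => √(p y)) x) (hq : DifferentiableAt ℝ (fun y => √(q y)) x) :
    fisherDensity (p + q) x ≤ fisherDensity p x + fisherDensity q x := by
  rcases (add_nonneg hp0 hq0 x).eq_or_lt with hx | hx
  · rw [fisherDensity_of_eq_zero hx.symm]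
    exact add_nonneg (fisherDensity_nonneg p x) (fisherDensity_nonneg q x)
  · refine sub_nonneg.1 (nonneg_of_mul_nonneg_right ?_ hx)
    rw [mul_fisherDensity_add_sub_fisherDensity hp0 hq0 hp hq]
    positivity

lemma sqrt_smul_fderiv_sqrt_eq_of_fisherDensity_add_eq (hp0 : 0 ≤ p) (hq0 : 0 ≤ q)
    (hp : DifferentiableAt ℝ (fun y => √(p y)) x) (hq : DifferentiableAt ℝ (fun y => √(q y)) x)
    (h : fisherDensity (p + q) x = fisherDensity p x + fisherDensity q x) :
    √(p x) • fderiv ℝ (fun y => √(q y)) x = √(q x) • fderiv ℝ (fun y => √(p y)) x := by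
  have hzero := mul_fisherDensity_add_sub_fisherDensity hp0 hq0 hp hq
  rw [h, sub_self, mul_zero, eq_comm, sq_eq_zero_iff, norm_eq_zero, sub_eq_zero] at hzero
  simpa [toDual_gradient] using congrArg (InnerProductSpace.toDual ℝ E) hzero

lemma fisherDensity_combo_le {a b : ℝ} (ha : 0 ≤ a) (hb : 0 ≤ b) (hp0 : 0 ≤ p) (hq0 : 0 ≤ q)
    (hp : DifferentiableAt ℝ (fun y => √(p y)) x) (hq : DifferentiableAt ℝ (fun y => √(q y)) x) :
    fisherDensity (a • p + b • q) x ≤ a * fisherDensity p x + b * fisherDensity q x := by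
  simpa [fisherDensity_smul, ha, hb] using fisherDensity_add_le (smul_nonneg ha hp0)
    (smul_nonneg hb hq0) (differentiableAt_sqrt_smul ha hp) (differentiableAt_sqrt_smul hb hq)

end FisherDensity

lemma pos_of_forall_ae_le {E : Type*} [SeminormedAddCommGroup E] [MeasurableSpace E] {f : E → ℝ}
    (hf : Continuous f) (μ : Measure E) [μ.IsOpenPosMeasure]
    (h : ∀ R : ℝ, ∃ ε > (0 : ℝ), ∀ᵐ x ∂μ, ‖x‖ ≤ R → ε ≤ f x) (x : E) : 0 < f x := by
  obtain ⟨ε, hε, hae⟩ := h (‖x‖ + 1)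
  refine hε.trans_le (not_lt.1 fun hx => ?_)
  have hopen : IsOpen {y | ‖y‖ < ‖x‖ + 1 ∧ f y < ε} :=
    (isOpen_lt continuous_norm continuous_const).inter (isOpen_lt hf continuous_const)
  obtain ⟨y, ⟨hy, hfy⟩, hle⟩ :=
    (Measure.dense_of_ae hae).inter_open_nonempty _ hopen ⟨x, lt_add_one _, hx⟩
  exact hfy.not_ge (hle hy.le)

section FreeEnergy

variable {d : ℕ} {p q : Euc d → ℝ} {a b : ℝ}

namespace MemPH

lemma nonneg (hp : MemPH p) : 0 ≤ p := hp.1.1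

lemma integrable (hp : MemPH p) : Integrable p := hp.1.2.1

lemma integral_eq_one (hp : MemPH p) : ∫ x, p x = 1 := hp.1.2.2

lemma integrable_norm_sq_mul (hp : MemPH p) : Integrable fun x => ‖x‖ ^ 2 * p x := hp.2.1

lemma differentiable_sqrt (hp : MemPH p) : Differentiable ℝ fun x => √(p x) := hp.2.2.1

lemma integrable_fisherDensity (hp : MemPH p) : Integrable (fisherDensity p) := hp.2.2.2

lemma differentiable (hp : MemPH p) : Differentiable ℝ p := fun x =>
  (hasGradientAt_of_differentiableAt_sqrt hp.nonneg (hp.differentiable_sqrt x)).differentiableAt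

lemma measurable (hp : MemPH p) : Measurable p := hp.differentiable.continuous.measurable

lemma integrable_fderiv (hp : MemPH p) : Integrable (fderiv ℝ p) :=
  (hp.integrable.add hp.integrable_fisherDensity).mono'
    (measurable_fderiv ℝ p).aestronglyMeasurable
    (Eventually.of_forall fun x =>
      norm_fderiv_le_add_fisherDensity hp.nonneg (hp.differentiable_sqrt x))

lemma integrable_mul_log (hp : MemPH p) : Integrable fun x => p x * Real.log (p x) := by
  have hd : (0 : ℝ) < d + 1 := by positivity
  have hexponent : (Fintype.card (Fin d) - 1 : ℝ) * (1 / (d + 1)) ≤ 1 := by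
    rw [Fintype.card_fin, mul_one_div, div_le_one hd]
    linarith
  have hpow : Integrable fun x => p x ^ (1 + 1 / (d + 1) : ℝ) := by
    simpa only [Real.norm_of_nonneg (hp.nonneg _)] using integrable_norm_rpow_one_add
      (by positivity) hexponent hp.differentiable hp.integrable hp.integrable_fderiv
  exact integrable_mul_log_of_integrable_rpow hp.measurable.aemeasurable hp.nonneg
    (fun x => sq_nonneg ‖x‖) (by positivity) (integrable_exp_neg_norm_sq (Euc d))
    hp.integrable_norm_sq_mul hpow

lemma toMeas_mem_P2 (hp : MemPH p) : toMeas p ∈ P2 d := by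
  refine ⟨⟨?_⟩, ?_⟩
  · rw [toMeas, withDensity_apply _ MeasurableSet.univ, Measure.restrict_univ,
      ← ofReal_integral_eq_lintegral_ofReal hp.integrable (Eventually.of_forall hp.nonneg),
      hp.integral_eq_one, ENNReal.ofReal_one]
  · rw [toMeas, integrable_withDensity_iff hp.measurable.ennreal_ofReal (by simp)]
    simpa only [ENNReal.toReal_ofReal (hp.nonneg _)] using hp.integrable_norm_sq_mul

lemma combo (hp : MemPH p) (hq : MemPH q) (ha : 0 ≤ a) (hb : 0 ≤ b) (hab : a + b = 1) :
    MemPH (a • p + b • q) := by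
  refine ⟨⟨?_, ?_, ?_⟩, ?_, fun x => ?_, ?_⟩
  · exact add_nonneg (smul_nonneg ha hp.nonneg) (smul_nonneg hb hq.nonneg)
  · exact (hp.integrable.smul a).add (hq.integrable.smul b)
  · simp [integral_add (hp.integrable.const_mul a) (hq.integrable.const_mul b),
      integral_const_mul, hp.integral_eq_one, hq.integral_eq_one, hab]
  · refine ((hp.integrable_norm_sq_mul.const_mul a).add
      (hq.integrable_norm_sq_mul.const_mul b)).congr (Eventually.of_forall fun x => ?_)
    simp only [Pi.add_apply, Pi.smul_apply, smul_eq_mul]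
    ring
  · exact differentiableAt_sqrt_add (smul_nonneg ha hp.nonneg) (smul_nonneg hb hq.nonneg)
      (differentiableAt_sqrt_smul ha (hp.differentiable_sqrt x))
      (differentiableAt_sqrt_smul hb (hq.differentiable_sqrt x))
  · refine ((hp.integrable_fisherDensity.const_mul a).add
      (hq.integrable_fisherDensity.const_mul b)).mono'
      (measurable_fisherDensity _).aestronglyMeasurable (Eventually.of_forall fun x => ?_)
    rw [Real.norm_of_nonneg (sq_nonneg _)]
    exact fisherDensity_combo_le ha hb hp.nonneg hq.nonneg (hp.differentiable_sqrt x)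
      (hq.differentiable_sqrt x)

lemma eq_of_eq_const_mul (hp : MemPH p) (hq : MemPH q) {c : ℝ} (h : ∀ x, q x = c * p x) :
    q = p := by
  have hc : c = 1 := by
    simpa only [h, integral_const_mul, hp.integral_eq_one, mul_one] using hq.integral_eq_one
  exact funext fun x => by rw [h, hc, one_mul]

end MemPH

lemma convex_memPH (d : ℕ) : Convex ℝ {p : Euc d → ℝ | MemPH p} :=
  fun _ hp _ hq _ _ ha hb hab => hp.combo hq ha hb hab

lemma toMeas_combo (hp : Measurable p) (hp0 : 0 ≤ p) (hq0 : 0 ≤ q) (ha : 0 ≤ a) (hb : 0 ≤ b) :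
    toMeas (a • p + b • q) = ENNReal.ofReal a • toMeas p + ENNReal.ofReal b • toMeas q := by
  simp only [toMeas]
  rw [← withDensity_smul' _ _ ENNReal.ofReal_ne_top, ← withDensity_smul' _ _ ENNReal.ofReal_ne_top,
    ← withDensity_add_left (hp.ennreal_ofReal.const_smul _)]
  congr 1
  funext x
  simp [ENNReal.ofReal_add (mul_nonneg ha (hp0 x)) (mul_nonneg hb (hq0 x)),
    ENNReal.ofReal_mul ha, ENNReal.ofReal_mul hb]

lemma convexOn_comp_toMeas {F : Measure (Euc d) → ℝ} (hF : ConvexOnP2 F) :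
    ConvexOn ℝ {p | MemPH p} fun p => F (toMeas p) := by
  refine ⟨convex_memPH d, fun p hp q hq a b ha hb hab => ?_⟩
  obtain rfl : a = 1 - b := eq_sub_of_add_eq hab
  have h := hF _ hp.toMeas_mem_P2 _ hq.toMeas_mem_P2 b ⟨hb, sub_nonneg.1 ha⟩
  rwa [mix, ← toMeas_combo hp.measurable hp.nonneg hq.nonneg ha hb] at h

lemma convexOn_entropy (d : ℕ) : ConvexOn ℝ {p : Euc d → ℝ | MemPH p} Entropy := by
  refine ⟨convex_memPH d, fun p hp q hq a b ha hb hab => ?_⟩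
  simp only [Entropy, smul_eq_mul, ← integral_const_mul]
  rw [← integral_add (hp.integrable_mul_log.const_mul a) (hq.integrable_mul_log.const_mul b)]
  exact integral_mono (hp.combo hq ha hb hab).integrable_mul_log
    ((hp.integrable_mul_log.const_mul a).add (hq.integrable_mul_log.const_mul b))
    fun x => Real.convexOn_mul_log.2 (hp.nonneg x) (hq.nonneg x) ha hb hab

lemma combo_fisherInfo_eq_integral (hp : MemPH p) (hq : MemPH q) (a b : ℝ) :
    a * FisherInfo p + b * FisherInfo q =
      ∫ x, (a * fisherDensity p x + b * fisherDensity q x) := by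
  rw [integral_add (hp.integrable_fisherDensity.const_mul a)
    (hq.integrable_fisherDensity.const_mul b), integral_const_mul, integral_const_mul]
  rfl

lemma convexOn_fisherInfo (d : ℕ) : ConvexOn ℝ {p : Euc d → ℝ | MemPH p} FisherInfo := by
  refine ⟨convex_memPH d, fun p hp q hq a b ha hb hab => ?_⟩
  rw [smul_eq_mul, smul_eq_mul, combo_fisherInfo_eq_integral hp hq]
  exact integral_mono (hp.combo hq ha hb hab).integrable_fisherDensity
    ((hp.integrable_fisherDensity.const_mul a).add (hq.integrable_fisherDensity.const_mul b))
    fun x => fisherDensity_combo_le ha hb hp.nonneg hq.nonneg (hp.differentiable_sqrt x)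
      (hq.differentiable_sqrt x)

lemma fisherDensity_combo_ae_eq_of_fisherInfo_eq (hp : MemPH p) (hq : MemPH q) (ha : 0 ≤ a)
    (hb : 0 ≤ b) (hab : a + b = 1)
    (h : FisherInfo (a • p + b • q) = a * FisherInfo p + b * FisherInfo q) :
    fisherDensity (a • p + b • q) =ᵐ[volume]
      fun x => a * fisherDensity p x + b * fisherDensity q x := by
  rw [combo_fisherInfo_eq_integral hp hq] at h
  exact (integral_eq_iff_of_ae_le (hp.combo hq ha hb hab).integrable_fisherDensity
    ((hp.integrable_fisherDensity.const_mul a).add (hq.integrable_fisherDensity.const_mul b))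
    (Eventually.of_forall fun x => fisherDensity_combo_le ha hb hp.nonneg hq.nonneg
      (hp.differentiable_sqrt x) (hq.differentiable_sqrt x))).1 h

lemma eq_of_fisherInfo_combo_eq (hp : MemPH p) (hq : MemPH q) (hpos : ∀ x, 0 < p x) (ha : 0 < a)
    (hb : 0 < b) (hab : a + b = 1)
    (h : FisherInfo (a • p + b • q) = a * FisherInfo p + b * FisherInfo q) : q = p := by
  have hda : Differentiable ℝ fun x => √((a • p) x) :=
    fun x => differentiableAt_sqrt_smul ha.le (hp.differentiable_sqrt x)
  have hdb : Differentiable ℝ fun x => √((b • q) x) :=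
    fun x => differentiableAt_sqrt_smul hb.le (hq.differentiable_sqrt x)
  have hparallel : ∀ᵐ x, √((a • p) x) • fderiv ℝ (fun y => √((b • q) y)) x =
      √((b • q) x) • fderiv ℝ (fun y => √((a • p) y)) x := by
    filter_upwards [fisherDensity_combo_ae_eq_of_fisherInfo_eq hp hq ha.le hb.le hab h] with x hx
    refine sqrt_smul_fderiv_sqrt_eq_of_fisherDensity_add_eq (smul_nonneg ha.le hp.nonneg)
      (smul_nonneg hb.le hq.nonneg) (hda x) (hdb x) ?_
    rw [hx, fisherDensity_smul ha.le, fisherDensity_smul hb.le]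
    rfl
  obtain ⟨c, hc⟩ := exists_eq_const_mul_of_ae_smul_fderiv_eq volume hda hdb
    (fun x => (Real.sqrt_pos.2 (mul_pos ha (hpos x))).ne') hparallel
  have hprop (x : Euc d) : b * q x = c ^ 2 * (a * p x) := by
    rw [← Real.sq_sqrt (mul_nonneg hb.le (hq.nonneg x)),
      ← Real.sq_sqrt (mul_nonneg ha.le (hp.nonneg x)), ← mul_pow]
    exact congrArg (· ^ 2) (hc x)
  refine hp.eq_of_eq_const_mul hq (c := c ^ 2 * a / b) fun x => ?_
  rw [div_mul_eq_mul_div, eq_div_iff hb.ne', mul_comm, hprop, mul_assoc]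

lemma fisherInfo_combo_lt (hp : MemPH p) (hq : MemPH q) (hpos : ∀ x, 0 < p x) (hne : q ≠ p)
    (ha : 0 < a) (hb : 0 < b) (hab : a + b = 1) :
    FisherInfo (a • p + b • q) < a * FisherInfo p + b * FisherInfo q :=
  ((convexOn_fisherInfo d).2 hp hq ha.le hb.le hab).lt_of_ne
    fun h => hne (eq_of_fisherInfo_combo_eq hp hq hpos ha hb hab h)

variable {F : Measure (Euc d) → ℝ} {σ γ : ℝ}

lemma convexOn_freeEnergy (σ : ℝ) (hγ : 0 ≤ γ) (hF : ConvexOnP2 F) :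
    ConvexOn ℝ {p | MemPH p} (FreeEnergy σ γ F) :=
  ((convexOn_comp_toMeas hF).add ((convexOn_fisherInfo d).smul (sq_nonneg σ))).add
    ((convexOn_entropy d).smul hγ)

lemma freeEnergy_combo_lt (hσ : σ ≠ 0) (hγ : 0 ≤ γ) (hF : ConvexOnP2 F) (hp : MemPH p)
    (hq : MemPH q) (hpos : ∀ x, 0 < p x) (hne : q ≠ p) (ha : 0 < a) (hb : 0 < b)
    (hab : a + b = 1) :
    FreeEnergy σ γ F (a • p + b • q) < a * FreeEnergy σ γ F p + b * FreeEnergy σ γ F q := by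
  have hrest : ConvexOn ℝ {p : Euc d → ℝ | MemPH p} fun p => F (toMeas p) + γ * Entropy p :=
    (convexOn_comp_toMeas hF).add ((convexOn_entropy d).smul hγ)
  have hle := hrest.2 hp hq ha.le hb.le hab
  have hlt := mul_lt_mul_of_pos_left (fisherInfo_combo_lt hp hq hpos hne ha hb hab)
    (sq_pos_of_ne_zero hσ)
  simp only [FreeEnergy, smul_eq_mul] at hle ⊢
  linarith

theorem free_energy_convex_and_unique_minimizer_general (hσ : σ ≠ 0) (hγ : 0 ≤ γ)
    (hconv : ConvexOnP2 F) :
    ConvexOn ℝ {p | MemPH p} (FreeEnergy σ γ F) ∧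
    ∀ pstar, MemPH pstar → (∀ r, MemPH r → FreeEnergy σ γ F pstar ≤ FreeEnergy σ γ F r) →
      (∀ x, 0 < pstar x) →
      ∀ q, MemPH q → FreeEnergy σ γ F q ≤ FreeEnergy σ γ F pstar → q = pstar := by
  refine ⟨convexOn_freeEnergy σ hγ hconv, fun p hp hmin hpos q hq hle => ?_⟩
  by_contra hne
  have hmid := hmin _ (hp.combo hq (a := 1 / 2) (b := 1 / 2) (by norm_num) (by norm_num)
    (by norm_num))
  have hlt := freeEnergy_combo_lt hσ hγ hconv hp hq hpos hne (a := 1 / 2) (b := 1 / 2)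
    (by norm_num) (by norm_num) (by norm_num)
  linarith

end FreeEnergy

/-- The generalized free energy `ℱ^{σ,γ} = F + σ² I + γ H` is convex on `P_H`, and
a minimizer `p*` whose density is locally bounded away from zero
(`1/p* ∈ L^∞_loc`) is unique (up to a.e. equality). -/
theorem free_energy_convex_and_unique_minimizer (d : ℕ)
    (F : Measure (Euc d) → ℝ) (DF : Measure (Euc d) → Euc d → ℝ)
    (σ γ : ℝ) (hσ : 0 < σ) (hγ : 0 ≤ γ)
    (hC1 : IsLinearDeriv F DF) (hconv : ConvexOnP2 F) :
    (∀ p q : Euc d → ℝ, MemPH p → MemPH q → ∀ t ∈ Icc (0:ℝ) 1,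
      FreeEnergy σ γ F (fun x => (1 - t) * p x + t * q x)
        ≤ (1 - t) * FreeEnergy σ γ F p + t * FreeEnergy σ γ F q) ∧
    (∀ pstar : Euc d → ℝ, MemPH pstar →
      (∀ q : Euc d → ℝ, MemPH q → FreeEnergy σ γ F pstar ≤ FreeEnergy σ γ F q) →
      (∀ R : ℝ, ∃ ε > (0:ℝ), ∀ᵐ x : Euc d, ‖x‖ ≤ R → ε ≤ pstar x) →
      ∀ q : Euc d → ℝ, MemPH q →
        (∀ r : Euc d → ℝ, MemPH r → FreeEnergy σ γ F q ≤ FreeEnergy σ γ F r) →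
        q =ᵐ[volume] pstar) := by
  have h := free_energy_convex_and_unique_minimizer_general hσ.ne' hγ hconv
  refine ⟨fun p q hp hq t ht => h.1.2 hp hq (sub_nonneg.2 ht.2) ht.1 (sub_add_cancel 1 t),
    fun p hp hmin hloc q hq hqmin => ?_⟩
  have hpos := pos_of_forall_ae_le hp.differentiable.continuous volume hloc
  exact (h.2 p hp hmin hpos q hq (hqmin p hp)).eventuallyEq
end
end
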